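/- arXiv:2411.03516 — 2 statements merged into one kernel-verified Lean document; each statement's English description precedes it below -/
import Mathlib

section
/- The set E_L is uncountable, has Hausdorff dimension zero, and for every β>1 the bifurcation set E_β contains no isolated points if and only if β ∈ E_L. -/
open Set Filter MeasureTheory Topology

noncomputable section

/-- The β-transformation `x ↦ βx - ⌊βx⌋`. -/
def Tbeta (β x : ℝ) : ℝ := Int.fract (β * x)

/-- The survivor set `K_β(t)`: points of `[0,1)` whose orbit never enters `[0,t)`. -/
def survivor (β t : ℝ) : Set ℝ :=
  {x | x ∈ Set.Ico (0 : ℝ) 1 ∧ ∀ n : ℕ, t ≤ (Tbeta β)^[n] x}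

/-- The set-valued bifurcation set `E_β`. -/
def Ebif (β : ℝ) : Set ℝ :=
  {t | t ∈ Set.Ico (0 : ℝ) 1 ∧ ∀ t' : ℝ, t < t' → survivor β t' ≠ survivor β t}

/-- `(c)_β = Σ_{i≥1} c_i β^{-i}` for an infinite digit sequence (indexed from `0`). -/
def valSeq (β : ℝ) (c : ℕ → ℕ) : ℝ := ∑' i : ℕ, (c i : ℝ) / β ^ (i + 1)

/-- `(w 0^∞)_β` for a finite word `w`. -/
def valWord (β : ℝ) (w : List ℕ) : ℝ :=
  ∑ i ∈ Finset.range w.length, (w.getD i 0 : ℝ) / β ^ (i + 1)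

/-- `w⁺`: increment the last letter of `w`. -/
def wplus (w : List ℕ) : List ℕ := w.dropLast ++ [w.getLast! + 1]

/-- `w⁻`: decrement the last letter of `w`. -/
def wminus (w : List ℕ) : List ℕ := w.dropLast ++ [w.getLast! - 1]

/-- `θ`: increment every digit of `w` by one. -/
def theta (w : List ℕ) : List ℕ := w.map (· + 1)

/-- `L(w)`: the lexicographically largest cyclic permutation of `w`. -/
def maxCyc (w : List ℕ) : List ℕ := ((List.range w.length).map w.rotate).foldl max []

/-- `w^∞`: the periodic sequence with period block `w`. -/
def perSeq (w : List ℕ) : ℕ → ℕ := fun i => w.getD (i % w.length) 0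

/-- The sequence given by the word `w` followed by the sequence `c`. -/
def wordSeq (w : List ℕ) (c : ℕ → ℕ) : ℕ → ℕ :=
  fun i => if i < w.length then w.getD i 0 else c (i - w.length)

/-- Strict lexicographic order `≺` on sequences. -/
def seqLt (x y : ℕ → ℕ) : Prop := ∃ n, (∀ i < n, x i = y i) ∧ x n < y n

/-- Lexicographic order `≼` on sequences. -/
def seqLe (x y : ℕ → ℕ) : Prop := x = y ∨ seqLt x y

/-- The `n`-fold left shift `σⁿ` on sequences. -/
def shiftn (n : ℕ) (x : ℕ → ℕ) : ℕ → ℕ := fun i => x (i + n)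

/-- One step of the Farey recursion: insert the concatenation `w_i w_{i+1}`
between consecutive entries. -/
def fareyInsert : List (List ℕ) → List (List ℕ)
  | [] => []
  | [w] => [w]
  | w :: v :: rest => w :: (w ++ v) :: fareyInsert (v :: rest)

/-- The ordered set `F_n` of Farey words of level `n`. -/
def fareyLevel : ℕ → List (List ℕ)
  | 0 => [[0], [1]]
  | n + 1 => fareyInsert (fareyLevel n)

/-- `F`: all Farey words of length at least two. -/
def FareySet : Set (List ℕ) := {w | (∃ n, w ∈ fareyLevel n) ∧ w ≠ [0] ∧ w ≠ [1]}

/-- `F̂ = F ∪ {1}`. -/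
def FareyHat : Set (List ℕ) := FareySet ∪ {[1]}

/-- The extended Farey set `F_e = {θ^k(w) : w ∈ F̂, k ≥ 0}`. -/
def FareyExt : Set (List ℕ) := {w | ∃ v ∈ FareyHat, ∃ k : ℕ, w = theta^[k] v}

/-- A nonempty word is Lyndon iff it is strictly smaller than each of its nontrivial
cyclic rotations (equivalently: aperiodic and lexicographically smallest among its
cyclic permutations). -/
def IsLyndon (w : List ℕ) : Prop := w ≠ [] ∧ ∀ i, 0 < i → i < w.length → w < w.rotate i

/-- `L_e`: all Lyndon words over `ℕ ∪ {0}` except the single-letter word `0`. -/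
def LyndonExt : Set (List ℕ) := {w | IsLyndon w ∧ w ≠ [0]}

/-- `L`: Lyndon words over `{0,1}` of length at least `2`. -/
def LyndonBin : Set (List ℕ) := {w | IsLyndon w ∧ 2 ≤ w.length ∧ ∀ d ∈ w, d ≤ 1}

/-- The block of `Φ_s` emitted for current digit `d` after previous digit `p`:
`L(s)` for `00`, `s⁻` for `10`, `L(s)⁺` for `01`, `s` for `11`. -/
def phiBlock (s : List ℕ) (p d : ℕ) : List ℕ :=
  if d = 0 then (if p = 0 then maxCyc s else wminus s)
  else (if p = 0 then wplus (maxCyc s) else s)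

def phiAux (s : List ℕ) : ℕ → List ℕ → List ℕ
  | _, [] => []
  | p, d :: rest => phiBlock s p d ++ phiAux s d rest

/-- The substitution `Φ_s` on finite words; `s • r = subst s r`.  An initial digit `0`
produces `s⁻`, an initial digit `1` produces `L(s)⁺`, and thereafter runs
`0^k` resp. `1^l` produce `L(s)^{k-1}` resp. `s^{l-1}`, in accordance with
`Φ_s(0^{k₁}1^{l₁}…) = s⁻ L(s)^{k₁-1} L(s)⁺ s^{l₁-1} …` and
`Φ_s(1^{k₁}0^{l₁}…) = L(s)⁺ s^{k₁-1} s⁻ L(s)^{l₁-1} …`. -/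
def subst (s r : List ℕ) : List ℕ :=
  match r with
  | [] => []
  | d :: rest => phiBlock s (1 - d) d ++ phiAux s d rest

/-- The substitution `Φ_s` on infinite sequences, as the limit of its values
on initial segments (each digit contributes a nonempty block, so the `i`-th letter
is determined by the first `i+1` digits). -/
def phiSeq (s : List ℕ) (c : ℕ → ℕ) : ℕ → ℕ :=
  fun i => (subst s (List.ofFn fun j : Fin (i + 1) => c j)).getD i 0

/-- `Λ_e(m) = {s₁ • s₂ • … • s_m : s₁ ∈ F_e, s₂,…,s_m ∈ F}`. -/
def LambdaE (m : ℕ) : Set (List ℕ) :=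
  {w | ∃ s₁ ∈ FareyExt, ∃ rs : List (List ℕ),
    rs.length = m - 1 ∧ (∀ r ∈ rs, r ∈ FareySet) ∧ w = rs.foldl subst s₁}

/-- `Λ_e = ∪_{m≥1} Λ_e(m)`. -/
def LambdaExt : Set (List ℕ) := ⋃ m ∈ Set.Ici 1, LambdaE m

/-- `β_ℓ^S`: the base `β > 1` with `(L(S)^∞)_β = 1` (it is unique since
`β ↦ (c)_β` is strictly decreasing). -/
def betaL (S : List ℕ) : ℝ :=
  Classical.epsilon fun β : ℝ => 1 < β ∧ valSeq β (perSeq (maxCyc S)) = 1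

/-- `β_*^S`: the base `β > 1` with `(L(S)⁺ S⁻ L(S)^∞)_β = 1`. -/
def betaStar (S : List ℕ) : ℝ :=
  Classical.epsilon fun β : ℝ =>
    1 < β ∧ valSeq β (wordSeq (wplus (maxCyc S) ++ wminus S) (perSeq (maxCyc S))) = 1

/-- `β_r^S`: the base `β > 1` with `(L(S)⁺ S^∞)_β = 1`. -/
def betaR (S : List ℕ) : ℝ :=
  Classical.epsilon fun β : ℝ => 1 < β ∧ valSeq β (wordSeq (wplus (maxCyc S)) (perSeq S)) = 1

/-- The Lyndon/Farey interval `J^S = [β_ℓ^S, β_r^S]`. -/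
def Jint (S : List ℕ) : Set ℝ := Set.Icc (betaL S) (betaR S)

/-- The basic interval `I^S = [β_ℓ^S, β_*^S]`. -/
def Iint (S : List ℕ) : Set ℝ := Set.Icc (betaL S) (betaStar S)

/-- The exceptional set `E = (1,∞) ∖ ∪_{s ∈ F_e} J^s`. -/
def Eexc : Set ℝ := Set.Ioi 1 \ ⋃ s ∈ FareyExt, Jint s

/-- The relative exceptional set `E^S = (J^S ∖ I^S) ∖ ∪_{r ∈ F} J^{S•r}`. -/
def EexcRel (S : List ℕ) : Set ℝ :=
  (Jint S \ Iint S) \ ⋃ r ∈ FareySet, Jint (subst S r)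

/-- The infinitely renormalizable set `E_∞ = ∩_{m≥1} ∪_{S ∈ Λ_e(m)} J^S`. -/
def Einf : Set ℝ := ⋂ m ∈ Set.Ici 1, ⋃ S ∈ LambdaE m, Jint S

/-- `E_L = E ∪ {β_ℓ^s : s ∈ F_e}`. -/
def EL : Set ℝ := Eexc ∪ {x | ∃ s ∈ FareyExt, x = betaL s}

/-- The critical value `τ(β) = min{t > 0 : dim_H K_β(t) = 0}`. -/
def tau (β : ℝ) : ℝ := sInf {t : ℝ | 0 < t ∧ dimH (survivor β t) = 0}

end

/-! ### Values of digit sequences -/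

/-- The sum of the first `n` digits of `c`. -/
def psum (c : ℕ → ℕ) (n : ℕ) : ℕ := ∑ i ∈ Finset.range n, c i

/-- The digits of `c` are bounded. -/
def BddDigits (c : ℕ → ℕ) : Prop := ∃ D, ∀ i, c i ≤ D

lemma psum_zero (c : ℕ → ℕ) : psum c 0 = 0 := rfl

lemma psum_succ (c : ℕ → ℕ) (n : ℕ) : psum c (n + 1) = psum c n + c n :=
  Finset.sum_range_succ _ _

lemma psum_add (c : ℕ → ℕ) (m n : ℕ) : psum c (m + n) = psum c m + psum (shiftn m c) n := by
  simp only [psum, Finset.sum_range_add, shiftn, add_comm]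

lemma shiftn_zero (c : ℕ → ℕ) : shiftn 0 c = c := rfl

lemma shiftn_shiftn (m n : ℕ) (c : ℕ → ℕ) : shiftn m (shiftn n c) = shiftn (m + n) c := by
  funext i; simp [shiftn, add_assoc]

lemma BddDigits.shiftn {c : ℕ → ℕ} (hc : BddDigits c) (n : ℕ) : BddDigits (shiftn n c) := by
  obtain ⟨D, hD⟩ := hc
  exact ⟨D, fun i => hD _⟩

lemma summable_digits {β : ℝ} (hβ : 1 < β) {c : ℕ → ℕ} (hc : BddDigits c) :
    Summable fun i : ℕ => (c i : ℝ) / β ^ (i + 1) := by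
  obtain ⟨D, hD⟩ := hc
  have h0 : 0 < β := by linarith
  have hg : Summable fun i : ℕ => (D : ℝ) * (β⁻¹) ^ i :=
    (summable_geometric_of_lt_one (by positivity) (inv_lt_one_of_one_lt₀ hβ)).mul_left _
  refine Summable.of_nonneg_of_le (fun i => by positivity) (fun i => ?_) hg
  rw [inv_pow, ← div_eq_mul_inv]
  have : (c i : ℝ) ≤ D := by exact_mod_cast hD i
  gcongr
  · exact hβ.le
  · omega

lemma valSeq_nonneg {β : ℝ} (hβ : 1 < β) (c : ℕ → ℕ) : 0 ≤ valSeq β c :=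
  tsum_nonneg fun i => by have : 0 < β := by linarith
                          positivity

lemma valSeq_split {β : ℝ} (hβ : 1 < β) {c : ℕ → ℕ} (hc : BddDigits c) (n : ℕ) :
    valSeq β c = ∑ i ∈ Finset.range n, (c i : ℝ) / β ^ (i + 1)
      + valSeq β (shiftn n c) / β ^ n := by
  have h0 : 0 < β := by linarith
  rw [valSeq, ← (summable_digits hβ hc).sum_add_tsum_nat_add n, valSeq, ← tsum_div_const]
  congr 1
  refine tsum_congr fun i => ?_
  rw [shiftn, div_div, ← pow_add]
  congr 2
  ring

lemma valSeq_succ {β : ℝ} (hβ : 1 < β) {c : ℕ → ℕ} (hc : BddDigits c) :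
    β * valSeq β c = c 0 + valSeq β (shiftn 1 c) := by
  have h0 : 0 < β := by linarith
  rw [valSeq_split hβ hc 1]
  simp
  field_simp

lemma valSeq_sub_of_agree {β : ℝ} (hβ : 1 < β) {c d : ℕ → ℕ} (hc : BddDigits c)
    (hd : BddDigits d) {n : ℕ} (h : ∀ i < n, c i = d i) :
    valSeq β c - valSeq β d = (valSeq β (shiftn n c) - valSeq β (shiftn n d)) / β ^ n := by
  rw [valSeq_split hβ hc n, valSeq_split hβ hd n, Finset.sum_congr rfl fun i hi => by
    rw [h i (Finset.mem_range.1 hi)]]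
  ring

lemma valSeq_sub_of_first_diff {β : ℝ} (hβ : 1 < β) {c d : ℕ → ℕ} (hc : BddDigits c)
    (hd : BddDigits d) {n : ℕ} (h : ∀ i < n, c i = d i) :
    valSeq β c - valSeq β d = ((c n : ℝ) - d n + (valSeq β (shiftn (n + 1) c)
      - valSeq β (shiftn (n + 1) d))) / β ^ (n + 1) := by
  have h0 : 0 < β := by linarith
  have hc' := valSeq_succ hβ (hc.shiftn n)
  have hd' := valSeq_succ hβ (hd.shiftn n)
  rw [shiftn_shiftn, add_comm 1 n] at hc' hd'
  simp only [shiftn, zero_add] at hc' hd'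
  rw [valSeq_sub_of_agree hβ hc hd h, pow_succ, div_eq_div_iff (by positivity) (by positivity)]
  linear_combination (β ^ n) * hc' - β ^ n * hd'

lemma summable_linear {β : ℝ} (hβ : 1 < β) (C : ℝ) :
    Summable fun n : ℕ => (C * (n + 1)) / β ^ (n + 1) := by
  have h0 : 0 < β := by linarith
  have h1 : ‖β⁻¹‖ < 1 := by
    rw [Real.norm_of_nonneg (by positivity)]; exact inv_lt_one_of_one_lt₀ hβ
  have h2 : Summable fun n : ℕ => (n : ℝ) ^ 1 * β⁻¹ ^ n :=
    summable_pow_mul_geometric_of_norm_lt_one 1 h1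
  have h3 : Summable fun n : ℕ => ((n + 1 : ℕ) : ℝ) ^ 1 * β⁻¹ ^ (n + 1) :=
    (summable_nat_add_iff 1).2 h2
  refine (h3.mul_left C).congr fun n => ?_
  rw [inv_pow, div_eq_mul_inv, pow_one, Nat.cast_add_one, mul_assoc]

lemma summable_of_le_linear {β : ℝ} (hβ : 1 < β) {S : ℕ → ℝ} {C : ℝ} (h0 : ∀ n, 0 ≤ S n)
    (hS : ∀ n, S n ≤ C * (n + 1)) : Summable fun n : ℕ => S n / β ^ (n + 1) := by
  have hβ0 : 0 < β := by linarith
  refine Summable.of_nonneg_of_le (fun n => div_nonneg (h0 n) (by positivity)) (fun n => ?_)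
    (summable_linear hβ C)
  have := hS n
  gcongr

lemma summable_psum {β : ℝ} (hβ : 1 < β) {c : ℕ → ℕ} (hc : BddDigits c) :
    Summable fun n : ℕ => (psum c n : ℝ) / β ^ (n + 1) := by
  obtain ⟨D, hD⟩ := hc
  refine summable_of_le_linear (C := D) hβ (fun n => by positivity) fun n => ?_
  have : psum c n ≤ n * D := by
    simpa [psum] using Finset.sum_le_card_nsmul (Finset.range n) c D fun i _ => hD i
  have h2 : (psum c n : ℝ) ≤ n * D := by exact_mod_cast this
  have : (0 : ℝ) ≤ D := by positivity
  nlinarith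

/-- Summation by parts: the value of a sequence in terms of its digit sums. -/
lemma valSeq_eq_psum {β : ℝ} (hβ : 1 < β) {c : ℕ → ℕ} (hc : BddDigits c) :
    valSeq β c = (β - 1) * ∑' n : ℕ, (psum c n : ℝ) / β ^ (n + 1) := by
  have h0 : 0 < β := by linarith
  have hs := summable_psum hβ hc
  have h1 : ∑' n : ℕ, (psum c n : ℝ) / β ^ (n + 1)
      = ∑' n : ℕ, (psum c (n + 1) : ℝ) / β ^ (n + 2) := by
    rw [hs.tsum_eq_zero_add]; simp [psum_zero]
  have hs1 : Summable fun n : ℕ => (psum c (n + 1) : ℝ) / β ^ (n + 2) :=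
    (summable_nat_add_iff 1).2 hs
  have h2 : valSeq β c = β * (∑' n : ℕ, (psum c (n + 1) : ℝ) / β ^ (n + 2))
      - ∑' n : ℕ, (psum c n : ℝ) / β ^ (n + 1) := by
    rw [← tsum_mul_left, ← (hs1.mul_left β).tsum_sub hs, valSeq]
    refine tsum_congr fun n => ?_
    rw [psum_succ]; push_cast; field_simp; ring
  rw [h2, ← h1]; ring

lemma valSeq_le_of_psum_le {β : ℝ} (hβ : 1 < β) {c d : ℕ → ℕ} (hc : BddDigits c)
    (hd : BddDigits d) (h : ∀ n, psum c n ≤ psum d n) : valSeq β c ≤ valSeq β d := by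
  rw [valSeq_eq_psum hβ hc, valSeq_eq_psum hβ hd]
  refine mul_le_mul_of_nonneg_left ?_ (by linarith)
  refine (summable_psum hβ hc).tsum_le_tsum (fun n => ?_) (summable_psum hβ hd)
  have : (psum c n : ℝ) ≤ psum d n := by exact_mod_cast h n
  gcongr

lemma valSeq_lt_of_psum_lt {β : ℝ} (hβ : 1 < β) {c d : ℕ → ℕ} (hc : BddDigits c)
    (hd : BddDigits d) (h : ∀ n, psum c n ≤ psum d n) {k : ℕ} (hk : psum c k < psum d k) :
    valSeq β c < valSeq β d := by
  rw [valSeq_eq_psum hβ hc, valSeq_eq_psum hβ hd]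
  refine mul_lt_mul_of_pos_left ?_ (by linarith)
  refine Summable.tsum_lt_tsum (i := k) (fun n => ?_) ?_ (summable_psum hβ hc)
    (summable_psum hβ hd)
  · have : (psum c n : ℝ) ≤ psum d n := by exact_mod_cast h n
    gcongr
  · have : (psum c k : ℝ) < psum d k := by exact_mod_cast hk
    gcongr

/-! ### Lexicographic comparison -/

lemma exists_first_diff {c d : ℕ → ℕ} (h : c ≠ d) : ∃ k, (∀ i < k, c i = d i) ∧ c k ≠ d k := by
  have h' : ∃ k, c k ≠ d k := Function.ne_iff.1 h
  classical
  exact ⟨Nat.find h', fun i hi => not_not.1 (Nat.find_min h' hi), Nat.find_spec h'⟩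

lemma seqLt_of_valSeq_lt {β : ℝ} (hβ : 1 < β) {c d : ℕ → ℕ} (hc : BddDigits c)
    (hd : BddDigits d) (ht : ∀ n, valSeq β (shiftn (n + 1) d) ≤ 1)
    (h : valSeq β c < valSeq β d) : seqLt c d := by
  have hne : c ≠ d := by rintro rfl; exact lt_irrefl _ h
  obtain ⟨k, hk, hne⟩ := exists_first_diff hne
  refine ⟨k, hk, lt_of_le_of_ne (not_lt.1 fun hlt => ?_) hne⟩
  have hlt' : (d k : ℝ) + 1 ≤ c k := by exact_mod_cast hlt
  have h1 := valSeq_sub_of_first_diff hβ hc hd hk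
  have h2 := valSeq_nonneg hβ (shiftn (k + 1) c)
  have h3 := ht k
  have h4 : 0 ≤ valSeq β c - valSeq β d := by
    rw [h1]
    have h0 : 0 < β := by linarith
    exact div_nonneg (by linarith) (by positivity)
  linarith

lemma seqLe_of_valSeq_le {β : ℝ} (hβ : 1 < β) {c d : ℕ → ℕ} (hc : BddDigits c)
    (hd : BddDigits d) (ht : ∀ n, valSeq β (shiftn (n + 1) d) < 1)
    (h : valSeq β c ≤ valSeq β d) : seqLe c d := by
  by_cases hne : c = d
  · exact Or.inl hne
  obtain ⟨k, hk, hne⟩ := exists_first_diff hne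
  refine Or.inr ⟨k, hk, lt_of_le_of_ne (not_lt.1 fun hlt => ?_) hne⟩
  have hlt' : (d k : ℝ) + 1 ≤ c k := by exact_mod_cast hlt
  have h1 := valSeq_sub_of_first_diff hβ hc hd hk
  have h2 := valSeq_nonneg hβ (shiftn (k + 1) c)
  have h3 := ht k
  have h4 : 0 < valSeq β c - valSeq β d := by
    rw [h1]
    have h0 : 0 < β := by linarith
    exact div_pos (by linarith) (by positivity)
  linarith

lemma psum_congr {c d : ℕ → ℕ} {n : ℕ} (h : ∀ i < n, c i = d i) : psum c n = psum d n :=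
  Finset.sum_congr rfl fun i hi => h i (Finset.mem_range.1 hi)

/-- If every shift of `x` is at most `c` and the digit sums of `c` are subadditive from below up
to one, then the digit sums of `x` are dominated by those of `c`. -/
lemma psum_le_of_seqLe {x c : ℕ → ℕ} (hc : ∀ a b, psum c a + psum c b ≤ psum c (a + b) + 1)
    (hx : ∀ n, seqLe (shiftn n x) c) (n : ℕ) : psum x n ≤ psum c n := by
  induction n using Nat.strong_induction_on generalizing x with
  | _ n ih =>
    rcases hx 0 with h | ⟨k, hk, hlt⟩
    · rw [shiftn_zero] at h; rw [h]
    · rw [shiftn_zero] at hk hlt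
      rcases le_or_gt n k with hnk | hnk
      · exact (psum_congr fun i hi => hk i (by omega)).le
      · obtain ⟨m, rfl⟩ : ∃ m, n = k + 1 + m := ⟨n - (k + 1), by omega⟩
        have h1 := ih m (by omega) (x := shiftn (k + 1) x) fun j => by
          rw [shiftn_shiftn]; exact hx _
        have h2 := hc (k + 1) m
        rw [psum_add, psum_succ, psum_congr hk]
        rw [psum_succ] at h2
        omega

/-- If every shift of `x` is at least `c` and the digit sums of `c` are subadditive up
to one, then the digit sums of `x` dominate those of `c`. -/
lemma le_psum_of_seqLe {x c : ℕ → ℕ}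
    (hc : ∀ a b, psum c (a + 1 + b) ≤ psum c (a + 1) + psum c b + 1)
    (hx : ∀ n, seqLe c (shiftn n x)) (n : ℕ) : psum c n ≤ psum x n := by
  induction n using Nat.strong_induction_on generalizing x with
  | _ n ih =>
    rcases hx 0 with h | ⟨k, hk, hlt⟩
    · rw [shiftn_zero] at h; rw [h]
    · rw [shiftn_zero] at hk hlt
      rcases le_or_gt n k with hnk | hnk
      · exact (psum_congr fun i hi => hk i (by omega)).le
      · obtain ⟨m, rfl⟩ : ∃ m, n = k + 1 + m := ⟨n - (k + 1), by omega⟩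
        have h1 := ih m (by omega) (x := shiftn (k + 1) x) fun j => by
          rw [shiftn_shiftn]; exact hx _
        have h2 := hc k m
        rw [psum_add x, psum_succ x, ← psum_congr hk]
        rw [psum_succ c k] at h2
        omega

/-! ### Greedy expansions and the bifurcation set -/

lemma Tbeta_iterate_mem {β x : ℝ} (hx : x ∈ Ico (0 : ℝ) 1) (n : ℕ) :
    (Tbeta β)^[n] x ∈ Ico (0 : ℝ) 1 := by
  cases n with
  | zero => exact hx
  | succ n =>
    rw [Function.iterate_succ_apply']
    exact ⟨Int.fract_nonneg _, Int.fract_lt_one _⟩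

/-- The greedy digits of `x` in base `β`. -/
noncomputable def greedy (β x : ℝ) : ℕ → ℕ := fun i => ⌊β * (Tbeta β)^[i] x⌋₊

lemma greedy_cast {β x : ℝ} (hβ : 1 < β) (hx : x ∈ Ico (0 : ℝ) 1) (i : ℕ) :
    (greedy β x i : ℝ) = β * (Tbeta β)^[i] x - (Tbeta β)^[i + 1] x := by
  have h0 : 0 ≤ β * (Tbeta β)^[i] x :=
    mul_nonneg (by linarith) (Tbeta_iterate_mem hx i).1
  rw [Function.iterate_succ_apply', Tbeta, Int.self_sub_fract, greedy,
    natCast_floor_eq_intCast_floor h0]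

lemma bddDigits_greedy {β x : ℝ} (hβ : 1 < β) (hx : x ∈ Ico (0 : ℝ) 1) :
    BddDigits (greedy β x) := by
  refine ⟨⌊β⌋₊, fun i => Nat.floor_mono ?_⟩
  have := Tbeta_iterate_mem (β := β) hx i
  nlinarith [this.1, this.2]

lemma shiftn_greedy (β x : ℝ) (n : ℕ) :
    shiftn n (greedy β x) = greedy β ((Tbeta β)^[n] x) := by
  funext i
  simp only [shiftn, greedy, ← Function.iterate_add_apply]

lemma greedy_partial_sum {β x : ℝ} (hβ : 1 < β) (hx : x ∈ Ico (0 : ℝ) 1) (n : ℕ) :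
    ∑ i ∈ Finset.range n, (greedy β x i : ℝ) / β ^ (i + 1) = x - (Tbeta β)^[n] x / β ^ n := by
  have h0 : 0 < β := by linarith
  induction n with
  | zero => simp
  | succ n ih =>
    rw [Finset.sum_range_succ, ih, greedy_cast hβ hx]
    field_simp
    ring

lemma tendsto_div_pow {β : ℝ} (hβ : 1 < β) (C : ℝ) :
    Tendsto (fun n : ℕ => C / β ^ n) atTop (𝓝 0) :=
  tendsto_const_nhds.div_atTop (tendsto_pow_atTop_atTop_of_one_lt hβ)

lemma valSeq_greedy {β x : ℝ} (hβ : 1 < β) (hx : x ∈ Ico (0 : ℝ) 1) :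
    valSeq β (greedy β x) = x := by
  have h0 : 0 < β := by linarith
  have h1 := (summable_digits hβ (bddDigits_greedy hβ hx)).hasSum.tendsto_sum_nat
  refine tendsto_nhds_unique h1 ?_
  simp_rw [greedy_partial_sum hβ hx]
  have h2 : Tendsto (fun n : ℕ => (Tbeta β)^[n] x / β ^ n) atTop (𝓝 0) := by
    refine squeeze_zero (fun n => div_nonneg (Tbeta_iterate_mem hx n).1 (by positivity))
      (fun n => ?_) (tendsto_div_pow hβ 1)
    have := (Tbeta_iterate_mem (β := β) hx n).2.le
    gcongr
  simpa using tendsto_const_nhds.sub h2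

lemma valSeq_shiftn_greedy {β x : ℝ} (hβ : 1 < β) (hx : x ∈ Ico (0 : ℝ) 1) (n : ℕ) :
    valSeq β (shiftn n (greedy β x)) = (Tbeta β)^[n] x := by
  rw [shiftn_greedy, valSeq_greedy hβ (Tbeta_iterate_mem hx n)]

lemma Tbeta_iterate_valSeq {β : ℝ} (hβ : 1 < β) {z : ℕ → ℕ} (hz : BddDigits z)
    (h1 : ∀ n, valSeq β (shiftn n z) < 1) (n : ℕ) :
    (Tbeta β)^[n] (valSeq β z) = valSeq β (shiftn n z) := by
  induction n with
  | zero => rfl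
  | succ n ih =>
    have h2 := valSeq_succ hβ (hz.shiftn n)
    rw [shiftn_shiftn, add_comm 1 n] at h2
    rw [Function.iterate_succ_apply', ih, Tbeta, h2, Int.fract_natCast_add]
    exact Int.fract_eq_self.2 ⟨valSeq_nonneg hβ _, h1 _⟩

/-- As long as the digits do not change, the iterates of `T_β` are affine. -/
lemma eventually_iterate_eq {β t : ℝ} {l : Filter ℝ} (hl : l ≤ 𝓝 t)
    (h : ∀ n, ∀ᶠ x in l, (⌊β * (Tbeta β)^[n] t⌋ : ℝ)
      ≤ β * ((Tbeta β)^[n] t + β ^ n * (x - t))) (n : ℕ) :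
    ∀ᶠ x in l, (Tbeta β)^[n] x = (Tbeta β)^[n] t + β ^ n * (x - t) := by
  induction n with
  | zero => exact Eventually.of_forall fun x => by simp
  | succ n ih =>
    have hcont : ContinuousAt (fun x => β * ((Tbeta β)^[n] t + β ^ n * (x - t))) t := by fun_prop
    have hup : ∀ᶠ x in l, β * ((Tbeta β)^[n] t + β ^ n * (x - t))
        < ⌊β * (Tbeta β)^[n] t⌋ + 1 := by
      refine hl (hcont.eventually_lt_const ?_)
      simp
    filter_upwards [ih, h n, hup] with x hx h1 h2
    have h3 : ⌊β * ((Tbeta β)^[n] t + β ^ n * (x - t))⌋ = ⌊β * (Tbeta β)^[n] t⌋ :=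
      Int.floor_eq_iff.2 ⟨h1, h2⟩
    rw [Function.iterate_succ_apply', Function.iterate_succ_apply', hx, Tbeta, Tbeta,
      ← Int.self_sub_floor, ← Int.self_sub_floor, h3]
    ring

lemma eventually_iterate_eq_right {β : ℝ} (hβ : 1 < β) (t : ℝ) (n : ℕ) :
    ∀ᶠ x in 𝓝[≥] t, (Tbeta β)^[n] x = (Tbeta β)^[n] t + β ^ n * (x - t) := by
  refine eventually_iterate_eq nhdsWithin_le_nhds (fun n => ?_) n
  filter_upwards [self_mem_nhdsWithin] with x hx
  have h1 := Int.floor_le (β * (Tbeta β)^[n] t)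
  have h0 : 0 < β := by linarith
  have h2 : 0 ≤ β * (β ^ n * (x - t)) := by
    have : 0 ≤ x - t := sub_nonneg.2 hx
    positivity
  linarith

lemma eventually_iterate_eq_of_pos {β : ℝ} (t : ℝ)
    (ht : ∀ n, 0 < (Tbeta β)^[n + 1] t) (n : ℕ) :
    ∀ᶠ x in 𝓝 t, (Tbeta β)^[n] x = (Tbeta β)^[n] t + β ^ n * (x - t) := by
  refine eventually_iterate_eq le_rfl (fun n => ?_) n
  have hcont : ContinuousAt (fun x => β * ((Tbeta β)^[n] t + β ^ n * (x - t))) t := by fun_prop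
  have h1 := ht n
  rw [Function.iterate_succ_apply', Tbeta, ← Int.self_sub_floor] at h1
  refine (hcont.eventually_const_lt (u := (⌊β * (Tbeta β)^[n] t⌋ : ℝ)) ?_).mono
    fun x hx => hx.le
  simp only [sub_self, mul_zero, add_zero]
  linarith

lemma mem_Ebif_iff {β : ℝ} (hβ : 1 < β) {t : ℝ} :
    t ∈ Ebif β ↔ t ∈ Ico (0 : ℝ) 1 ∧ ∀ n, t ≤ (Tbeta β)^[n] t := by
  refine and_congr_right fun ht => ⟨fun h n => ?_, fun h t' htt' heq => ?_⟩
  · by_contra! hlt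
    have h1 := eventually_iterate_eq_right hβ t n
    have hcont : ContinuousAt (fun x => (Tbeta β)^[n] t + β ^ n * (x - t)) t := by fun_prop
    have h2 : ∀ᶠ x in 𝓝[≥] t, (Tbeta β)^[n] t + β ^ n * (x - t) < t :=
      nhdsWithin_le_nhds (hcont.eventually_lt_const (by simpa using hlt))
    obtain ⟨u, hu, hsub⟩ := (mem_nhdsGE_iff_exists_Ico_subset' (lt_add_one t)).1 (h1.and h2)
    refine h u hu (Subset.antisymm (fun x hx => ⟨hx.1, fun m => hu.le.trans (hx.2 m)⟩)
      fun x hx => ⟨hx.1, fun m => ?_⟩)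
    by_contra! hm
    have h3 := hsub ⟨hx.2 m, hm⟩
    have h4 := hx.2 (n + m)
    rw [Function.iterate_add_apply, h3.1] at h4
    exact absurd h3.2 (not_lt.2 h4)
  · have h1 : t ∈ survivor β t' := heq ▸ ⟨ht, h⟩
    exact absurd (h1.2 0) (not_le.2 htt')

lemma valSeq_mem_Ebif {β : ℝ} (hβ : 1 < β) {z : ℕ → ℕ} (hz : BddDigits z)
    (h1 : ∀ n, valSeq β (shiftn n z) < 1) (h2 : ∀ n, valSeq β z ≤ valSeq β (shiftn n z)) :
    valSeq β z ∈ Ebif β :=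
  (mem_Ebif_iff hβ).2 ⟨⟨valSeq_nonneg hβ z, h1 0⟩, fun n => by
    rw [Tbeta_iterate_valSeq hβ hz h1]; exact h2 n⟩

lemma accPt_of_sequence {S : Set ℝ} {t : ℝ} (h : ∀ ε > 0, ∃ y ∈ S, y ≠ t ∧ |y - t| < ε) :
    AccPt t (𝓟 S) := by
  rw [accPt_iff_nhds]
  intro U hU
  obtain ⟨ε, hε, hsub⟩ := Metric.mem_nhds_iff.1 hU
  obtain ⟨y, hy, hne, hd⟩ := h ε hε
  exact ⟨y, ⟨hsub (by simpa [Real.dist_eq] using hd), hy⟩, hne⟩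

/-! ### Non-periodic points of the bifurcation set are never isolated -/

lemma accPt_of_not_periodic {β t : ℝ} (hβ : 1 < β) (ht : t ∈ Ebif β)
    (hper : ∀ m, 0 < m → (Tbeta β)^[m] t ≠ t) : AccPt t (𝓟 (Ebif β)) := by
  obtain ⟨htI, hmin⟩ := (mem_Ebif_iff hβ).1 ht
  have h0 : 0 < β := by linarith
  set d := greedy β t with hd
  have hdb : BddDigits d := bddDigits_greedy hβ htI
  set P : ℕ → ℕ → ℕ := fun n i => d (i % n) with hP
  have hPb : ∀ n, BddDigits (P n) := fun n => by
    obtain ⟨D, hD⟩ := hdb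
    exact ⟨D, fun i => hD _⟩
  have hshift : ∀ n, shiftn n (P n) = P n := fun n => by
    funext i; simp [hP, shiftn]
  have hagree : ∀ n i, i ≤ n → valSeq β (P n) - t
      = (valSeq β (shiftn i (P n)) - (Tbeta β)^[i] t) / β ^ i := fun n i hi => by
    rw [← valSeq_shiftn_greedy hβ htI i, ← valSeq_sub_of_agree hβ (hPb n) hdb, hd,
      valSeq_greedy hβ htI]
    intro j hj
    simp only [hP]
    rw [Nat.mod_eq_of_lt (by omega)]
  set x : ℕ → ℝ := fun n => valSeq β (P n) with hx
  have hpow : ∀ n, 0 < n → 1 < β ^ n := fun n hn => one_lt_pow₀ hβ hn.ne.symm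
  -- the defining equation of the periodic point `x n`
  have hfix : ∀ n, (x n - t) * β ^ n = x n - (Tbeta β)^[n] t := fun n => by
    have := hagree n n le_rfl
    rw [hshift, eq_div_iff (by positivity)] at this
    exact this
  have hlt : ∀ n, 0 < n → x n < t := fun n hn => by
    have h1 := hfix n
    have h2 := lt_of_le_of_ne (hmin n) (hper n hn).symm
    nlinarith [hpow n hn]
  have hclose : ∀ n, 0 < n → t - x n ≤ 1 / β ^ n := fun n hn => by
    rw [le_div_iff₀ (by positivity)]
    have h1 := hfix n
    have h2 := (Tbeta_iterate_mem (β := β) htI n).2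
    have h3 : 0 ≤ x n := valSeq_nonneg hβ _
    nlinarith
  -- at a record of the sequence `x`, the periodic point lies in the bifurcation set
  have hrec : ∀ n, 0 < n → (∀ i, 0 < i → i < n → x i ≤ x n) → x n ∈ Ebif β := by
    intro n hn hr
    have horb : ∀ i, i < n → valSeq β (shiftn i (P n))
        = (Tbeta β)^[i] t - (t - x n) * β ^ i := fun i hi => by
      have := hagree n i hi.le
      rw [eq_div_iff (by positivity)] at this
      linarith
    have hmod : ∀ i, shiftn i (P n) = shiftn (i % n) (P n) := fun i => by
      funext j; simp [hP, shiftn]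
    refine valSeq_mem_Ebif hβ (hPb n) (fun i => ?_) fun i => ?_
    · rw [hmod, horb _ (Nat.mod_lt _ hn)]
      have h1 := (Tbeta_iterate_mem (β := β) htI (i % n)).2
      have h2 : 0 ≤ (t - x n) * β ^ (i % n) :=
        mul_nonneg (sub_nonneg.2 (hlt n hn).le) (by positivity)
      linarith
    · rw [hmod]
      rcases Nat.eq_zero_or_pos (i % n) with hi | hi
      · rw [hi, shiftn_zero]
      · rw [horb _ (Nat.mod_lt _ hn)]
        have h1 := hfix (i % n)
        have h2 := hr _ hi (Nat.mod_lt _ hn)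
        have h3 := hpow _ hi
        change x n ≤ _
        nlinarith
  refine accPt_of_sequence fun ε hε => ?_
  obtain ⟨N, hN⟩ := ((tendsto_div_pow hβ 1).eventually (gt_mem_nhds hε)).exists_forall_of_atTop
  have hxt : Tendsto x atTop (𝓝 t) := by
    have : Tendsto (fun n => t - x n) atTop (𝓝 0) := by
      refine squeeze_zero' ?_ ?_ (tendsto_div_pow hβ 1)
      · filter_upwards [eventually_gt_atTop 0] with n hn using sub_nonneg.2 (hlt n hn).le
      · filter_upwards [eventually_gt_atTop 0] with n hn using hclose n hn
    simpa using tendsto_const_nhds (x := t).sub this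
  have hbig : ∃ n, 0 < n ∧ ∀ i, 0 < i → i ≤ N → x i < x n := by
    have h1 : ∀ᶠ n in atTop, ∀ i ∈ Finset.Icc 1 N, x i < x n := by
      rw [Filter.eventually_all_finset]
      exact fun i hi => hxt.eventually (lt_mem_nhds (hlt i (Finset.mem_Icc.1 hi).1))
    obtain ⟨n, h1, h2⟩ := (h1.and (eventually_gt_atTop 0)).exists
    exact ⟨n, h2, fun i hi hiN => h1 i (Finset.mem_Icc.2 ⟨hi, hiN⟩)⟩
  classical
  obtain ⟨hn0, hnN⟩ := Nat.find_spec hbig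
  set n := Nat.find hbig with hndef
  have hNn : N < n := by
    by_contra! hle
    exact lt_irrefl _ (hnN n hn0 hle)
  refine ⟨x n, hrec n hn0 fun i hi hin => ?_, (hlt n hn0).ne, ?_⟩
  · have := Nat.find_min hbig hin
    push Not at this
    obtain ⟨j, hj0, hjN, hj⟩ := this hi
    exact hj.trans (hnN j hj0 hjN).le
  · rw [abs_sub_comm, abs_of_pos (sub_pos.2 (hlt n hn0))]
    exact (hclose n hn0).trans_lt (hN n hNn.le)

/-! ### Mechanical sequences -/

/-- The sequence of increments of `S`. -/
def diffSeq (S : ℕ → ℕ) : ℕ → ℕ := fun i => S (i + 1) - S i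

lemma psum_diffSeq {S : ℕ → ℕ} (h0 : S 0 = 0) (hS : Monotone S) (n : ℕ) :
    psum (diffSeq S) n = S n := by
  induction n with
  | zero => rw [psum_zero, h0]
  | succ n ih =>
    have := hS (Nat.le_succ n)
    rw [psum_succ, ih, diffSeq]
    exact Nat.add_sub_of_le this

lemma eq_of_psum_eq {c d : ℕ → ℕ} (h : ∀ n, psum c n = psum d n) : c = d := by
  funext i
  have h1 := h i
  have h2 := h (i + 1)
  rw [psum_succ, psum_succ] at h2
  omega

noncomputable section

/-- The digit sums `⌈nρ⌉` of the upper mechanical sequence. -/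
def ceilSum (ρ : ℝ) (n : ℕ) : ℕ := ⌈n * ρ⌉₊

/-- The digit sums `⌊nρ⌋` of the lower mechanical sequence. -/
def floorSum (ρ : ℝ) (n : ℕ) : ℕ := ⌊n * ρ⌋₊

/-- The limit of `ceilSum` as the slope decreases to `ρ`. -/
def plusSum (ρ : ℝ) (n : ℕ) : ℕ := if n = 0 then 0 else ⌊n * ρ⌋₊ + 1

/-- The limit of `floorSum` as the slope increases to `ρ`. -/
def predSum (ρ : ℝ) (n : ℕ) : ℕ := ⌈n * ρ⌉₊ - 1

/-- The upper mechanical sequence of slope `ρ`. -/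
def upperMech (ρ : ℝ) : ℕ → ℕ := diffSeq (ceilSum ρ)

/-- The lower mechanical sequence of slope `ρ`. -/
def lowerMech (ρ : ℝ) : ℕ → ℕ := diffSeq (floorSum ρ)

/-- The limit of the upper mechanical sequences as the slope decreases to `ρ`. -/
def plusMech (ρ : ℝ) : ℕ → ℕ := diffSeq (plusSum ρ)

/-- The limit of the lower mechanical sequences as the slope increases to `ρ`. -/
def predMech (ρ : ℝ) : ℕ → ℕ := diffSeq (predSum ρ)

end

section Mechanical

variable {ρ : ℝ}

lemma ceilSum_monotone (hρ : 0 ≤ ρ) : Monotone (ceilSum ρ) := fun m n h => by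
  unfold ceilSum; gcongr

lemma floorSum_monotone (hρ : 0 ≤ ρ) : Monotone (floorSum ρ) := fun m n h => by
  unfold floorSum; gcongr

lemma plusSum_monotone (hρ : 0 ≤ ρ) : Monotone (plusSum ρ) := fun m n h => by
  have h1 : ⌊m * ρ⌋₊ ≤ ⌊n * ρ⌋₊ := floorSum_monotone hρ h
  unfold plusSum
  split_ifs <;> omega

lemma predSum_monotone (hρ : 0 ≤ ρ) : Monotone (predSum ρ) := fun m n h => by
  have h1 : ⌈m * ρ⌉₊ ≤ ⌈n * ρ⌉₊ := ceilSum_monotone hρ h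
  unfold predSum
  omega

lemma psum_upperMech (hρ : 0 ≤ ρ) (n : ℕ) : psum (upperMech ρ) n = ceilSum ρ n :=
  psum_diffSeq (by simp [ceilSum]) (ceilSum_monotone hρ) n

lemma psum_lowerMech (hρ : 0 ≤ ρ) (n : ℕ) : psum (lowerMech ρ) n = floorSum ρ n :=
  psum_diffSeq (by simp [floorSum]) (floorSum_monotone hρ) n

lemma psum_plusMech (hρ : 0 ≤ ρ) (n : ℕ) : psum (plusMech ρ) n = plusSum ρ n :=
  psum_diffSeq (by simp [plusSum]) (plusSum_monotone hρ) n

lemma psum_predMech (hρ : 0 ≤ ρ) (n : ℕ) : psum (predMech ρ) n = predSum ρ n :=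
  psum_diffSeq (by simp [predSum]) (predSum_monotone hρ) n

lemma ceilSum_add_le (hρ : 0 ≤ ρ) (a b : ℕ) :
    ceilSum ρ a + ceilSum ρ b ≤ ceilSum ρ (a + b) + 1 := by
  have h1 := Nat.ceil_lt_add_one (show 0 ≤ a * ρ by positivity)
  have h2 := Nat.ceil_lt_add_one (show 0 ≤ b * ρ by positivity)
  have h3 := Nat.le_ceil ((a + b : ℕ) * ρ)
  push_cast at h3
  have h4 : ((ceilSum ρ a + ceilSum ρ b : ℕ) : ℝ) < (ceilSum ρ (a + b) + 2 : ℕ) := by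
    unfold ceilSum
    push_cast
    linarith
  have : ceilSum ρ a + ceilSum ρ b < ceilSum ρ (a + b) + 2 := by exact_mod_cast h4
  omega

lemma le_ceilSum_add (a b : ℕ) : ceilSum ρ (a + b) ≤ ceilSum ρ a + ceilSum ρ b := by
  unfold ceilSum
  push_cast
  rw [add_mul]
  exact Nat.ceil_add_le _ _

lemma floorSum_add_le (hρ : 0 ≤ ρ) (a b : ℕ) :
    floorSum ρ a + floorSum ρ b ≤ floorSum ρ (a + b) := by
  have h1 := Nat.floor_le (show 0 ≤ a * ρ by positivity)
  have h2 := Nat.floor_le (show 0 ≤ b * ρ by positivity)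
  refine Nat.le_floor ?_
  unfold floorSum
  push_cast
  linarith

lemma floorSum_add_le_ceilSum (hρ : 0 ≤ ρ) (a b : ℕ) :
    floorSum ρ (a + b) ≤ floorSum ρ a + ceilSum ρ b := by
  have h1 := Nat.lt_floor_add_one (a * ρ)
  have h2 := Nat.le_ceil (b * ρ)
  have h3 := Nat.floor_le (show 0 ≤ (a + b : ℕ) * ρ by positivity)
  push_cast at h3
  have h4 : ((floorSum ρ (a + b) : ℕ) : ℝ) < (floorSum ρ a + ceilSum ρ b + 1 : ℕ) := by
    unfold floorSum ceilSum
    push_cast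
    linarith
  exact Nat.lt_succ_iff.1 (by exact_mod_cast h4)

lemma ceilSum_add_floorSum_le {ρ' : ℝ} (hρ' : 0 ≤ ρ') (h : ρ' ≤ ρ) (a b : ℕ) :
    ceilSum ρ a + floorSum ρ' b ≤ ceilSum ρ (a + b) := by
  have h1 := Nat.ceil_lt_add_one (show 0 ≤ a * ρ from mul_nonneg (by positivity) (hρ'.trans h))
  have h2 := Nat.floor_le (show 0 ≤ b * ρ' by positivity)
  have h3 := Nat.le_ceil ((a + b : ℕ) * ρ)
  push_cast at h3
  have h5 : (b : ℝ) * ρ' ≤ b * ρ := by gcongr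
  have h4 : ((ceilSum ρ a + floorSum ρ' b : ℕ) : ℝ) < (ceilSum ρ (a + b) + 1 : ℕ) := by
    unfold ceilSum floorSum
    push_cast
    linarith
  exact Nat.lt_succ_iff.1 (by exact_mod_cast h4)

lemma ceilSum_pos (hρ : 0 < ρ) {n : ℕ} (hn : 0 < n) : 0 < ceilSum ρ n :=
  Nat.ceil_pos.2 (by positivity)

lemma upperMech_le (ρ : ℝ) (i : ℕ) : upperMech ρ i ≤ ⌈ρ⌉₊ := by
  have h1 : ceilSum ρ (i + 1) ≤ ceilSum ρ i + ceilSum ρ 1 := le_ceilSum_add i 1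
  have h2 : ceilSum ρ 1 = ⌈ρ⌉₊ := by simp [ceilSum]
  unfold upperMech diffSeq
  omega

lemma lowerMech_le (hρ : 0 ≤ ρ) (i : ℕ) : lowerMech ρ i ≤ ⌈ρ⌉₊ := by
  have h1 : floorSum ρ (i + 1) ≤ floorSum ρ i + ceilSum ρ 1 := floorSum_add_le_ceilSum hρ i 1
  have h2 : ceilSum ρ 1 = ⌈ρ⌉₊ := by simp [ceilSum]
  unfold lowerMech diffSeq
  omega

lemma bddDigits_upperMech (ρ : ℝ) : BddDigits (upperMech ρ) := ⟨_, upperMech_le ρ⟩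

lemma bddDigits_lowerMech (hρ : 0 ≤ ρ) : BddDigits (lowerMech ρ) := ⟨_, lowerMech_le hρ⟩

lemma bddDigits_plusMech (hρ : 0 ≤ ρ) : BddDigits (plusMech ρ) := by
  refine ⟨⌈ρ⌉₊ + 1, fun i => ?_⟩
  have h1 := lowerMech_le hρ i
  unfold lowerMech diffSeq floorSum at h1
  unfold plusMech diffSeq plusSum
  rw [if_neg (Nat.succ_ne_zero i)]
  rcases Nat.eq_zero_or_pos i with rfl | hi
  · simpa using h1
  · rw [if_neg hi.ne']
    omega

lemma bddDigits_predMech (ρ : ℝ) : BddDigits (predMech ρ) := by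
  refine ⟨⌈ρ⌉₊ + 1, fun i => ?_⟩
  have h1 := upperMech_le ρ i
  unfold upperMech diffSeq ceilSum at h1
  unfold predMech diffSeq predSum
  omega

lemma shiftn_predMech (hρ : 0 < ρ) : shiftn 1 (predMech ρ) = shiftn 1 (upperMech ρ) := by
  funext i
  have h1 := ceilSum_pos hρ (show 0 < i + 1 by omega)
  have h2 := ceilSum_pos hρ (show 0 < i + 1 + 1 by omega)
  unfold ceilSum at h1 h2
  simp only [shiftn, predMech, upperMech, diffSeq, predSum, ceilSum]
  omega

lemma shiftn_plusMech (ρ : ℝ) (n : ℕ) :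
    shiftn (n + 1) (plusMech ρ) = shiftn (n + 1) (lowerMech ρ) := by
  funext i
  simp only [shiftn, plusMech, lowerMech, diffSeq, plusSum, floorSum]
  rw [if_neg (by omega), if_neg (by omega)]
  omega

lemma psum_shiftn_upperMech_le (hρ : 0 ≤ ρ) (m n : ℕ) :
    psum (shiftn m (upperMech ρ)) n ≤ ceilSum ρ n := by
  have h1 := psum_add (upperMech ρ) m n
  rw [psum_upperMech hρ, psum_upperMech hρ] at h1
  have := le_ceilSum_add (ρ := ρ) m n
  omega

lemma psum_shiftn_lowerMech_le (hρ : 0 ≤ ρ) (m n : ℕ) :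
    psum (shiftn m (lowerMech ρ)) n ≤ ceilSum ρ n := by
  have h1 := psum_add (lowerMech ρ) m n
  rw [psum_lowerMech hρ, psum_lowerMech hρ] at h1
  have := floorSum_add_le_ceilSum hρ m n
  omega

lemma le_psum_shiftn_lowerMech (hρ : 0 ≤ ρ) (m n : ℕ) :
    floorSum ρ n ≤ psum (shiftn m (lowerMech ρ)) n := by
  have h1 := psum_add (lowerMech ρ) m n
  rw [psum_lowerMech hρ, psum_lowerMech hρ] at h1
  have := floorSum_add_le hρ m n
  omega

lemma valSeq_shiftn_upperMech_le {β : ℝ} (hβ : 1 < β) (hρ : 0 ≤ ρ) (m : ℕ) :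
    valSeq β (shiftn m (upperMech ρ)) ≤ valSeq β (upperMech ρ) :=
  valSeq_le_of_psum_le hβ ((bddDigits_upperMech ρ).shiftn m) (bddDigits_upperMech ρ) fun n => by
    rw [psum_upperMech hρ]; exact psum_shiftn_upperMech_le hρ m n

lemma valSeq_shiftn_lowerMech_le {β : ℝ} (hβ : 1 < β) (hρ : 0 ≤ ρ) (m : ℕ) :
    valSeq β (shiftn m (lowerMech ρ)) ≤ valSeq β (upperMech ρ) :=
  valSeq_le_of_psum_le hβ ((bddDigits_lowerMech hρ).shiftn m) (bddDigits_upperMech ρ) fun n => by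
    rw [psum_upperMech hρ]; exact psum_shiftn_lowerMech_le hρ m n

lemma le_valSeq_shiftn_lowerMech {β : ℝ} (hβ : 1 < β) (hρ : 0 ≤ ρ) (m : ℕ) :
    valSeq β (lowerMech ρ) ≤ valSeq β (shiftn m (lowerMech ρ)) :=
  valSeq_le_of_psum_le hβ (bddDigits_lowerMech hρ) ((bddDigits_lowerMech hρ).shiftn m) fun n => by
    rw [psum_lowerMech hρ]; exact le_psum_shiftn_lowerMech hρ m n

/-! ### Limits of mechanical sequences in the slope -/

lemma tendsto_valSeq {β : ℝ} (hβ : 1 < β) {l : Filter ℝ} {S : ℝ → ℕ → ℕ} {R : ℕ → ℕ} (D : ℕ)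
    (hD : ∀ᶠ r in l, ∀ i, diffSeq (S r) i ≤ D) (h : ∀ n, ∀ᶠ r in l, S r n = R n) :
    Tendsto (fun r => valSeq β (diffSeq (S r))) l (𝓝 (valSeq β (diffSeq R))) := by
  have h0 : 0 < β := by linarith
  refine tendsto_tsum_of_dominated_convergence
    (summable_digits (c := fun _ => D) hβ ⟨D, fun _ => le_rfl⟩) (fun k => ?_) ?_
  · refine Tendsto.congr' ?_ tendsto_const_nhds
    filter_upwards [h k, h (k + 1)] with r h1 h2
    simp only [diffSeq, h1, h2]
  · filter_upwards [hD] with r hr k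
    rw [Real.norm_of_nonneg (by positivity)]
    have : (diffSeq (S r) k : ℝ) ≤ D := by exact_mod_cast hr k
    gcongr

lemma tendsto_valSeq_lowerMech {β : ℝ} (hβ : 1 < β) (hρ : 0 < ρ) :
    Tendsto (fun r => valSeq β (lowerMech r)) (𝓝[<] ρ) (𝓝 (valSeq β (predMech ρ))) := by
  have hpos : ∀ᶠ r in 𝓝[<] ρ, 0 < r := nhdsWithin_le_nhds (lt_mem_nhds hρ)
  refine tendsto_valSeq hβ ⌈ρ⌉₊ ?_ fun n => ?_
  · filter_upwards [hpos, self_mem_nhdsWithin] with r h0 hr i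
    exact (lowerMech_le h0.le i).trans (Nat.ceil_mono (le_of_lt hr))
  rcases Nat.eq_zero_or_pos n with rfl | hn
  · exact Eventually.of_forall fun r => by simp [floorSum, predSum]
  have hc := ceilSum_pos hρ hn
  have hcast : ((⌈n * ρ⌉₊ - 1 : ℕ) : ℝ) = ⌈n * ρ⌉₊ - 1 := by
    rw [Nat.cast_sub (show 1 ≤ ⌈n * ρ⌉₊ from hc), Nat.cast_one]
  have h1 : ((⌈n * ρ⌉₊ - 1 : ℕ) : ℝ) < n * ρ := by
    rw [hcast]
    have := Nat.ceil_lt_add_one (show 0 ≤ n * ρ by positivity)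
    linarith
  have hcont : ContinuousAt (fun r : ℝ => n * r) ρ := by fun_prop
  filter_upwards [hpos, self_mem_nhdsWithin, nhdsWithin_le_nhds (hcont.eventually_const_lt h1)]
    with r h0 hr h2
  refine (Nat.floor_eq_iff (by positivity)).2 ⟨h2.le, ?_⟩
  rw [predSum, hcast]
  have h3 : (n : ℝ) * r < n * ρ := mul_lt_mul_of_pos_left hr (by positivity)
  linarith [Nat.le_ceil (n * ρ)]

lemma tendsto_valSeq_upperMech_left {β : ℝ} (hβ : 1 < β) (hρ : 0 < ρ) :
    Tendsto (fun r => valSeq β (upperMech r)) (𝓝[<] ρ) (𝓝 (valSeq β (upperMech ρ))) := by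
  refine tendsto_valSeq hβ ⌈ρ⌉₊ ?_ fun n => ?_
  · filter_upwards [self_mem_nhdsWithin] with r hr i
    exact (upperMech_le r i).trans (Nat.ceil_mono (le_of_lt hr))
  rcases Nat.eq_zero_or_pos n with rfl | hn
  · exact Eventually.of_forall fun r => by simp [ceilSum]
  have hc := ceilSum_pos hρ hn
  have hcast : ((⌈n * ρ⌉₊ - 1 : ℕ) : ℝ) = ⌈n * ρ⌉₊ - 1 := by
    rw [Nat.cast_sub (show 1 ≤ ⌈n * ρ⌉₊ from hc), Nat.cast_one]
  have h1 : ((⌈n * ρ⌉₊ - 1 : ℕ) : ℝ) < n * ρ := by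
    rw [hcast]
    have := Nat.ceil_lt_add_one (show 0 ≤ n * ρ by positivity)
    linarith
  have hcont : ContinuousAt (fun r : ℝ => n * r) ρ := by fun_prop
  filter_upwards [self_mem_nhdsWithin, nhdsWithin_le_nhds (hcont.eventually_const_lt h1)]
    with r hr h2
  have h3 : (n : ℝ) * r < n * ρ := mul_lt_mul_of_pos_left hr (by positivity)
  exact (Nat.ceil_eq_iff hc.ne').2 ⟨h2, h3.le.trans (Nat.le_ceil _)⟩

lemma tendsto_valSeq_upperMech_right {β : ℝ} (hβ : 1 < β) (hρ : 0 ≤ ρ) :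
    Tendsto (fun r => valSeq β (upperMech r)) (𝓝[>] ρ) (𝓝 (valSeq β (plusMech ρ))) := by
  refine tendsto_valSeq hβ ⌈ρ + 1⌉₊ ?_ fun n => ?_
  · filter_upwards [nhdsWithin_le_nhds (gt_mem_nhds (lt_add_one ρ))] with r hr i
    exact (upperMech_le r i).trans (Nat.ceil_mono (le_of_lt hr))
  rcases Nat.eq_zero_or_pos n with rfl | hn
  · exact Eventually.of_forall fun r => by simp [ceilSum, plusSum]
  have hcont : ContinuousAt (fun r : ℝ => n * r) ρ := by fun_prop
  filter_upwards [self_mem_nhdsWithin,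
    nhdsWithin_le_nhds (hcont.eventually_lt_const (Nat.lt_floor_add_one (n * ρ)))] with r hr h2
  have h3 : (n : ℝ) * ρ < n * r := mul_lt_mul_of_pos_left hr (by positivity)
  rw [plusSum, if_neg hn.ne']
  refine (Nat.ceil_eq_iff (by omega)).2 ⟨?_, ?_⟩
  · rw [Nat.add_sub_cancel]
    exact (Nat.floor_le (by positivity)).trans_lt h3
  · push_cast
    exact h2.le

end Mechanical

/-! ### No isolated points when `1` has an upper mechanical expansion -/

/-- The first `L` digits of `d` followed by `u`. -/
def splice (d : ℕ → ℕ) (L : ℕ) (u : ℕ → ℕ) : ℕ → ℕ := fun i => if i < L then d i else u (i - L)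

lemma BddDigits.splice {d u : ℕ → ℕ} (hd : BddDigits d) (hu : BddDigits u) (L : ℕ) :
    BddDigits (splice d L u) := by
  obtain ⟨D, hD⟩ := hd
  obtain ⟨U, hU⟩ := hu
  refine ⟨max D U, fun i => ?_⟩
  unfold _root_.splice
  split_ifs
  · exact (hD i).trans (le_max_left _ _)
  · exact (hU _).trans (le_max_right _ _)

lemma shiftn_splice_of_le (d u : ℕ → ℕ) {L i : ℕ} (hi : i ≤ L) :
    shiftn i (splice d L u) = splice (shiftn i d) (L - i) u := by
  funext j
  simp only [shiftn, splice]
  by_cases h : j + i < L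
  · rw [if_pos h, if_pos (by omega)]
  · rw [if_neg h, if_neg (by omega), show j + i - L = j - (L - i) by omega]

lemma shiftn_splice_add (d u : ℕ → ℕ) (L i : ℕ) :
    shiftn (i + L) (splice d L u) = shiftn i u := by
  funext j
  simp only [shiftn, splice]
  rw [if_neg (by omega), show j + (i + L) - L = j + i by omega]

lemma splice_agree (d u : ℕ → ℕ) (L : ℕ) : ∀ i < L, splice d L u i = d i :=
  fun _ hi => if_pos hi

lemma psum_splice_add (d u : ℕ → ℕ) (L j : ℕ) :
    psum (splice d L u) (L + j) = psum d L + psum u j := by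
  have h := shiftn_splice_add d u L 0
  rw [zero_add, shiftn_zero] at h
  rw [psum_add, psum_congr (splice_agree d u L), h]

section UpperOne

variable {β ρ t : ℝ}

lemma psum_greedy_le_ceilSum (hβ : 1 < β) (hρ : 0 < ρ) (h1 : valSeq β (upperMech ρ) = 1)
    (ht : t ∈ Ico (0 : ℝ) 1) (n : ℕ) : psum (greedy β t) n ≤ ceilSum ρ n := by
  rw [← psum_upperMech hρ.le]
  refine psum_le_of_seqLe (fun a b => ?_) (fun m => Or.inr ?_) n
  · simp only [psum_upperMech hρ.le]
    exact ceilSum_add_le hρ.le a b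
  · refine seqLt_of_valSeq_lt hβ ((bddDigits_greedy hβ ht).shiftn m) (bddDigits_upperMech ρ)
      (fun k => h1 ▸ valSeq_shiftn_upperMech_le hβ hρ.le _) ?_
    rw [h1, valSeq_shiftn_greedy hβ ht]
    exact (Tbeta_iterate_mem ht m).2

lemma valSeq_predMech (hβ : 1 < β) (hρ : 0 < ρ) :
    valSeq β (predMech ρ) = valSeq β (upperMech ρ) - 1 / β := by
  have h := valSeq_sub_of_first_diff hβ (bddDigits_upperMech ρ) (bddDigits_predMech ρ) (n := 0)
    (fun i hi => absurd hi (Nat.not_lt_zero i))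
  have hc := ceilSum_pos hρ Nat.one_pos
  unfold ceilSum at hc
  have h0 : (upperMech ρ 0 : ℝ) - predMech ρ 0 = 1 := by
    have : upperMech ρ 0 = predMech ρ 0 + 1 := by
      simp only [upperMech, predMech, diffSeq, ceilSum, predSum, zero_add, Nat.cast_zero, zero_mul,
        Nat.ceil_zero]
      omega
    rw [this]
    push_cast
    ring
  rw [zero_add, shiftn_predMech hρ, h0, sub_self, add_zero, pow_one] at h
  linarith

lemma predSum_le_psum_greedy (hβ : 1 < β) (hρ : 0 < ρ) (h1 : valSeq β (upperMech ρ) = 1)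
    (ht : t ∈ Ebif β) (hle : 1 - 1 / β ≤ t) (n : ℕ) : predSum ρ n ≤ psum (greedy β t) n := by
  obtain ⟨htI, hmin⟩ := (mem_Ebif_iff hβ).1 ht
  rw [← psum_predMech hρ.le]
  refine le_psum_of_seqLe (fun a b => ?_) (fun m => ?_) n
  · simp only [psum_predMech hρ.le]
    have h2 := le_ceilSum_add (ρ := ρ) (a + 1) b
    have h3 := ceilSum_pos hρ (show 0 < a + 1 by omega)
    unfold ceilSum at h2 h3
    unfold predSum
    rcases Nat.eq_zero_or_pos b with rfl | hb
    · simp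
    · have h4 := ceilSum_pos hρ hb
      unfold ceilSum at h4
      omega
  · refine seqLe_of_valSeq_le hβ (bddDigits_predMech ρ) ((bddDigits_greedy hβ htI).shiftn m)
      (fun k => ?_) ?_
    · rw [shiftn_shiftn, valSeq_shiftn_greedy hβ htI]
      exact (Tbeta_iterate_mem htI _).2
    · rw [valSeq_predMech hβ hρ, h1, valSeq_shiftn_greedy hβ htI]
      exact hle.trans (hmin m)

lemma eq_zero_of_forall_nat_mul_le {a C : ℝ} (h : ∀ j : ℕ, |j * a| ≤ C) : a = 0 := by
  by_contra ha
  obtain ⟨j, hj⟩ := exists_nat_gt (C / |a|)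
  have h1 := h j
  have h2 : 0 < |a| := abs_pos.2 ha
  rw [div_lt_iff₀ h2] at hj
  rw [abs_mul, Nat.abs_cast] at h1
  linarith

lemma lt_one_sub_inv_of_periodic (hβ : 1 < β) (hρ : 0 < ρ) (h1 : valSeq β (upperMech ρ) = 1)
    (ht : t ∈ Ebif β) {m : ℕ} (hm : 0 < m) (hper : (Tbeta β)^[m] t = t) : t < 1 - 1 / β := by
  by_contra! hle
  obtain ⟨htI, hmin⟩ := (mem_Ebif_iff hβ).1 ht
  set d := greedy β t with hd
  have hup := psum_greedy_le_ceilSum hβ hρ h1 htI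
  have hlo := predSum_le_psum_greedy hβ hρ h1 ht hle
  rw [← hd] at hup hlo
  have hshift : shiftn m d = d := by rw [hd, shiftn_greedy, hper]
  have hpm : ∀ i, psum d (i + m) = psum d i + psum d m := fun i => by
    rw [add_comm i m, psum_add, hshift, add_comm]
  have hmul : ∀ j : ℕ, psum d (j * m) = j * psum d m := fun j => by
    induction j with
    | zero => simp [psum_zero]
    | succ j ih => rw [Nat.succ_mul, hpm, ih, Nat.succ_mul]
  have hslope : (psum d m : ℝ) - m * ρ = 0 := by
    refine eq_zero_of_forall_nat_mul_le (C := 1) fun j => ?_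
    have h2 : ((psum d (j * m) : ℕ) : ℝ) ≤ ⌈((j * m : ℕ) : ℝ) * ρ⌉₊ := by
      exact_mod_cast hup (j * m)
    have h3 : ((⌈((j * m : ℕ) : ℝ) * ρ⌉₊ : ℕ) : ℝ) ≤ psum d (j * m) + 1 := by
      have := hlo (j * m)
      unfold predSum at this
      exact_mod_cast (by omega : ⌈((j * m : ℕ) : ℝ) * ρ⌉₊ ≤ psum d (j * m) + 1)
    have h4 := Nat.ceil_lt_add_one (show 0 ≤ ((j * m : ℕ) : ℝ) * ρ by positivity)
    have h5 := Nat.le_ceil (((j * m : ℕ) : ℝ) * ρ)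
    rw [hmul] at h2 h3
    push_cast at *
    rw [abs_le]
    constructor <;> nlinarith
  set f : ℕ → ℝ := fun i => psum d i - i * ρ with hf
  have hfper : Function.Periodic f m := fun i => by
    simp only [hf, hpm]
    push_cast
    linarith
  obtain ⟨i₀, -, hi₀⟩ := Finset.exists_min_image (Finset.range m) f ⟨0, Finset.mem_range.2 hm⟩
  have hfmin : ∀ i, f i₀ ≤ f i := fun i => by
    rw [← hfper.map_mod_nat i]
    exact hi₀ _ (Finset.mem_range.2 (Nat.mod_lt _ hm))
  have hps : ∀ n, psum (shiftn i₀ d) n = psum (upperMech ρ) n := fun n => by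
    rw [psum_upperMech hρ.le]
    refine le_antisymm ?_ ?_
    · rw [hd, shiftn_greedy]
      exact psum_greedy_le_ceilSum hβ hρ h1 (Tbeta_iterate_mem htI i₀) n
    · refine Nat.ceil_le.2 ?_
      have h2 := hfmin (i₀ + n)
      simp only [hf, psum_add] at h2
      push_cast at h2
      linarith
  have h2 := valSeq_shiftn_greedy hβ htI i₀
  rw [← hd, eq_of_psum_eq hps, h1] at h2
  exact absurd (Tbeta_iterate_mem (β := β) htI i₀).2 (by rw [← h2]; exact lt_irrefl 1)

lemma accPt_of_periodic (hβ : 1 < β) (hρ : 0 < ρ) (h1 : valSeq β (upperMech ρ) = 1)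
    (ht : t ∈ Ebif β) {m : ℕ} (hm : 0 < m) (hper : (Tbeta β)^[m] t = t) :
    AccPt t (𝓟 (Ebif β)) := by
  have h0 : 0 < β := by linarith
  obtain ⟨htI, hmin⟩ := (mem_Ebif_iff hβ).1 ht
  have hlt : t < valSeq β (predMech ρ) := by
    rw [valSeq_predMech hβ hρ, h1]
    exact lt_one_sub_inv_of_periodic hβ hρ h1 ht hm hper
  obtain ⟨r, ⟨hru, hr0⟩, hrρ⟩ := (((tendsto_valSeq_lowerMech hβ hρ).eventually
    (lt_mem_nhds hlt)).and (nhdsWithin_le_nhds (lt_mem_nhds hρ)) |>.and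
    self_mem_nhdsWithin).exists
  have hrρ : r < ρ := hrρ
  have hr0 : 0 < r := hr0
  set u := lowerMech r with hu
  have hub : BddDigits u := bddDigits_lowerMech hr0.le
  set d := greedy β t with hd
  have hdb : BddDigits d := bddDigits_greedy hβ htI
  have hperN : ∀ N : ℕ, (Tbeta β)^[N * m] t = t := fun N => by
    rw [mul_comm, Function.iterate_mul]
    exact Function.iterate_fixed hper N
  -- digit sums of a greedy word followed by `u` stay below those of `upperMech ρ`
  have hval : ∀ x ∈ Ico (0 : ℝ) 1, ∀ l, valSeq β (splice (greedy β x) l u) < 1 := by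
    intro x hx l
    have hxp := psum_greedy_le_ceilSum hβ hρ h1 hx
    obtain ⟨j, hj⟩ := exists_nat_gt (1 / (ρ - r))
    rw [← h1]
    refine valSeq_lt_of_psum_lt (k := l + j) hβ ((bddDigits_greedy hβ hx).splice hub l)
      (bddDigits_upperMech ρ) (fun k => ?_) ?_
    · rw [psum_upperMech hρ.le]
      rcases le_or_gt k l with hk | hk
      · rw [psum_congr fun i hi => splice_agree _ u l i (by omega)]
        exact hxp k
      · obtain ⟨j, rfl⟩ : ∃ j, k = l + j := ⟨k - l, by omega⟩
        rw [psum_splice_add, hu, psum_lowerMech hr0.le]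
        exact (Nat.add_le_add_right (hxp l) _).trans
          (ceilSum_add_floorSum_le hr0.le hrρ.le l j)
    · rw [psum_upperMech hρ.le, psum_splice_add, hu, psum_lowerMech hr0.le]
      have h2 : (psum (greedy β x) l : ℝ) ≤ ceilSum ρ l := by exact_mod_cast hxp l
      have h3 := Nat.ceil_lt_add_one (show 0 ≤ l * ρ by positivity)
      have h4 := Nat.floor_le (show 0 ≤ j * r by positivity)
      have h5 := Nat.le_ceil ((l + j : ℕ) * ρ)
      rw [div_lt_iff₀ (by linarith)] at hj
      have h6 : ((psum (greedy β x) l + floorSum r j : ℕ) : ℝ) < ceilSum ρ (l + j) := by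
        unfold ceilSum floorSum at *
        push_cast at *
        linarith
      exact_mod_cast h6
  have hu1 : ∀ n, valSeq β (shiftn n u) < 1 := fun n => by
    refine (valSeq_shiftn_lowerMech_le hβ hr0.le n).trans_lt ?_
    obtain ⟨j, hj⟩ := exists_nat_gt (1 / (ρ - r))
    rw [← h1]
    refine valSeq_lt_of_psum_lt (k := j) hβ (bddDigits_upperMech r) (bddDigits_upperMech ρ)
      (fun k => ?_) ?_ <;> rw [psum_upperMech hρ.le, psum_upperMech hr0.le]
    · unfold ceilSum; gcongr
    · have h2 := Nat.ceil_lt_add_one (show 0 ≤ j * r by positivity)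
      have h3 := Nat.le_ceil (j * ρ)
      rw [div_lt_iff₀ (by linarith)] at hj
      have h4 : (ceilSum r j : ℝ) < ceilSum ρ j := by
        unfold ceilSum
        linarith
      exact_mod_cast h4
  refine accPt_of_sequence fun ε hε => ?_
  obtain ⟨N, hN⟩ := ((tendsto_div_pow hβ (valSeq β u - t)).eventually
    (gt_mem_nhds hε)).exists_forall_of_atTop
  set L := N * m with hL
  have hNL : N ≤ L := Nat.le_mul_of_pos_right N hm
  set z := splice d L u with hz
  have hzb : BddDigits z := hdb.splice hub L
  have hzval : ∀ i ≤ L, valSeq β (shiftn i z)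
      = (Tbeta β)^[i] t + (valSeq β u - t) / β ^ (L - i) := fun i hi => by
    have h2 := valSeq_sub_of_agree hβ ((hdb.shiftn i).splice hub (L - i)) (hdb.shiftn i)
      (splice_agree (shiftn i d) u (L - i))
    have h3 := shiftn_splice_add (shiftn i d) u (L - i) 0
    rw [zero_add, shiftn_zero] at h3
    rw [h3, shiftn_shiftn, Nat.sub_add_cancel hi, hd, valSeq_shiftn_greedy hβ htI,
      valSeq_shiftn_greedy hβ htI, hL, hperN, ← hL] at h2
    rw [hz, shiftn_splice_of_le d u hi, hd]
    linarith
  have hz0 : valSeq β z = t + (valSeq β u - t) / β ^ L := by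
    simpa [shiftn_zero] using hzval 0 (Nat.zero_le L)
  have hut : 0 < valSeq β u - t := sub_pos.2 hru
  refine ⟨valSeq β z, valSeq_mem_Ebif hβ hzb (fun n => ?_) (fun n => ?_), ?_, ?_⟩
  · rcases le_or_gt n L with hn | hn
    · rw [hz, shiftn_splice_of_le d u hn, hd, shiftn_greedy]
      exact hval _ (Tbeta_iterate_mem htI n) _
    · obtain ⟨i, rfl⟩ : ∃ i, n = i + L := ⟨n - L, by omega⟩
      rw [hz, shiftn_splice_add]
      exact hu1 i
  · rcases le_or_gt n L with hn | hn
    · rw [hz0, hzval n hn]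
      have h2 := hmin n
      have h3 : (valSeq β u - t) / β ^ L ≤ (valSeq β u - t) / β ^ (L - n) :=
        div_le_div_of_nonneg_left hut.le (by positivity)
          (pow_le_pow_right₀ hβ.le (Nat.sub_le L n))
      linarith
    · obtain ⟨i, rfl⟩ : ∃ i, n = i + L := ⟨n - L, by omega⟩
      rw [hz, shiftn_splice_add, ← hz, hz0]
      refine le_trans ?_ (le_valSeq_shiftn_lowerMech hβ hr0.le i)
      have h3 : (valSeq β u - t) / β ^ L ≤ valSeq β u - t :=
        div_le_self hut.le (one_le_pow₀ hβ.le)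
      rw [← hu]
      linarith
  · rw [hz0]
    have : 0 < (valSeq β u - t) / β ^ L := by positivity
    linarith
  · rw [hz0, add_sub_cancel_left, abs_of_pos (by positivity)]
    exact hN L hNL

lemma accPt_Ebif_of_upperMech (hβ : 1 < β) (hρ : 0 < ρ) (h1 : valSeq β (upperMech ρ) = 1)
    (ht : t ∈ Ebif β) : AccPt t (𝓟 (Ebif β)) := by
  by_cases h : ∀ m, 0 < m → (Tbeta β)^[m] t ≠ t
  · exact accPt_of_not_periodic hβ ht h
  · push Not at h
    obtain ⟨m, hm, hper⟩ := h
    exact accPt_of_periodic hβ hρ h1 ht hm hper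

end UpperOne

section Isolated

variable {p q : ℕ}

lemma floorSum_div (p q n : ℕ) : floorSum ((p : ℝ) / q) n = n * p / q := by
  unfold floorSum
  rw [← mul_div_assoc, ← Nat.cast_mul, Nat.floor_div_eq_div]

lemma plusSum_add_le {ρ : ℝ} (hρ : 0 ≤ ρ) (a b : ℕ) :
    plusSum ρ a + plusSum ρ b ≤ plusSum ρ (a + b) + 1 := by
  have h := floorSum_add_le hρ a b
  unfold floorSum at h
  unfold plusSum
  rcases Nat.eq_zero_or_pos a with rfl | ha
  · simp
  rcases Nat.eq_zero_or_pos b with rfl | hb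
  · simp
  rw [if_neg (by omega), if_neg (by omega), if_neg (by omega)]
  omega

lemma shiftn_lowerMech_div (hq : 0 < q) :
    shiftn q (lowerMech ((p : ℝ) / q)) = lowerMech ((p : ℝ) / q) := by
  funext i
  have h : ∀ j, (j + q) * p / q = j * p / q + p := fun j => by
    rw [add_mul, Nat.add_mul_div_left _ _ hq]
  simp only [shiftn, lowerMech, diffSeq, floorSum_div]
  rw [show i + q + 1 = (i + 1) + q by omega, h, h]
  omega

lemma exists_mul_mod_eq_pred (hpq : p.Coprime q) (hq : 0 < q) (k : ℕ) (hk : q ≤ k + 1) :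
    ∃ i ≤ k, k < i + q ∧ i * p % q = q - 1 := by
  obtain ⟨i₀, hi₀⟩ : ∃ i₀, (i₀ * p) % q = q - 1 := by
    rcases Nat.lt_or_ge 1 q with h1 | h1
    · obtain ⟨m, -, hm⟩ := Nat.exists_mul_mod_eq_one_of_coprime hpq h1
      refine ⟨m * (q - 1), ?_⟩
      have h2 : p * m * (q - 1) ≡ 1 * (q - 1) [MOD q] :=
        Nat.ModEq.mul_right _ (by rw [Nat.ModEq, hm, Nat.mod_eq_of_lt h1])
      rw [show m * (q - 1) * p = p * m * (q - 1) by ring, h2, one_mul,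
        Nat.mod_eq_of_lt (by omega)]
    · obtain rfl : q = 1 := by omega
      exact ⟨0, by simp⟩
  refine ⟨k + 1 - q + (i₀ + (q - (k + 1 - q) % q)) % q, ?_, ?_, ?_⟩
  · have := Nat.mod_lt (i₀ + (q - (k + 1 - q) % q)) hq
    omega
  · omega
  · have hm := (Nat.mod_lt (k + 1 - q) hq).le
    have h3 : k + 1 - q + (i₀ + (q - (k + 1 - q) % q)) % q ≡ i₀ [MOD q] := by
      have h4 : k + 1 - q + (i₀ + (q - (k + 1 - q) % q)) % q
          ≡ (k + 1 - q) % q + (i₀ + (q - (k + 1 - q) % q)) [MOD q] :=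
        Nat.ModEq.add (Nat.mod_modEq _ _).symm (Nat.mod_modEq _ _)
      refine h4.trans ?_
      rw [show (k + 1 - q) % q + (i₀ + (q - (k + 1 - q) % q)) = i₀ + q by omega]
      exact Nat.add_modEq_right
    rw [h3.mul_right p, hi₀]

lemma add_mul_div_of_mod_eq_pred {i n : ℕ} (hpq : p.Coprime q) (hn : 0 < n) (hnq : n < q)
    (hi : i * p % q = q - 1) : (i + n) * p / q = i * p / q + n * p / q + 1 := by
  have hq : 0 < q := by omega
  rw [add_mul, Nat.add_div hq, if_pos]
  have h1 : n * p % q ≠ 0 := fun h => by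
    have h2 : q ∣ n := (hpq.symm).dvd_of_dvd_mul_right (Nat.dvd_of_mod_eq_zero h)
    exact absurd (Nat.le_of_dvd hn h2) (by omega)
  omega

lemma valSeq_pos {β : ℝ} (hβ : 1 < β) {c : ℕ → ℕ} (hc : BddDigits c) {k : ℕ}
    (hk : 0 < psum c k) : 0 < valSeq β c := by
  have h := valSeq_lt_of_psum_lt (c := fun _ => 0) hβ ⟨0, fun _ => le_rfl⟩ hc
    (fun n => by simp [psum]) (k := k) (by simpa [psum] using hk)
  simpa [valSeq] using h

lemma exists_isolated {β : ℝ} (hβ : 1 < β) (hp : 0 < p) (hq : 0 < q) (hpq : p.Coprime q)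
    (hlt : valSeq β (upperMech ((p : ℝ) / q)) < 1)
    (hle : 1 ≤ valSeq β (plusMech ((p : ℝ) / q))) :
    ∃ t ∈ Ebif β, ¬ AccPt t (𝓟 (Ebif β)) := by
  have h0 : 0 < β := by linarith
  set ρ : ℝ := (p : ℝ) / q with hρdef
  have hρ : 0 < ρ := by positivity
  set z := lowerMech ρ with hz
  have hzb : BddDigits z := bddDigits_lowerMech hρ.le
  set t := valSeq β z with ht
  have hz1 : ∀ n, valSeq β (shiftn n z) < 1 := fun n =>
    (valSeq_shiftn_lowerMech_le hβ hρ.le n).trans_lt hlt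
  have hzt : ∀ n, t ≤ valSeq β (shiftn n z) := le_valSeq_shiftn_lowerMech hβ hρ.le
  have hT : ∀ n, (Tbeta β)^[n] t = valSeq β (shiftn n z) := Tbeta_iterate_valSeq hβ hzb hz1
  have hzp : ∀ n, psum z n = n * p / q := fun n => by
    rw [hz, psum_lowerMech hρ.le, floorSum_div]
  have hpos : 0 < t := valSeq_pos hβ hzb (k := q) (by
    rw [hzp, Nat.mul_div_cancel_left _ hq]; exact hp)
  have htE : t ∈ Ebif β := valSeq_mem_Ebif hβ hzb hz1 hzt
  have htI := htE.1
  have hzq : shiftn q z = z := shiftn_lowerMech_div hq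
  have hTq : (Tbeta β)^[q] t = t := by rw [hT, hzq]
  refine ⟨t, htE, fun hacc => ?_⟩
  have hev : ∀ᶠ x in 𝓝 t, ∀ i ∈ Finset.range (q + 1),
      (Tbeta β)^[i] x = (Tbeta β)^[i] t + β ^ i * (x - t) :=
    (Filter.eventually_all_finset _).2 fun i _ => eventually_iterate_eq_of_pos t
      (fun n => by rw [hT]; exact hpos.trans_le (hzt _)) i
  rw [accPt_iff_frequently] at hacc
  obtain ⟨x, ⟨hne, hxE⟩, hx⟩ := (hacc.and_eventually hev).exists
  obtain ⟨hxI, hxmin⟩ := (mem_Ebif_iff hβ).1 hxE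
  have hxi : ∀ i ≤ q, (Tbeta β)^[i] x = (Tbeta β)^[i] t + β ^ i * (x - t) := fun i hi =>
    hx i (Finset.mem_range.2 (by omega))
  have hgt : t < x := by
    refine lt_of_le_of_ne (not_lt.1 fun hlt => ?_) (Ne.symm hne)
    have h1 := hxmin q
    rw [hxi q le_rfl, hTq] at h1
    have h2 : 1 < β ^ q := one_lt_pow₀ hβ hq.ne'
    nlinarith
  set d := greedy β x with hd
  have hdb : BddDigits d := bddDigits_greedy hβ hxI
  have hdv : ∀ n, valSeq β (shiftn n d) = (Tbeta β)^[n] x := valSeq_shiftn_greedy hβ hxI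
  have hd1 : ∀ n, valSeq β (shiftn n d) < 1 := fun n => by
    rw [hdv]; exact (Tbeta_iterate_mem hxI n).2
  have hplus : ∀ n, valSeq β (shiftn (n + 1) (plusMech ρ)) ≤ 1 := fun n => by
    rw [shiftn_plusMech]; exact (hz1 _).le
  have hup : ∀ i n, psum (shiftn i d) n ≤ plusSum ρ n := fun i n => by
    rw [← psum_plusMech hρ.le]
    refine psum_le_of_seqLe (fun a b => ?_) (fun m => Or.inr ?_) n
    · simp only [psum_plusMech hρ.le]
      exact plusSum_add_le hρ.le a b
    · rw [shiftn_shiftn]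
      exact seqLt_of_valSeq_lt hβ (hdb.shiftn _) (bddDigits_plusMech hρ.le) hplus
        ((hd1 _).trans_le hle)
  have hplusSum : ∀ n, 0 < n → plusSum ρ n = n * p / q + 1 := fun n hn => by
    rw [← floorSum_div, plusSum, if_neg (by omega), floorSum]
  obtain ⟨k, hk, hkd⟩ : seqLt z d := seqLt_of_valSeq_lt hβ hzb hdb (fun n => (hd1 _).le) (by
    rw [← shiftn_zero d, hdv]; exact hgt)
  have hqk : q ≤ k := by
    by_contra! hkq
    have h1 := greedy_cast hβ hxI k
    have h2 := valSeq_succ hβ (hzb.shiftn k)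
    rw [shiftn_shiftn, ← hT, ← hT, add_comm 1 k] at h2
    rw [hxi k hkq.le, hxi (k + 1) hkq, ← hd] at h1
    have h3 : (d k : ℝ) = z k := by
      simp only [shiftn, zero_add] at h2
      rw [h1, pow_succ]
      linarith
    exact hkd.ne' (by exact_mod_cast h3)
  obtain ⟨i, hik, hki, hi⟩ := exists_mul_mod_eq_pred hpq hq k (by omega)
  have hagree : ∀ n, i + n ≤ k → psum (shiftn i d) n + i * p / q = (i + n) * p / q := fun n hn => by
    have h1 := psum_add z i n
    rw [hzp, hzp] at h1
    rw [← psum_congr (c := shiftn i z) (d := shiftn i d) fun j hj => hk _ (by omega)]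
    omega
  obtain ⟨n, rfl⟩ : ∃ n, k = i + n := ⟨k - i, by omega⟩
  have hlast : (i + (n + 1)) * p / q + 1 ≤ psum (shiftn i d) (n + 1) + i * p / q := by
    have h1 := hagree n le_rfl
    have h2 := hzp (i + n + 1)
    rw [psum_succ, hzp] at h2
    rw [psum_succ, ← add_assoc i n 1, ← h2]
    have h3 : shiftn i d n = d (i + n) := by simp [shiftn, add_comm]
    omega
  have hup' := hup i (n + 1)
  rw [hplusSum _ (by omega)] at hup'
  rcases Nat.lt_or_ge (n + 1) q with hnq | hnq
  · have h1 := add_mul_div_of_mod_eq_pred hpq (show 0 < n + 1 by omega) hnq hi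
    omega
  · have hnq : n + 1 = q := by omega
    have hlast2 : psum (shiftn i d) q = plusSum ρ q := by
      rw [hnq] at hlast hup'
      rw [hplusSum _ hq]
      rw [add_mul, Nat.add_mul_div_left _ _ hq] at hlast
      rw [Nat.mul_div_cancel_left _ hq] at hup' ⊢
      omega
    have hps : ∀ j ≤ q, psum (shiftn i d) j = psum (plusMech ρ) j := fun j hj => by
      rw [psum_plusMech hρ.le]
      rcases Nat.eq_zero_or_pos j with rfl | hj0
      · simp [psum_zero, plusSum]
      rcases hj.lt_or_eq with hj | rfl
      · rw [hplusSum _ hj0]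
        have h1 := add_mul_div_of_mod_eq_pred hpq hj0 hj hi
        have h2 := hagree j (by omega)
        omega
      · exact hlast2
    have hdig : ∀ j < q, shiftn i d j = plusMech ρ j := fun j hj => by
      have h1 := hps (j + 1) hj
      rw [psum_succ, psum_succ, hps j hj.le] at h1
      omega
    have h1 := valSeq_sub_of_agree hβ (hdb.shiftn i) (bddDigits_plusMech hρ.le) hdig
    have h2 : shiftn q (plusMech ρ) = z := by
      obtain ⟨m, rfl⟩ : ∃ m, q = m + 1 := ⟨q - 1, by omega⟩
      rw [shiftn_plusMech]
      exact hzq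
    rw [h2, shiftn_shiftn, hdv (q + i)] at h1
    have h3 := hxmin (q + i)
    have h4 : 0 < ((Tbeta β)^[q + i] x - valSeq β z) / β ^ q :=
      div_pos (by linarith) (by positivity)
    linarith [hd1 i]

end Isolated

section Bases

lemma hasSum_div_pow_succ {β : ℝ} (hβ : 1 < β) (C : ℝ) :
    HasSum (fun n : ℕ => C / β ^ (n + 1)) (C / (β - 1)) := by
  have h0 : 0 < β := by linarith
  have h1 : β - 1 ≠ 0 := by linarith
  have h := (hasSum_geometric_of_lt_one (r := β⁻¹) (by positivity)
    (inv_lt_one_of_one_lt₀ hβ)).mul_left (C / β)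
  have e1 : (fun n : ℕ => C / β ^ (n + 1)) = fun n => C / β * β⁻¹ ^ n := by
    funext n
    rw [pow_succ, inv_pow]
    field_simp
  have e2 : C / (β - 1) = C / β * (1 - β⁻¹)⁻¹ := by field_simp
  rw [e1, e2]
  exact h

lemma valSeq_le_div {β : ℝ} (hβ : 1 < β) {c : ℕ → ℕ} {D : ℕ} (hD : ∀ i, c i ≤ D) :
    valSeq β c ≤ D / (β - 1) := by
  have h0 : 0 < β := by linarith
  rw [← (hasSum_div_pow_succ hβ D).tsum_eq]
  refine (summable_digits hβ ⟨D, hD⟩).tsum_le_tsum (fun i => ?_) (hasSum_div_pow_succ hβ D).summable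
  have : (c i : ℝ) ≤ D := by exact_mod_cast hD i
  gcongr

lemma div_le_valSeq {β ρ : ℝ} (hβ : 1 < β) {c : ℕ → ℕ} (hc : BddDigits c)
    (h : ∀ n : ℕ, n * ρ ≤ psum c n) : ρ / (β - 1) ≤ valSeq β c := by
  have h0 : 0 < β := by linarith
  have h1 : β - 1 ≠ 0 := by linarith
  have hr : ‖β⁻¹‖ < 1 := by
    rw [Real.norm_of_nonneg (by positivity)]; exact inv_lt_one_of_one_lt₀ hβ
  have hs : HasSum (fun n : ℕ => (n * ρ) / β ^ (n + 1)) (ρ / (β - 1) ^ 2) := by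
    have e1 : (fun n : ℕ => (n * ρ) / β ^ (n + 1)) = fun n : ℕ => ρ / β * (n * β⁻¹ ^ n) := by
      funext n
      rw [pow_succ, inv_pow]
      field_simp
    have e2 : ρ / (β - 1) ^ 2 = ρ / β * (β⁻¹ / (1 - β⁻¹) ^ 2) := by field_simp
    rw [e1, e2]
    exact (hasSum_coe_mul_geometric_of_norm_lt_one hr).mul_left (ρ / β)
  have h2 : ρ / (β - 1) = (β - 1) * (ρ / (β - 1) ^ 2) := by field_simp
  rw [valSeq_eq_psum hβ hc, h2, ← hs.tsum_eq]
  refine mul_le_mul_of_nonneg_left ?_ (by linarith)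
  refine hs.summable.tsum_le_tsum (fun n => ?_) (summable_psum hβ hc)
  have := h n
  gcongr

lemma continuousOn_valSeq {c : ℕ → ℕ} (hc : BddDigits c) {a : ℝ} (ha : 1 < a) :
    ContinuousOn (fun β => valSeq β c) (Ici a) := by
  refine continuousOn_tsum (fun i => ?_) (summable_digits ha hc) fun i β hβ => ?_
  · refine continuousOn_const.div (by fun_prop) fun β hβ => ?_
    have : 0 < β := by linarith [mem_Ici.1 hβ]
    positivity
  · have : a ≤ β := hβ
    have h0 : 0 < a := by linarith
    have h1 : 0 < β := by linarith
    rw [Real.norm_of_nonneg (by positivity)]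
    gcongr

/-- The value of a sequence strictly decreases with the base, at least as fast as its first
nonzero term. -/
lemma le_valSeq_sub {β β' : ℝ} (hβ : 1 < β) (h : β ≤ β') {c : ℕ → ℕ} (hc : BddDigits c) (k : ℕ) :
    c k / β ^ (k + 1) - c k / β' ^ (k + 1) ≤ valSeq β c - valSeq β' c := by
  have hβ' : 1 < β' := by linarith
  have h0 : 0 < β := by linarith
  rw [valSeq, valSeq, ← (summable_digits hβ hc).tsum_sub (summable_digits hβ' hc)]
  refine ((summable_digits hβ hc).sub (summable_digits hβ' hc)).le_tsum k fun i _ => ?_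
  rw [sub_nonneg]
  gcongr

lemma valSeq_lt_of_base_lt {β β' : ℝ} (hβ : 1 < β) (h : β < β') {c : ℕ → ℕ} (hc : BddDigits c)
    (h0 : 0 < c 0) : valSeq β' c < valSeq β c := by
  have h1 := le_valSeq_sub hβ h.le hc 0
  have hβ0 : 0 < β := by linarith
  have hc0 : (0 : ℝ) < c 0 := by exact_mod_cast h0
  have h2 : (c 0 : ℝ) / β' ^ (0 + 1) < c 0 / β ^ (0 + 1) := by
    rw [zero_add, pow_one, pow_one]
    gcongr
  linarith

lemma exists_base {ρ : ℝ} (hρ : 0 < ρ) {c : ℕ → ℕ} (hc : BddDigits c) (h0 : 0 < c 0)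
    (h : ∀ n : ℕ, n * ρ ≤ psum c n) : ∃ B, 1 < B ∧ valSeq B c = 1 := by
  obtain ⟨D, hD⟩ := id hc
  have hD0 : 0 < D := h0.trans_le (hD 0)
  have h1 : 1 ≤ valSeq (1 + ρ) c := by
    have := div_le_valSeq (β := 1 + ρ) (by linarith) hc h
    rwa [add_sub_cancel_left, div_self hρ.ne'] at this
  have h2 : valSeq (1 + ρ + D) c ≤ 1 := by
    have := valSeq_le_div (β := 1 + ρ + D) (by have : (0 : ℝ) ≤ D := D.cast_nonneg
                                               linarith) hD
    refine this.trans ((div_le_one ?_).2 ?_) <;>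
      linarith [(D.cast_nonneg : (0 : ℝ) ≤ D)]
  obtain ⟨B, hB, hB1⟩ := intermediate_value_Icc' (f := fun β => valSeq β c) (δ := ℝ)
    (a := 1 + ρ) (b := 1 + ρ + D) (by linarith [(D.cast_nonneg : (0 : ℝ) ≤ D)])
    ((continuousOn_valSeq hc (by linarith)).mono Icc_subset_Ici_self) ⟨h2, h1⟩
  exact ⟨B, by linarith [hB.1], hB1⟩

lemma one_le_valSeq_iff {β B : ℝ} (hβ : 1 < β) (hB : 1 < B) {c : ℕ → ℕ} (hc : BddDigits c)
    (h0 : 0 < c 0) (h1 : valSeq B c = 1) : 1 ≤ valSeq β c ↔ β ≤ B := by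
  constructor
  · intro h
    by_contra! hlt
    have := valSeq_lt_of_base_lt hB hlt hc h0
    linarith
  · intro h
    rcases h.lt_or_eq with h | rfl
    · have := valSeq_lt_of_base_lt hβ h hc h0
      linarith
    · exact h1.ge

lemma valSeq_le_one_iff {β B : ℝ} (hβ : 1 < β) (hB : 1 < B) {c : ℕ → ℕ} (hc : BddDigits c)
    (h0 : 0 < c 0) (h1 : valSeq B c = 1) : valSeq β c ≤ 1 ↔ B ≤ β := by
  constructor
  · intro h
    by_contra! hlt
    have := valSeq_lt_of_base_lt hβ hlt hc h0
    linarith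
  · intro h
    rcases h.lt_or_eq with h | rfl
    · have := valSeq_lt_of_base_lt hB h hc h0
      linarith
    · exact h1.le

lemma upperMech_zero_pos {ρ : ℝ} (hρ : 0 < ρ) : 0 < upperMech ρ 0 := by
  simpa [upperMech, diffSeq, ceilSum] using hρ

lemma plusMech_zero_pos {ρ : ℝ} : 0 < plusMech ρ 0 := by
  simp [plusMech, diffSeq, plusSum]

lemma le_psum_upperMech {ρ : ℝ} (hρ : 0 ≤ ρ) (n : ℕ) : n * ρ ≤ psum (upperMech ρ) n := by
  rw [psum_upperMech hρ]
  exact Nat.le_ceil _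

lemma ceilSum_le_plusSum (ρ : ℝ) (n : ℕ) : ceilSum ρ n ≤ plusSum ρ n := by
  unfold ceilSum plusSum
  split_ifs with h
  · simp [h]
  · exact Nat.ceil_le_floor_add_one _

lemma le_psum_plusMech {ρ : ℝ} (hρ : 0 ≤ ρ) (n : ℕ) : n * ρ ≤ psum (plusMech ρ) n := by
  rw [psum_plusMech hρ]
  exact (Nat.le_ceil _).trans (by exact_mod_cast ceilSum_le_plusSum ρ n)

lemma exists_base_upperMech {ρ : ℝ} (hρ : 0 < ρ) : ∃ B, 1 < B ∧ valSeq B (upperMech ρ) = 1 :=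
  exists_base hρ (bddDigits_upperMech ρ) (upperMech_zero_pos hρ) (le_psum_upperMech hρ.le)

lemma exists_base_plusMech {ρ : ℝ} (hρ : 0 < ρ) : ∃ B, 1 < B ∧ valSeq B (plusMech ρ) = 1 :=
  exists_base hρ (bddDigits_plusMech hρ.le) plusMech_zero_pos (le_psum_plusMech hρ.le)

lemma valSeq_plusMech_lt {β r ρ : ℝ} (hβ : 1 < β) (hr : 0 ≤ r) (h : r < ρ) :
    valSeq β (plusMech r) < valSeq β (upperMech ρ) := by
  have hρ : 0 ≤ ρ := hr.trans h.le
  obtain ⟨j, hj⟩ := exists_nat_gt (1 / (ρ - r))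
  have hj0 : j ≠ 0 := by
    rintro rfl
    have : 0 < 1 / (ρ - r) := by have := sub_pos.2 h
                                 positivity
    simp at hj
    linarith
  refine valSeq_lt_of_psum_lt (k := j) hβ (bddDigits_plusMech hr) (bddDigits_upperMech ρ)
    (fun n => ?_) ?_ <;> rw [psum_plusMech hr, psum_upperMech hρ]
  · unfold plusSum ceilSum
    split_ifs with hn
    · exact Nat.zero_le _
    · refine Nat.lt_ceil.2 ((Nat.floor_le (by positivity)).trans_lt ?_)
      have : (0 : ℝ) < n := by positivity
      gcongr
  · unfold plusSum ceilSum
    rw [if_neg hj0]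
    have h2 := Nat.floor_le (show 0 ≤ j * r by positivity)
    rw [div_lt_iff₀ (by linarith)] at hj
    refine Nat.lt_ceil.2 ?_
    push_cast
    linarith

lemma valSeq_upperMech_le_plusMech {β ρ : ℝ} (hβ : 1 < β) (hρ : 0 ≤ ρ) :
    valSeq β (upperMech ρ) ≤ valSeq β (plusMech ρ) :=
  valSeq_le_of_psum_le hβ (bddDigits_upperMech ρ) (bddDigits_plusMech hρ) fun n => by
    rw [psum_upperMech hρ, psum_plusMech hρ]; exact ceilSum_le_plusSum ρ n

lemma valSeq_upperMech_lt {β r ρ : ℝ} (hβ : 1 < β) (hr : 0 ≤ r) (h : r < ρ) :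
    valSeq β (upperMech r) < valSeq β (upperMech ρ) :=
  (valSeq_upperMech_le_plusMech hβ hr).trans_lt (valSeq_plusMech_lt hβ hr h)

lemma upperMech_eq_plusMech {ρ : ℝ} (hρ : 0 ≤ ρ) (hirr : Irrational ρ) :
    upperMech ρ = plusMech ρ := by
  refine eq_of_psum_eq fun n => ?_
  rw [psum_upperMech hρ, psum_plusMech hρ]
  refine le_antisymm (ceilSum_le_plusSum ρ n) ?_
  unfold plusSum ceilSum
  split_ifs with hn
  · exact Nat.zero_le _
  · refine Nat.lt_ceil.2 (lt_of_le_of_ne (Nat.floor_le (by positivity)) fun h => ?_)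
    exact (hirr.natCast_mul hn).ne_nat _ h.symm

/-- Every base lies between those of the upper mechanical sequence of some slope and of its right
limit. -/
lemma exists_slope {β : ℝ} (hβ : 1 < β) : ∃ ρ, 0 < ρ ∧ valSeq β (upperMech ρ) ≤ 1 ∧
    1 ≤ valSeq β (plusMech ρ) := by
  have h0 : 0 < β := by linarith
  set S : Set ℝ := {ρ | 0 < ρ ∧ valSeq β (upperMech ρ) ≤ 1} with hS
  have hne : S.Nonempty := by
    have h1 : valSeq β (plusMech 0) < 1 := by
      have h2 : plusMech 0 = fun i => if i = 0 then 1 else 0 := by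
        funext i
        cases i <;> simp [plusMech, diffSeq, plusSum]
      rw [h2, valSeq, tsum_eq_single 0 (fun i hi => by simp [hi])]
      simpa using inv_lt_one_of_one_lt₀ hβ
    obtain ⟨r, hr, hr0⟩ := (((tendsto_valSeq_upperMech_right hβ le_rfl).eventually
      (gt_mem_nhds h1)).and self_mem_nhdsWithin).exists
    exact ⟨r, hr0, hr.le⟩
  have hbdd : BddAbove S := by
    refine ⟨β - 1, fun ρ hρ => ?_⟩
    have := (div_le_valSeq hβ (bddDigits_upperMech ρ) (le_psum_upperMech hρ.1.le)).trans hρ.2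
    rwa [div_le_one (by linarith)] at this
  obtain ⟨r₀, hr₀⟩ := hne
  have hpos : 0 < sSup S := hr₀.1.trans_le (le_csSup hbdd hr₀)
  refine ⟨sSup S, hpos, ?_, ?_⟩
  · refine le_of_tendsto (tendsto_valSeq_upperMech_left hβ hpos) ?_
    filter_upwards [self_mem_nhdsWithin, nhdsWithin_le_nhds (lt_mem_nhds hpos)] with r hr hr0
    obtain ⟨s, hs, hrs⟩ := exists_lt_of_lt_csSup ⟨r₀, hr₀⟩ hr
    exact (valSeq_upperMech_lt hβ hr0.le hrs).le.trans hs.2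
  · refine ge_of_tendsto (tendsto_valSeq_upperMech_right hβ hpos.le) ?_
    filter_upwards [self_mem_nhdsWithin] with r hr
    by_contra! hlt
    exact absurd (le_csSup hbdd ⟨hpos.trans hr, hlt.le⟩) (not_le.2 hr)

/-- Every positive rational slope is a quotient of coprime positive naturals. -/
lemma exists_coprime_div {ρ : ℝ} (hρ : 0 < ρ) (h : ¬ Irrational ρ) :
    ∃ p q : ℕ, 0 < p ∧ 0 < q ∧ p.Coprime q ∧ ρ = (p : ℝ) / q := by
  obtain ⟨r, rfl⟩ := not_not.1 h
  have hr : 0 < r := by exact_mod_cast hρ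
  have hn : 0 < r.num := Rat.num_pos.2 hr
  refine ⟨r.num.natAbs, r.den, by omega, r.den_pos, r.reduced, ?_⟩
  rw [show ((r.num.natAbs : ℕ) : ℝ) = ((r.num.natAbs : ℤ) : ℝ) by simp,
    Int.natAbs_of_nonneg hn.le]
  exact Rat.cast_def r

lemma slope_eq_or_isolated {β : ℝ} (hβ : 1 < β) :
    (∃ ρ, 0 < ρ ∧ valSeq β (upperMech ρ) = 1) ∨
    ∃ p q : ℕ, 0 < p ∧ 0 < q ∧ p.Coprime q ∧ valSeq β (upperMech ((p : ℝ) / q)) < 1 ∧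
      1 ≤ valSeq β (plusMech ((p : ℝ) / q)) := by
  obtain ⟨ρ, hρ, h1, h2⟩ := exists_slope hβ
  by_cases hirr : Irrational ρ
  · rw [← upperMech_eq_plusMech hρ.le hirr] at h2
    exact Or.inl ⟨ρ, hρ, le_antisymm h1 h2⟩
  · rcases h1.lt_or_eq with h1 | h1
    · obtain ⟨p, q, hp, hq, hpq, rfl⟩ := exists_coprime_div hρ hirr
      exact Or.inr ⟨p, q, hp, hq, hpq, h1, h2⟩
    · exact Or.inl ⟨ρ, hρ, h1⟩

end Bases

section Christoffel

/-- The lower Christoffel word of slope `p / q`. -/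
def christoffel (p q : ℕ) : List ℕ := (List.range q).map fun i => (i + 1) * p / q - i * p / q

lemma christoffel_eq_map (p q : ℕ) :
    christoffel p q = (List.range q).map (lowerMech ((p : ℝ) / q)) := by
  unfold christoffel
  congr 1
  funext i
  rw [lowerMech, diffSeq, floorSum_div, floorSum_div]

lemma length_christoffel (p q : ℕ) : (christoffel p q).length = q := by simp [christoffel]

variable {p q p' q' : ℕ}

lemma mediant_div_left (hq' : 0 < q') (h : p' * q = p * q' + 1) {i : ℕ} (hi : i ≤ q)
    (hq : 0 < q) : i * (p + p') / (q + q') = i * p / q := by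
  set a := i * p / q with ha
  have h1 : q * a ≤ i * p := Nat.mul_div_le _ _
  have h2 : i * p + 1 ≤ q * (a + 1) := Nat.lt_mul_div_succ _ hq
  have key : q * (i * (p + p')) = i * p * (q + q') + i := by
    calc q * (i * (p + p')) = i * p * q + i * (p' * q) := by ring
      _ = _ := by rw [h]; ring
  refine Nat.div_eq_of_lt_le ?_ ?_
  · refine Nat.le_of_mul_le_mul_left (c := q) ?_ hq
    rw [key]
    nlinarith
  · refine Nat.lt_of_mul_lt_mul_left (a := q) ?_
    rw [key]
    nlinarith

lemma mediant_div_right (hq' : 0 < q') (h : p' * q = p * q' + 1) {j : ℕ} (hj : j ≤ q')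
    (hq : 0 < q) : (q + j) * (p + p') / (q + q') = p + j * p' / q' := by
  set a := j * p' / q' with ha
  have h1 : q' * a ≤ j * p' := Nat.mul_div_le _ _
  have h2 : j * p' + 1 ≤ q' * (a + 1) := Nat.lt_mul_div_succ _ hq'
  have key : q' * ((q + j) * (p + p')) + j = (q' * p + j * p') * (q + q') + q' := by
    have h3 : q' * (q + j) * (p' * q) = q' * (q + j) * (p * q' + 1) := by rw [h]
    have h4 : j * (p' * q) = j * (p * q' + 1) := by rw [h]
    have h5 : q' * (p' * q) = q' * (p * q' + 1) := by rw [h]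
    nlinarith
  refine Nat.div_eq_of_lt_le ?_ ?_
  · refine Nat.le_of_mul_le_mul_left (c := q') ?_ hq'
    nlinarith
  · refine Nat.lt_of_mul_lt_mul_left (a := q') ?_
    nlinarith

lemma christoffel_append (hq : 0 < q) (hq' : 0 < q') (h : p' * q = p * q' + 1) :
    christoffel p q ++ christoffel p' q' = christoffel (p + p') (q + q') := by
  unfold christoffel
  rw [List.range_add, List.map_append, List.map_map]
  congr 1
  · refine List.map_congr_left fun i hi => ?_
    have hi := List.mem_range.1 hi
    rw [mediant_div_left hq' h hi hq, mediant_div_left hq' h hi.le hq]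
  · refine List.map_congr_left fun j hj => ?_
    have hj := List.mem_range.1 hj
    simp only [Function.comp_apply]
    rw [add_assoc q j 1, mediant_div_right (j := j + 1) hq' h hj hq,
      mediant_div_right hq' h hj.le hq]
    omega

lemma theta_christoffel (hq : 0 < q) : theta (christoffel p q) = christoffel (p + q) q := by
  unfold theta christoffel
  rw [List.map_map]
  refine List.map_congr_left fun i _ => ?_
  have h : ∀ j, j * (p + q) / q = j * p / q + j := fun j => by
    rw [mul_add, Nat.add_mul_div_right _ _ hq]
  have h1 : i * p / q ≤ (i + 1) * p / q := by gcongr; omega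
  simp only [Function.comp_apply, h]
  omega

lemma theta_iterate_christoffel (hq : 0 < q) (k : ℕ) :
    theta^[k] (christoffel p q) = christoffel (p + k * q) q := by
  induction k with
  | zero => simp
  | succ k ih =>
    rw [Function.iterate_succ_apply', ih, theta_christoffel hq]
    congr 1
    ring

/-- The word is a Christoffel word. -/
def IsChristoffel (w : List ℕ) : Prop := ∃ p q, 0 < q ∧ p.Coprime q ∧ w = christoffel p q

/-- Two words are Christoffel words of Farey neighbours. -/
def FareyAdj (w v : List ℕ) : Prop := ∃ p q p' q', 0 < q ∧ 0 < q' ∧ p' * q = p * q' + 1 ∧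
  w = christoffel p q ∧ v = christoffel p' q'

lemma coprime_mediant (h : p' * q = p * q' + 1) : (p + p').Coprime (q + q') := by
  refine Nat.Coprime.symm ?_
  rw [Nat.coprime_iff_gcd_eq_one, ← Nat.dvd_one]
  have h1 : (p + p') * q = p * (q + q') + 1 := by rw [add_mul, h]; ring
  refine (Nat.dvd_add_right ((Nat.gcd_dvd_left (q + q') (p + p')).mul_left p)).1 ?_
  rw [← h1]
  exact (Nat.gcd_dvd_right (q + q') (p + p')).mul_right q

lemma FareyAdj.append {w v : List ℕ} (h : FareyAdj w v) :
    FareyAdj w (w ++ v) ∧ FareyAdj (w ++ v) v ∧ IsChristoffel (w ++ v) := by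
  obtain ⟨p, q, p', q', hq, hq', h, rfl, rfl⟩ := h
  rw [christoffel_append hq hq' h]
  exact ⟨⟨p, q, _, _, hq, by omega, by rw [add_mul, h]; ring, rfl, rfl⟩,
    ⟨_, _, p', q', by omega, hq', by rw [mul_add, h]; ring, rfl, rfl⟩,
    ⟨_, _, by omega, coprime_mediant h, rfl⟩⟩

lemma fareyInsert_cons (w : List ℕ) (l : List (List ℕ)) :
    ∃ t, fareyInsert (w :: l) = w :: t := by
  cases l with
  | nil => exact ⟨[], rfl⟩
  | cons v l => exact ⟨_, rfl⟩

lemma isChain_fareyInsert (l : List (List ℕ)) (h : l.IsChain FareyAdj) :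
    (fareyInsert l).IsChain FareyAdj := by
  induction l using fareyInsert.induct with
  | case1 => exact h
  | case2 w => exact h
  | case3 w v rest ih =>
    obtain ⟨hwv, hrest⟩ := List.isChain_cons_cons.1 h
    have h1 := ih hrest
    obtain ⟨t, ht⟩ := fareyInsert_cons v rest
    rw [fareyInsert, ht, List.isChain_cons_cons, List.isChain_cons_cons]
    rw [ht] at h1
    exact ⟨hwv.append.1, hwv.append.2.1, h1⟩

lemma isChristoffel_of_mem_fareyInsert (l : List (List ℕ)) (h : l.IsChain FareyAdj)
    (hl : ∀ w ∈ l, IsChristoffel w) : ∀ w ∈ fareyInsert l, IsChristoffel w := by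
  induction l using fareyInsert.induct with
  | case1 => exact hl
  | case2 w => exact hl
  | case3 w v rest ih =>
    obtain ⟨hwv, hrest⟩ := List.isChain_cons_cons.1 h
    intro x hx
    rw [fareyInsert, List.mem_cons, List.mem_cons] at hx
    rcases hx with rfl | rfl | hx
    · exact hl _ List.mem_cons_self
    · exact hwv.append.2.2
    · exact ih hrest (fun y hy => hl y (List.mem_cons_of_mem _ hy)) x hx

lemma fareyLevel_spec (n : ℕ) : (fareyLevel n).IsChain FareyAdj ∧
    ∀ w ∈ fareyLevel n, IsChristoffel w := by
  induction n with
  | zero =>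
    refine ⟨?_, fun w hw => ?_⟩
    · rw [fareyLevel, List.isChain_cons_cons]
      exact ⟨⟨0, 1, 1, 1, by simp [christoffel]⟩, List.isChain_singleton _⟩
    · simp only [fareyLevel, List.mem_cons, List.not_mem_nil, or_false] at hw
      rcases hw with rfl | rfl
      · exact ⟨0, 1, by simp [christoffel]⟩
      · exact ⟨1, 1, by simp [christoffel]⟩
  | succ n ih =>
    exact ⟨isChain_fareyInsert _ ih.1, isChristoffel_of_mem_fareyInsert _ ih.1 ih.2⟩

lemma fareyInsert_adjacent (l₁ : List (List ℕ)) (w v : List ℕ) (l₂ : List (List ℕ)) :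
    ∃ k₁ k₂, fareyInsert (l₁ ++ w :: v :: l₂) = k₁ ++ w :: (w ++ v) :: v :: k₂ := by
  induction l₁ with
  | nil =>
    obtain ⟨t, ht⟩ := fareyInsert_cons v l₂
    exact ⟨[], t, by rw [List.nil_append, fareyInsert, ht, List.nil_append]⟩
  | cons x l₁ ih =>
    obtain ⟨k₁, k₂, hk⟩ := ih
    obtain ⟨y, t, hy⟩ : ∃ y t, l₁ ++ w :: v :: l₂ = y :: t := by
      cases l₁ with
      | nil => exact ⟨w, _, rfl⟩
      | cons y l₁ => exact ⟨y, _, rfl⟩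
    refine ⟨x :: (x ++ y) :: k₁, k₂, ?_⟩
    rw [List.cons_append, hy, fareyInsert, ← hy, hk]
    rfl

lemma mem_fareyLevel_of_between (hpq : p.Coprime q) (k : ℕ) :
    ∀ (n a b c d : ℕ) (l₁ l₂ : List (List ℕ)), q < b + d + k → 0 < b → 0 < d →
      c * b = a * d + 1 → a * q < p * b → p * d < c * q →
      fareyLevel n = l₁ ++ christoffel a b :: christoffel c d :: l₂ →
      ∃ m, christoffel p q ∈ fareyLevel m := by
  induction k with
  | zero =>
    intro n a b c d l₁ l₂ hk hb hd hdet h1 h2 hl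
    have h3 : q * (c * b) = q * (a * d + 1) := by rw [hdet]
    exfalso
    nlinarith
  | succ k ih =>
    intro n a b c d l₁ l₂ hk hb hd hdet h1 h2 hl
    obtain ⟨k₁, k₂, hk'⟩ := fareyInsert_adjacent l₁ (christoffel a b) (christoffel c d) l₂
    have hl' : fareyLevel (n + 1) = k₁ ++ christoffel a b :: christoffel (a + c) (b + d) ::
        christoffel c d :: k₂ := by
      rw [fareyLevel, hl, hk', christoffel_append hb hd hdet]
    rcases lt_trichotomy (p * (b + d)) ((a + c) * q) with h | h | h
    · exact ih (n + 1) a b (a + c) (b + d) k₁ (christoffel c d :: k₂) (by omega) hb (by omega)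
        (by rw [add_mul, hdet]; ring) h1 h hl'
    · have hco := coprime_mediant hdet
      have hp : p = a + c := Nat.dvd_antisymm
        (hpq.dvd_of_dvd_mul_right ⟨b + d, h.symm⟩)
        (hco.dvd_of_dvd_mul_right ⟨q, h⟩)
      have hq : q = b + d := Nat.dvd_antisymm
        (hpq.symm.dvd_of_dvd_mul_left ⟨a + c, by rw [h]; ring⟩)
        (hco.symm.dvd_of_dvd_mul_left ⟨p, by rw [← h]; ring⟩)
      exact ⟨n + 1, by rw [hl', hp, hq]; simp⟩
    · exact ih (n + 1) (a + c) (b + d) c d (k₁ ++ [christoffel a b]) k₂ (by omega) (by omega) hd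
        (by rw [mul_add, hdet]; ring) h h2 (by rw [hl']; simp)

lemma mem_fareyLevel (hpq : p.Coprime q) (hp : 0 < p) (hlt : p < q) :
    ∃ m, christoffel p q ∈ fareyLevel m :=
  mem_fareyLevel_of_between hpq (q + 1) 0 0 1 1 1 [] [] (by omega) one_pos one_pos (by norm_num)
    (by omega) (by omega) (by simp [fareyLevel, christoffel])

lemma mem_FareyExt_iff {s : List ℕ} :
    s ∈ FareyExt ↔ ∃ p q, 0 < p ∧ 0 < q ∧ p.Coprime q ∧ s = christoffel p q := by
  constructor
  · rintro ⟨v, hv, k, rfl⟩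
    have h : ∃ p q, 0 < p ∧ 0 < q ∧ p.Coprime q ∧ v = christoffel p q := by
      rcases hv with ⟨⟨n, hn⟩, h0, -⟩ | rfl
      · obtain ⟨p, q, hq, hpq, rfl⟩ := (fareyLevel_spec n).2 v hn
        refine ⟨p, q, Nat.pos_of_ne_zero ?_, hq, hpq, rfl⟩
        rintro rfl
        obtain rfl : q = 1 := by simpa using hpq
        exact h0 (by simp [christoffel])
      · exact ⟨1, 1, by simp [christoffel]⟩
    obtain ⟨p, q, hp, hq, hpq, rfl⟩ := h
    exact ⟨p + k * q, q, by omega, hq, by simpa using hpq, theta_iterate_christoffel hq k⟩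
  · rintro ⟨p, q, hp, hq, hpq, rfl⟩
    obtain ⟨k, r, hr, hrq, rfl⟩ : ∃ k r, 0 < r ∧ r ≤ q ∧ p = r + k * q := by
      refine ⟨(p - 1) / q, (p - 1) % q + 1, by omega, Nat.mod_lt _ hq, ?_⟩
      have := Nat.mod_add_div' (p - 1) q
      omega
    have hco : r.Coprime q := by simpa using hpq
    refine ⟨christoffel r q, ?_, k, (theta_iterate_christoffel hq k).symm⟩
    rcases hrq.lt_or_eq with hrq | rfl
    · refine Or.inl ⟨mem_fareyLevel hco hr hrq, fun h => ?_, fun h => ?_⟩ <;>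
      · have := congrArg List.length h
        rw [length_christoffel, List.length_singleton] at this
        omega
    · obtain rfl : r = 1 := by simpa using hco
      exact Or.inr (by simp [christoffel])

end Christoffel

section MaxCyc

lemma psum_eq_list_sum (f : ℕ → ℕ) (n : ℕ) : psum f n = ((List.range n).map f).sum := by
  induction n with
  | zero => rfl
  | succ n ih => rw [psum_succ, ih, List.range_succ, List.map_append, List.sum_append]; simp

lemma list_le_of_sum_take_le (l m : List ℕ) (hlen : l.length = m.length)
    (h : ∀ n, (l.take n).sum ≤ (m.take n).sum) : l ≤ m := by
  induction l generalizing m with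
  | nil =>
    obtain rfl : m = [] := List.length_eq_zero_iff.1 hlen.symm
    exact le_rfl
  | cons a l ih =>
    cases m with
    | nil => simp at hlen
    | cons b m =>
      have h1 : a ≤ b := by simpa using h 1
      rcases h1.lt_or_eq with h1 | rfl
      · exact le_of_lt (List.cons_lt_cons_iff.2 (Or.inl h1))
      · rcases (ih m (by simpa using hlen) fun n => by simpa using h (n + 1)).lt_or_eq with h2 | rfl
        · exact le_of_lt (List.cons_lt_cons_iff.2 (Or.inr ⟨rfl, h2⟩))
        · exact le_rfl

lemma list_nil_le (l : List ℕ) : [] ≤ l := by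
  cases l with
  | nil => exact le_rfl
  | cons a l => exact le_of_lt (List.nil_lt_cons a l)

lemma foldl_max_eq {U : List ℕ} (L : List (List ℕ)) (a : List ℕ) (hL : ∀ x ∈ L, x ≤ U)
    (ha : a ≤ U) (h : U ∈ L ∨ a = U) : L.foldl max a = U := by
  induction L generalizing a with
  | nil => simpa using h
  | cons x L ih =>
    rw [List.foldl_cons]
    have hx := hL x List.mem_cons_self
    refine ih _ (fun y hy => hL y (List.mem_cons_of_mem _ hy)) (max_le ha hx) ?_
    rcases h with h | rfl
    · rcases List.mem_cons.1 h with rfl | h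
      · exact Or.inr (max_eq_right ha)
      · exact Or.inl h
    · exact Or.inr (max_eq_left hx)

variable {p q : ℕ}

lemma lowerMech_periodic (hq : 0 < q) : Function.Periodic (lowerMech ((p : ℝ) / q)) q :=
  fun i => congrFun (shiftn_lowerMech_div (p := p) hq) i

lemma rotate_map_range {f : ℕ → ℕ} (hf : Function.Periodic f q) (i : ℕ) :
    ((List.range q).map f).rotate i = (List.range q).map (shiftn i f) := by
  refine List.ext_getElem (by simp) fun n h1 h2 => ?_
  simp [List.getElem_rotate, shiftn, hf.map_mod_nat]

lemma exists_shiftn_eq_upperMech (hq : 0 < q) (hpq : p.Coprime q) :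
    ∃ i < q, shiftn i (lowerMech ((p : ℝ) / q)) = upperMech ((p : ℝ) / q) := by
  have hρ : 0 ≤ (p : ℝ) / q := by positivity
  have hq' : (0 : ℝ) < q := by positivity
  obtain ⟨i, hi, -, hmod⟩ := exists_mul_mod_eq_pred hpq hq (q - 1) (by omega)
  refine ⟨i, by omega, eq_of_psum_eq fun n => ?_⟩
  rw [psum_upperMech hρ]
  refine le_antisymm (psum_shiftn_lowerMech_le hρ i n) (Nat.ceil_le.2 ?_)
  have h1 := psum_add (lowerMech ((p : ℝ) / q)) i n
  rw [psum_lowerMech hρ, psum_lowerMech hρ, floorSum_div, floorSum_div] at h1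
  have h2 := Nat.lt_mul_div_succ ((i + n) * p) hq
  have h3 := Nat.mod_add_div (i * p) q
  rw [h1] at h2
  have h4 : n * p ≤ psum (shiftn i (lowerMech ((p : ℝ) / q))) n * q := by
    rw [hmod] at h3
    nlinarith [Nat.sub_add_cancel hq]
  rw [← mul_div_assoc, div_le_iff₀ hq']
  exact_mod_cast h4

lemma upperMech_periodic (hq : 0 < q) (hpq : p.Coprime q) :
    Function.Periodic (upperMech ((p : ℝ) / q)) q := by
  obtain ⟨i, -, hi⟩ := exists_shiftn_eq_upperMech hq hpq
  rw [← hi]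
  intro j
  simp only [shiftn]
  rw [add_right_comm]
  exact lowerMech_periodic hq _

lemma maxCyc_christoffel (hq : 0 < q) (hpq : p.Coprime q) :
    maxCyc (christoffel p q) = (List.range q).map (upperMech ((p : ℝ) / q)) := by
  have hρ : 0 ≤ (p : ℝ) / q := by positivity
  unfold maxCyc
  rw [length_christoffel, christoffel_eq_map]
  refine foldl_max_eq _ _ (fun x hx => ?_) (list_nil_le _) (Or.inl ?_)
  · obtain ⟨i, -, rfl⟩ := List.mem_map.1 hx
    rw [rotate_map_range (lowerMech_periodic hq)]
    refine list_le_of_sum_take_le _ _ (by simp) fun n => ?_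
    rw [← List.map_take, ← List.map_take, List.take_range, ← psum_eq_list_sum, ← psum_eq_list_sum,
      psum_upperMech hρ]
    exact psum_shiftn_lowerMech_le hρ _ _
  · obtain ⟨i, hi, heq⟩ := exists_shiftn_eq_upperMech hq hpq
    exact List.mem_map.2 ⟨i, List.mem_range.2 hi, by
      rw [rotate_map_range (lowerMech_periodic hq), heq]⟩

lemma perSeq_map_range (hq : 0 < q) {f : ℕ → ℕ} (hf : Function.Periodic f q) :
    perSeq ((List.range q).map f) = f := by
  funext i
  have h1 : i % q < q := Nat.mod_lt _ hq
  simp [perSeq, List.getD, h1, hf.map_mod_nat]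

lemma plusSum_eq_ceilSum {n : ℕ} (hpq : p.Coprime q) (hnq : n < q) :
    plusSum ((p : ℝ) / q) n = ceilSum ((p : ℝ) / q) n := by
  have hq' : (0 : ℝ) < q := by have : 0 < q := by omega
                               positivity
  refine le_antisymm ?_ (ceilSum_le_plusSum _ _)
  unfold plusSum ceilSum
  split_ifs with hn
  · exact Nat.zero_le _
  refine Nat.lt_ceil.2 (lt_of_le_of_ne (Nat.floor_le (by positivity)) fun h => ?_)
  rw [← mul_div_assoc, eq_div_iff hq'.ne'] at h
  have h2 : q ∣ n * p := Dvd.intro_left _ (by exact_mod_cast h)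
  exact absurd (Nat.le_of_dvd (by omega) (hpq.symm.dvd_of_dvd_mul_right h2)) (by omega)

lemma wordSeq_christoffel (hq : 0 < q) (hpq : p.Coprime q) :
    wordSeq (wplus (maxCyc (christoffel p q))) (perSeq (christoffel p q))
      = plusMech ((p : ℝ) / q) := by
  rw [maxCyc_christoffel hq hpq, christoffel_eq_map, perSeq_map_range hq (lowerMech_periodic hq)]
  set ρ : ℝ := (p : ℝ) / q with hρ
  obtain ⟨m, rfl⟩ : ∃ m, q = m + 1 := ⟨q - 1, by omega⟩
  have hw : wplus ((List.range (m + 1)).map (upperMech ρ))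
      = (List.range m).map (upperMech ρ) ++ [upperMech ρ m + 1] := by
    simp [wplus, List.range_succ]
  funext i
  rw [wordSeq, hw]
  have hlen : ((List.range m).map (upperMech ρ) ++ [upperMech ρ m + 1]).length = m + 1 := by simp
  rw [hlen]
  split_ifs with hi
  · rcases Nat.lt_or_ge i m with him | him
    · have h1 := plusSum_eq_ceilSum (n := i) hpq (by omega)
      have h2 := plusSum_eq_ceilSum (n := i + 1) hpq (by omega)
      rw [List.getD_append _ _ _ _ (by simpa using him)]
      simp only [plusMech, diffSeq]
      rw [h1, h2]
      simp [List.getD, him, upperMech, diffSeq, hρ]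
    · obtain rfl : i = m := by omega
      have h1 := plusSum_eq_ceilSum (n := i) hpq (by omega)
      have h2 : (i + 1 : ℕ) * ρ = (p : ℕ) := by rw [hρ]; field_simp
      have h3 : ceilSum ρ i ≤ ceilSum ρ (i + 1) :=
        ceilSum_monotone (by rw [hρ]; positivity) (Nat.le_succ i)
      have h4 : ceilSum ρ (i + 1) = p := by rw [ceilSum, h2, Nat.ceil_natCast]
      have h5 : plusSum ρ (i + 1) = p + 1 := by
        rw [plusSum, if_neg (by omega), h2, Nat.floor_natCast]
      rw [List.getD_append_right _ _ _ _ (by simp)]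
      simp only [plusMech, upperMech, diffSeq, ← hρ, h5, h4] at h1 ⊢
      rw [h1]
      simp
      omega
  · obtain ⟨j, rfl⟩ : ∃ j, i = j + (m + 1) := ⟨i - (m + 1), by omega⟩
    rw [Nat.add_sub_cancel, ← lowerMech_periodic hq j]
    exact (congrFun (shiftn_plusMech ρ m) j).symm

lemma betaL_christoffel (hp : 0 < p) (hq : 0 < q) (hpq : p.Coprime q) :
    1 < betaL (christoffel p q) ∧
      valSeq (betaL (christoffel p q)) (upperMech ((p : ℝ) / q)) = 1 := by
  have h := exists_base_upperMech (ρ := (p : ℝ) / q) (by positivity)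
  have he : perSeq (maxCyc (christoffel p q)) = upperMech ((p : ℝ) / q) := by
    rw [maxCyc_christoffel hq hpq, perSeq_map_range hq (upperMech_periodic hq hpq)]
  unfold betaL
  rw [he]
  exact Classical.epsilon_spec h

lemma betaR_christoffel (hp : 0 < p) (hq : 0 < q) (hpq : p.Coprime q) :
    1 < betaR (christoffel p q) ∧
      valSeq (betaR (christoffel p q)) (plusMech ((p : ℝ) / q)) = 1 := by
  have h := exists_base_plusMech (ρ := (p : ℝ) / q) (by positivity)
  unfold betaR
  rw [wordSeq_christoffel hq hpq]
  exact Classical.epsilon_spec h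

lemma mem_Jint_christoffel_iff {β : ℝ} (hβ : 1 < β) (hp : 0 < p) (hq : 0 < q)
    (hpq : p.Coprime q) : β ∈ Jint (christoffel p q) ↔
      valSeq β (upperMech ((p : ℝ) / q)) ≤ 1 ∧ 1 ≤ valSeq β (plusMech ((p : ℝ) / q)) := by
  obtain ⟨hL, hL1⟩ := betaL_christoffel hp hq hpq
  obtain ⟨hR, hR1⟩ := betaR_christoffel hp hq hpq
  have hρ : 0 < (p : ℝ) / q := by positivity
  rw [valSeq_le_one_iff hβ hL (bddDigits_upperMech _) (upperMech_zero_pos hρ) hL1,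
    one_le_valSeq_iff hβ hR (bddDigits_plusMech hρ.le) plusMech_zero_pos hR1]
  rfl

lemma eq_of_valSeq_upperMech_eq {β r ρ : ℝ} (hβ : 1 < β) (hr : 0 < r) (hρ : 0 < ρ)
    (h : valSeq β (upperMech r) = valSeq β (upperMech ρ)) : r = ρ := by
  rcases lt_trichotomy r ρ with hlt | heq | hlt
  · exact absurd h (valSeq_upperMech_lt hβ hr.le hlt).ne
  · exact heq
  · exact absurd h (valSeq_upperMech_lt hβ hρ.le hlt).ne'

lemma mem_EL_iff {β : ℝ} : β ∈ EL ↔ 1 < β ∧ ∃ ρ, 0 < ρ ∧ valSeq β (upperMech ρ) = 1 := by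
  constructor
  · rintro (⟨hβ, hJ⟩ | ⟨s, hs, rfl⟩)
    · refine ⟨hβ, ?_⟩
      rcases slope_eq_or_isolated hβ with h | ⟨p, q, hp, hq, hpq, h1, h2⟩
      · exact h
      · exact absurd (mem_biUnion (mem_FareyExt_iff.2 ⟨p, q, hp, hq, hpq, rfl⟩)
          ((mem_Jint_christoffel_iff hβ hp hq hpq).2 ⟨h1.le, h2⟩)) hJ
    · obtain ⟨p, q, hp, hq, hpq, rfl⟩ := mem_FareyExt_iff.1 hs
      obtain ⟨h1, h2⟩ := betaL_christoffel hp hq hpq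
      exact ⟨h1, _, by positivity, h2⟩
  · rintro ⟨hβ, ρ, hρ, h1⟩
    by_cases hirr : Irrational ρ
    · refine Or.inl ⟨hβ, fun hJ => ?_⟩
      obtain ⟨s, hs, hJ⟩ := mem_iUnion₂.1 hJ
      obtain ⟨p, q, hp, hq, hpq, rfl⟩ := mem_FareyExt_iff.1 hs
      obtain ⟨h2, h3⟩ := (mem_Jint_christoffel_iff hβ hp hq hpq).1 hJ
      rcases lt_trichotomy ρ ((p : ℝ) / q) with h | h | h
      · linarith [valSeq_upperMech_lt hβ hρ.le h]
      · exact hirr ⟨(p : ℚ) / q, by rw [h]; push_cast; rfl⟩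
      · linarith [valSeq_plusMech_lt hβ (by positivity) h]
    · obtain ⟨p, q, hp, hq, hpq, rfl⟩ := exists_coprime_div hρ hirr
      obtain ⟨h2, h3⟩ := betaL_christoffel hp hq hpq
      refine Or.inr ⟨_, mem_FareyExt_iff.2 ⟨p, q, hp, hq, hpq, rfl⟩, le_antisymm ?_ ?_⟩
      · exact (one_le_valSeq_iff hβ h2 (bddDigits_upperMech _) (upperMech_zero_pos hρ) h3).1 h1.ge
      · exact (valSeq_le_one_iff hβ h2 (bddDigits_upperMech _) (upperMech_zero_pos hρ) h3).1 h1.le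

end MaxCyc

lemma not_countable_EL : ¬ EL.Countable := by
  intro h
  choose! B hB1 hB using fun ρ (hρ : (0 : ℝ) < ρ) => exists_base_upperMech hρ
  have hmaps : MapsTo B (Ioi 0) EL := fun ρ hρ => mem_EL_iff.2 ⟨hB1 ρ hρ, ρ, hρ, hB ρ hρ⟩
  have hinj : InjOn B (Ioi 0) := fun r hr ρ hρ heq =>
    eq_of_valSeq_upperMech_eq (hB1 r hr) hr hρ (by rw [hB r hr, heq, hB ρ hρ])
  have hcount : (Ioi (0 : ℝ)).Countable := hmaps.countable_of_injOn hinj h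
  exact absurd hcount (by
    rw [← Cardinal.le_aleph0_iff_set_countable, Cardinal.mk_Ioi_real]
    exact not_le.2 Cardinal.aleph0_lt_continuum)

section Dimension

/-- A set covered by quadratically many sets of exponentially small diameter has Hausdorff
dimension zero. -/
lemma dimH_eq_zero_of_cover {s : Set ℝ} {N : ℕ} {a C : ℝ} (ha : 1 < a) (hC : 0 ≤ C)
    (t : ∀ n : ℕ, Fin (N * (n + 1) ^ 2) → Set ℝ)
    (hdiam : ∀ n i, Metric.ediam (t n i) ≤ ENNReal.ofReal (C / a ^ n))
    (hcover : ∀ n, s ⊆ ⋃ i, t n i) : dimH s = 0 := by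
  have h0 : 0 < a := by linarith
  refine le_antisymm (le_of_forall_gt fun d hd => ?_) zero_le
  obtain ⟨d', hd'0, hd'⟩ := ENNReal.lt_iff_exists_nnreal_btwn.1 hd
  have hd'0 : (0 : ℝ) < d' := by exact_mod_cast hd'0
  refine lt_of_le_of_lt (dimH_le_of_hausdorffMeasure_ne_top (ne_of_lt ?_)) hd'
  have hr : Tendsto (fun n : ℕ => ENNReal.ofReal (C / a ^ n)) atTop (𝓝 0) := by
    simpa using ENNReal.tendsto_ofReal (tendsto_div_pow ha C)
  have hle := Measure.hausdorffMeasure_le_liminf_sum (d' : ℝ) s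
    (fun n : ℕ => ENNReal.ofReal (C / a ^ n)) hr t (Eventually.of_forall hdiam)
    (Eventually.of_forall hcover)
  set r : ℝ := (a ^ (d' : ℝ))⁻¹ with hrdef
  have hr1 : r < 1 := inv_lt_one_of_one_lt₀ (Real.one_lt_rpow ha hd'0)
  have hr0 : 0 ≤ r := by positivity
  have hlim : Tendsto (fun n : ℕ => (N * C ^ (d' : ℝ)) * ((n : ℝ) ^ 2 * r ^ n
      + 2 * ((n : ℝ) ^ 1 * r ^ n) + (n : ℝ) ^ 0 * r ^ n)) atTop (𝓝 0) := by
    have h := fun k => tendsto_pow_const_mul_const_pow_of_lt_one k hr0 hr1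
    simpa using (((h 2).add ((h 1).const_mul 2)).add (h 0)).const_mul (N * C ^ (d' : ℝ))
  have hsum : ∀ n, ∑ i, Metric.ediam (t n i) ^ (d' : ℝ) ≤ ENNReal.ofReal
      ((N * C ^ (d' : ℝ)) * ((n : ℝ) ^ 2 * r ^ n
      + 2 * ((n : ℝ) ^ 1 * r ^ n) + (n : ℝ) ^ 0 * r ^ n)) := fun n => by
    have hpow : (C / a ^ n) ^ (d' : ℝ) = C ^ (d' : ℝ) * r ^ n := by
      rw [Real.div_rpow hC (by positivity), hrdef, inv_pow, div_eq_mul_inv, ← Real.rpow_natCast,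
        ← Real.rpow_natCast, ← Real.rpow_mul h0.le, ← Real.rpow_mul h0.le, mul_comm (n : ℝ)]
    calc ∑ i, Metric.ediam (t n i) ^ (d' : ℝ)
        ≤ ∑ _i : Fin (N * (n + 1) ^ 2), ENNReal.ofReal ((C / a ^ n) ^ (d' : ℝ)) := by
          refine Finset.sum_le_sum fun i _ => ?_
          rw [← ENNReal.ofReal_rpow_of_nonneg (by positivity) hd'0.le]
          exact ENNReal.rpow_le_rpow (hdiam n i) hd'0.le
      _ = ENNReal.ofReal ((N * (n + 1) ^ 2 : ℕ) * (C / a ^ n) ^ (d' : ℝ)) := by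
          rw [Finset.sum_const, Finset.card_univ, Fintype.card_fin, nsmul_eq_mul,
            ENNReal.ofReal_mul (by positivity), ENNReal.ofReal_natCast]
      _ = _ := by
          rw [hpow]
          congr 1
          push_cast
          ring
  have hzero : Tendsto (fun n => ∑ i, Metric.ediam (t n i) ^ (d' : ℝ)) atTop (𝓝 0) := by
    refine tendsto_of_tendsto_of_tendsto_of_le_of_le tendsto_const_nhds
      (by simpa using ENNReal.tendsto_ofReal hlim) (fun n => zero_le) hsum
  rw [hzero.liminf_eq] at hle
  exact hle.trans_lt ENNReal.zero_lt_top

/-- The sum of the first digit sums of `upperMech ρ`. -/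
noncomputable def ceilIndex (ρ : ℝ) (n : ℕ) : ℕ := ∑ k ∈ Finset.range (n + 1), ceilSum ρ k

lemma ceilIndex_le {ρ : ℝ} {N : ℕ} (hρ : ρ ≤ N) (n : ℕ) : ceilIndex ρ n ≤ N * (n * (n + 1)) := by
  have h : ∀ k ∈ Finset.range (n + 1), ceilSum ρ k ≤ n * N := fun k hk => by
    refine Nat.ceil_le.2 ?_
    have hk : (k : ℝ) ≤ n := by exact_mod_cast Nat.lt_succ_iff.1 (Finset.mem_range.1 hk)
    have : (k : ℝ) * ρ ≤ k * N := by gcongr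
    have : (k : ℝ) * N ≤ n * N := by gcongr
    push_cast
    linarith
  have h1 := Finset.sum_le_card_nsmul _ _ _ h
  rw [Finset.card_range, smul_eq_mul] at h1
  exact h1.trans_eq (by ring)

lemma upperMech_agree_of_ceilIndex_eq {r ρ : ℝ} {n : ℕ} (h : ceilIndex r n = ceilIndex ρ n) :
    ∀ i < n, upperMech r i = upperMech ρ i := by
  wlog hle : r ≤ ρ generalizing r ρ
  · exact fun i hi => (this h.symm (le_of_not_ge hle) i hi).symm
  have hk : ∀ k ∈ Finset.range (n + 1), ceilSum r k = ceilSum ρ k :=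
    (Finset.sum_eq_sum_iff_of_le fun k _ => by unfold ceilSum; gcongr).1 h
  intro i hi
  unfold upperMech diffSeq
  rw [hk i (Finset.mem_range.2 (by omega)), hk (i + 1) (Finset.mem_range.2 (by omega))]

lemma slope_le {β ρ : ℝ} (hβ : 1 < β) (hρ : 0 < ρ) (h1 : valSeq β (upperMech ρ) = 1) : ρ ≤ β := by
  have h := div_le_valSeq hβ (bddDigits_upperMech ρ) (le_psum_upperMech hρ.le)
  rw [h1, div_le_one (by linarith)] at h
  linarith

lemma base_sub_le {β β' ρ ρ' a : ℝ} {N n : ℕ} (ha : 1 < a) (hβ : a ≤ β) (hle : β ≤ β')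
    (hN : β' ≤ N) (hρ' : 0 < ρ') (h1 : valSeq β (upperMech ρ) = 1)
    (h1' : valSeq β' (upperMech ρ') = 1) (h : ceilIndex ρ n = ceilIndex ρ' n) :
    β' - β ≤ N ^ 2 * (N / (a - 1)) / a ^ n := by
  have hβ1 : 1 < β := by linarith
  have hβ0 : 0 < β := by linarith
  have hβ'0 : 0 < β' := by linarith
  have hN0 : (0 : ℝ) < N := by linarith
  have hρ'N : ρ' ≤ N := (slope_le (by linarith) hρ' h1').trans hN
  have hD : ∀ i, shiftn n (upperMech ρ') i ≤ N := fun i =>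
    (upperMech_le ρ' _).trans (Nat.ceil_le.2 hρ'N)
  have h2 := valSeq_sub_of_agree hβ1 (bddDigits_upperMech ρ') (bddDigits_upperMech ρ)
    (upperMech_agree_of_ceilIndex_eq h.symm)
  rw [h1] at h2
  have h3 : valSeq β (upperMech ρ') - 1 ≤ N / (a - 1) / a ^ n := by
    rw [h2]
    have h4 := valSeq_le_div hβ1 hD
    have h5 := valSeq_nonneg hβ1 (shiftn n (upperMech ρ))
    have h6 : (N : ℝ) / (β - 1) ≤ N / (a - 1) := by
      have : 0 < a - 1 := by linarith
      gcongr
    have h7 : 0 < a - 1 := by linarith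
    have h8 : a ^ n ≤ β ^ n := by gcongr
    have h9 : 0 < a ^ n := by positivity
    calc _ ≤ (N / (a - 1)) / β ^ n := by gcongr; linarith
      _ ≤ _ := by gcongr
  have h4 := le_valSeq_sub hβ1 hle (bddDigits_upperMech ρ') 0
  have h5 : (1 : ℝ) ≤ upperMech ρ' 0 := by exact_mod_cast upperMech_zero_pos hρ'
  rw [h1', zero_add, pow_one, pow_one] at h4
  have h6 : (β' - β) / (β * β') ≤ upperMech ρ' 0 / β - upperMech ρ' 0 / β' := by
    have : (upperMech ρ' 0 : ℝ) / β - upperMech ρ' 0 / β'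
        = upperMech ρ' 0 * ((β' - β) / (β * β')) := by field_simp
    rw [this]
    exact le_mul_of_one_le_left (div_nonneg (by linarith) (by positivity)) h5
  have h7 : (β' - β) / (N : ℝ) ^ 2 ≤ (β' - β) / (β * β') := by
    refine div_le_div_of_nonneg_left (by linarith) (by positivity) ?_
    nlinarith
  have h8 := (h7.trans h6).trans (h4.trans h3)
  rw [div_le_iff₀ (by positivity)] at h8
  calc β' - β ≤ _ := h8
    _ = _ := by ring

lemma dimH_EL_inter_Icc {a : ℝ} (ha : 1 < a) (N : ℕ) : dimH (EL ∩ Icc a N) = 0 := by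
  rcases N.eq_zero_or_pos with rfl | hN
  · rw [Icc_eq_empty (by push_cast; linarith), inter_empty, dimH_empty]
  have ha1 : 0 < a - 1 := by linarith
  refine dimH_eq_zero_of_cover (C := N ^ 2 * (N / (a - 1))) ha (by positivity)
    (fun n (i : Fin (N * (n + 1) ^ 2)) => {β | β ∈ Icc a N ∧ ∃ ρ, 0 < ρ ∧
      valSeq β (upperMech ρ) = 1 ∧ ceilIndex ρ n = i}) (fun n i => ?_) fun n β hβ => ?_
  · refine Metric.ediam_le fun x hx y hy => ?_
    wlog hxy : x ≤ y generalizing x y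
    · rw [edist_comm]
      exact this y hy x hx (le_of_not_ge hxy)
    obtain ⟨hxI, ρ, hρ, h1, hi⟩ := hx
    obtain ⟨hyI, ρ', hρ', h1', hi'⟩ := hy
    rw [edist_comm, edist_dist, Real.dist_eq, abs_of_nonneg (sub_nonneg.2 hxy)]
    exact ENNReal.ofReal_le_ofReal
      (base_sub_le ha hxI.1 hxy hyI.2 hρ' h1 h1' (hi.trans hi'.symm))
  · obtain ⟨hβ1, ρ, hρ, h1⟩ := mem_EL_iff.1 hβ.1
    have h2 := ceilIndex_le ((slope_le hβ1 hρ h1).trans hβ.2.2) n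
    refine mem_iUnion.2 ⟨⟨ceilIndex ρ n, h2.trans_lt ?_⟩, hβ.2, ρ, hρ, h1, rfl⟩
    nlinarith

lemma dimH_EL : dimH EL = 0 := by
  have h : EL ⊆ ⋃ m : ℕ, ⋃ N : ℕ, EL ∩ Icc (1 + 1 / ((m : ℝ) + 1)) N := fun β hβ => by
    have hβ1 : 0 < β - 1 := by linarith [(mem_EL_iff.1 hβ).1]
    obtain ⟨m, hm⟩ := exists_nat_one_div_lt hβ1
    obtain ⟨N, hN⟩ := exists_nat_gt β
    exact mem_iUnion₂.2 ⟨m, N, hβ, by linarith, hN.le⟩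
  refine le_antisymm ((dimH_mono h).trans ?_) zero_le
  simp only [dimH_iUnion]
  refine iSup₂_le fun m N => (dimH_EL_inter_Icc ?_ N).le
  have : 0 < 1 / ((m : ℝ) + 1) := by positivity
  linarith

end Dimension

/-- The set `E_L` is uncountable, has Hausdorff dimension zero, and for
every `β > 1` the bifurcation set `E_β` contains no isolated points iff `β ∈ E_L`. -/
theorem EL_uncountable_dim_zero_no_isolated :
    ¬ EL.Countable ∧ dimH EL = 0 ∧
      ∀ β : ℝ, 1 < β → ((∀ t ∈ Ebif β, AccPt t (𝓟 (Ebif β))) ↔ β ∈ EL) := by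
  refine ⟨not_countable_EL, dimH_EL, fun β hβ => ⟨fun h => ?_, fun h t ht => ?_⟩⟩
  · rcases slope_eq_or_isolated hβ with h1 | ⟨p, q, hp, hq, hpq, h1, h2⟩
    · exact mem_EL_iff.2 ⟨hβ, h1⟩
    · obtain ⟨t, ht, hacc⟩ := exists_isolated hβ hp hq hpq h1 h2
      exact absurd (h t ht) hacc
  · obtain ⟨-, ρ, hρ, h1⟩ := mem_EL_iff.1 h
    exact accPt_Ebif_of_upperMech hβ hρ h1 ht
end

section
/- The critical value function τ : β ↦ τ(β) is left continuous at every point of (1,∞), has right-hand limits at every point of (1,∞), and its set of discontinuity points is countably infinite. -/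
open Set Filter MeasureTheory Topology

/-- A family of reals that is bounded above and in which every member is at most `ρ < 1` times
another member consists of nonpositive numbers. -/
lemma nonpos_of_forall_exists_le_mul {ι : Type*} {f : ι → ℝ} {ρ : ℝ} (h0 : 0 ≤ ρ) (h1 : ρ < 1)
    (hb : BddAbove (range f)) (h : ∀ i, ∃ j, f i ≤ ρ * f j) (i : ι) : f i ≤ 0 := by
  have : Nonempty ι := ⟨i⟩
  have hS : ⨆ i, f i ≤ ρ * ⨆ i, f i := ciSup_le fun i => by
    obtain ⟨j, hj⟩ := h i
    exact hj.trans (mul_le_mul_of_nonneg_left (le_ciSup hb j) h0)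
  have := le_ciSup hb i
  nlinarith

section SelfSimilar

variable {x : (ℕ → Fin 2) → ℝ} {c : Fin 2 → ℝ} {ρ : ℝ}

lemma abs_sub_le_of_selfSimilar (hρ0 : 0 < ρ) (hρ : ρ ≤ 1 / 3) (hb : ∃ B, ∀ ω, |x ω| ≤ B)
    (hrec : ∀ ω, x ω = c (ω 0) + ρ * x (fun i => ω (i + 1))) (ω ω' : ℕ → Fin 2) :
    |x ω - x ω'| ≤ 3 / 2 * |c 0 - c 1| := by
  obtain ⟨B, hB⟩ := hb
  have key := nonpos_of_forall_exists_le_mul (ι := (ℕ → Fin 2) × (ℕ → Fin 2))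
    (f := fun p => |x p.1 - x p.2| - 3 / 2 * |c 0 - c 1|) hρ0.le (by linarith) ?_ ?_ (ω, ω')
  · simpa using key
  · refine ⟨2 * B, ?_⟩
    rintro _ ⟨p, rfl⟩
    have h1 := abs_sub (x p.1) (x p.2)
    have := hB p.1
    have := hB p.2
    have := abs_nonneg (c 0 - c 1)
    dsimp only
    linarith
  · rintro ⟨u, v⟩
    refine ⟨(fun i => u (i + 1), fun i => v (i + 1)), ?_⟩
    dsimp only
    rw [hrec u, hrec v]
    set X := x fun i => u (i + 1)
    set Y := x fun i => v (i + 1)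
    have hc : |c (u 0) - c (v 0)| ≤ |c 0 - c 1| := by
      generalize u 0 = a
      generalize v 0 = b
      fin_cases a <;> fin_cases b <;> simp [abs_sub_comm]
    have h1 : |c (u 0) + ρ * X - (c (v 0) + ρ * Y)| ≤ |c (u 0) - c (v 0)| + ρ * |X - Y| := by
      have h2 := abs_add_le (c (u 0) - c (v 0)) (ρ * (X - Y))
      rw [abs_mul, abs_of_pos hρ0] at h2
      rwa [show c (u 0) + ρ * X - (c (v 0) + ρ * Y) = c (u 0) - c (v 0) + ρ * (X - Y) by ring]
    nlinarith [abs_nonneg (c 0 - c 1)]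

lemma le_abs_sub_of_selfSimilar (hρ0 : 0 < ρ) (hρ : ρ ≤ 1 / 3) (hb : ∃ B, ∀ ω, |x ω| ≤ B)
    (hrec : ∀ ω, x ω = c (ω 0) + ρ * x (fun i => ω (i + 1))) (n : ℕ) :
    ∀ ω ω' : ℕ → Fin 2, (∀ i < n, ω i = ω' i) → ω n ≠ ω' n →
      ρ ^ n * (|c 0 - c 1| / 2) ≤ |x ω - x ω'| := by
  induction n with
  | zero =>
    intro ω ω' _ hne
    have h1 := abs_sub_le_of_selfSimilar hρ0 hρ hb hrec (fun i => ω (i + 1)) (fun i => ω' (i + 1))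
    rw [hrec ω, hrec ω']
    set X := x fun i => ω (i + 1)
    set Y := x fun i => ω' (i + 1)
    have hc : |c (ω 0) - c (ω' 0)| = |c 0 - c 1| := by
      revert hne
      generalize ω 0 = a
      generalize ω' 0 = b
      fin_cases a <;> fin_cases b <;> simp [abs_sub_comm]
    have h2 : |c (ω 0) - c (ω' 0)| - ρ * |X - Y| ≤ |c (ω 0) + ρ * X - (c (ω' 0) + ρ * Y)| := by
      have h3 := abs_sub_abs_le_abs_sub (c (ω 0) - c (ω' 0)) (-(ρ * (X - Y)))
      rw [abs_neg, abs_mul, abs_of_pos hρ0] at h3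
      rwa [show c (ω 0) + ρ * X - (c (ω' 0) + ρ * Y) = c (ω 0) - c (ω' 0) - -(ρ * (X - Y)) by
        ring]
    nlinarith [abs_nonneg (c 0 - c 1), abs_nonneg (X - Y)]
  | succ n ih =>
    intro ω ω' heq hne
    have h1 := ih (fun i => ω (i + 1)) (fun i => ω' (i + 1))
      (fun i hi => heq (i + 1) (by omega)) hne
    rw [hrec ω, hrec ω', heq 0 (by omega), add_sub_add_left_eq_sub, ← mul_sub, abs_mul,
      abs_of_pos hρ0, pow_succ']
    nlinarith

/-- A self-similar set generated by two distinct homotheties of the same small ratio has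
positive Hausdorff dimension. -/
lemma dimH_range_ne_zero_of_selfSimilar (hρ0 : 0 < ρ) (hρ : ρ ≤ 1 / 3) (hc : c 0 ≠ c 1)
    (hb : ∃ B, ∀ ω, |x ω| ≤ B)
    (hrec : ∀ ω, x ω = c (ω 0) + ρ * x (fun i => ω (i + 1))) : dimH (range x) ≠ 0 := by
  have hD : 0 < |c 0 - c 1| := abs_pos.2 (sub_ne_zero.2 hc)
  set D := |c 0 - c 1| with hDdef
  have hsep := le_abs_sub_of_selfSimilar hρ0 hρ hb hrec
  have hfirst : ∀ ω ω' : ℕ → Fin 2, ω ≠ ω' → ∃ n, (∀ i < n, ω i = ω' i) ∧ ω n ≠ ω' n := by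
    intro ω ω' hne
    have hex : ∃ n, ω n ≠ ω' n := by
      by_contra! h
      exact hne (funext h)
    classical
    exact ⟨Nat.find hex, fun i hi => not_not.1 (Nat.find_min hex hi), Nat.find_spec hex⟩
  have hinj : Function.Injective x := by
    intro ω ω' h
    by_contra hne
    obtain ⟨n, h1, h2⟩ := hfirst ω ω' hne
    have := hsep n ω ω' h1 h2
    rw [h, sub_self, abs_zero] at this
    have : 0 < ρ ^ n * (D / 2) := by positivity
    linarith
  set r : ℝ := Real.log 2 / Real.log ρ⁻¹ with hr
  have hlog : 0 < Real.log ρ⁻¹ := Real.log_pos (by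
    rw [one_lt_inv₀ hρ0]
    linarith)
  have hrpos : 0 < r := div_pos (Real.log_pos (by norm_num)) hlog
  have hρr : ρ ^ r = 2⁻¹ := by
    rw [Real.rpow_def_of_pos hρ0, hr, Real.log_inv]
    have : Real.log ρ ≠ 0 := by
      rw [Real.log_inv] at hlog
      linarith
    rw [show Real.log ρ * (Real.log 2 / -Real.log ρ) = -Real.log 2 by field_simp, Real.exp_neg,
      Real.exp_log (by norm_num)]
  let g : ℝ → ℝ := fun y => Real.ofDigits (Function.invFun x y)
  have hg : ∀ ω, g (x ω) = Real.ofDigits ω := fun ω => by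
    simp only [g, Function.leftInverse_invFun hinj ω]
  have hHolder : HolderOnWith (Real.toNNReal ((2 / D) ^ r)) (Real.toNNReal r) g (range x) := by
    rintro _ ⟨ω, rfl⟩ _ ⟨ω', rfl⟩
    rw [hg, hg, Real.coe_toNNReal r hrpos.le, edist_dist, edist_dist,
      ENNReal.ofReal_rpow_of_nonneg dist_nonneg hrpos.le, ← ENNReal.ofReal_coe_nnreal,
      Real.coe_toNNReal _ (by positivity), ← ENNReal.ofReal_mul (by positivity)]
    refine ENNReal.ofReal_le_ofReal ?_
    rw [← Real.mul_rpow (by positivity) dist_nonneg]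
    by_cases hne : ω = ω'
    · subst hne
      rw [dist_self]
      positivity
    obtain ⟨n, h1, h2⟩ := hfirst ω ω' hne
    have h3 := hsep n ω ω' h1 h2
    have h4 : ρ ^ n ≤ 2 / D * dist (x ω) (x ω') := by
      rw [Real.dist_eq, div_mul_eq_mul_div, le_div_iff₀ hD]
      linarith
    calc dist (Real.ofDigits ω) (Real.ofDigits ω') ≤ (((2 : ℕ) : ℝ) ^ n)⁻¹ :=
          Real.abs_ofDigits_sub_ofDigits_le h1
      _ = (ρ ^ n) ^ r := by
          rw [← Real.rpow_natCast, ← Real.rpow_natCast, ← Real.rpow_mul hρ0.le, mul_comm,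
            Real.rpow_mul hρ0.le, hρr, Real.inv_rpow (by norm_num)]
          norm_num
      _ ≤ _ := Real.rpow_le_rpow (by positivity) h4 hrpos.le
  have hdim := hHolder.dimH_image_le (Real.toNNReal_pos.2 hrpos)
  have himg : Icc (0 : ℝ) 1 ⊆ g '' range x := by
    intro y hy
    obtain ⟨ω, -, hω⟩ := Real.ofDigits_SurjOn (b := 2) (by norm_num) hy
    exact ⟨x ω, ⟨ω, rfl⟩, (hg ω).trans hω⟩
  have hone : dimH (Icc (0 : ℝ) 1) = 1 := by
    have := Real.dimH_of_mem_nhds (Icc_mem_nhds (show (0 : ℝ) < 1 / 2 by norm_num)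
      (show (1 / 2 : ℝ) < 1 by norm_num))
    simpa using this
  intro h0
  have := (dimH_mono himg).trans hdim
  rw [h0, hone, ENNReal.zero_div] at this
  exact absurd this (by simp)

end SelfSimilar

/-- The affine map `s ↦ c + s / β ^ n` sends `[l, h]` into itself and is an inverse branch of
`(Tbeta β)^[n]` there, along which all orbit points are at least `t`. -/
structure IsBranch (β t l h : ℝ) (n : ℕ) (c : ℝ) : Prop where
  pos : 0 < n
  mem : ∀ s ∈ Icc l h, c + s / β ^ n ∈ Icc l h
  iterate_eq : ∀ s ∈ Icc l h, (Tbeta β)^[n] (c + s / β ^ n) = s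
  le_iterate : ∀ s ∈ Icc l h, ∀ k < n, t ≤ (Tbeta β)^[k] (c + s / β ^ n)

lemma IsBranch.comp {β t l h c₁ c₂ : ℝ} {n₁ n₂ : ℕ}
    (h₁ : IsBranch β t l h n₁ c₁) (h₂ : IsBranch β t l h n₂ c₂) :
    IsBranch β t l h (n₁ + n₂) (c₁ + c₂ / β ^ n₁) := by
  have e : ∀ s, c₁ + c₂ / β ^ n₁ + s / β ^ (n₁ + n₂) = c₁ + (c₂ + s / β ^ n₂) / β ^ n₁ := by
    intro s
    rw [pow_add, add_div, div_div, mul_comm (β ^ n₂), add_assoc]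
  refine ⟨Nat.add_pos_left h₁.pos _, fun s hs => ?_, fun s hs => ?_, fun s hs k hk => ?_⟩
  · rw [e]
    exact h₁.mem _ (h₂.mem s hs)
  · rw [e, add_comm n₁, Function.iterate_add_apply, h₁.iterate_eq _ (h₂.mem s hs),
      h₂.iterate_eq s hs]
  · rw [e]
    obtain hk' | hk' := lt_or_ge k n₁
    · exact h₁.le_iterate _ (h₂.mem s hs) k hk'
    · obtain ⟨m, rfl⟩ := Nat.exists_eq_add_of_le' hk'
      rw [Function.iterate_add_apply, h₁.iterate_eq _ (h₂.mem s hs)]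
      exact h₂.le_iterate s hs m (by omega)

/-- Two distinct inverse branches of the same order force positive dimension of the
survivor set. -/
lemma dimH_survivor_ne_zero_of_isBranch {β t l h : ℝ} {c : Fin 2 → ℝ} {n : ℕ}
    (hbr : ∀ i, IsBranch β t l h n (c i)) (hlh : l ≤ h) (hsub : Icc l h ⊆ Ico 0 1)
    (hc : c 0 ≠ c 1) (hβ : 1 < β) (h3 : 3 ≤ β ^ n) : dimH (survivor β t) ≠ 0 := by
  set ρ : ℝ := (β ^ n)⁻¹ with hρdef
  have hρ0 : 0 < ρ := by positivity
  have hρ : ρ ≤ 1 / 3 := by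
    rw [hρdef, one_div]
    exact inv_anti₀ (by norm_num) h3
  have hcb : ∀ i, ‖c i‖ ≤ ‖c 0‖ + ‖c 1‖ := by
    intro i
    fin_cases i <;> simp
  have hgeo : Summable fun k => (‖c 0‖ + ‖c 1‖) * ρ ^ k :=
    (summable_geometric_of_lt_one hρ0.le (by linarith)).mul_left _
  have hle : ∀ (ω : ℕ → Fin 2) k, ‖c (ω k) * ρ ^ k‖ ≤ (‖c 0‖ + ‖c 1‖) * ρ ^ k := by
    intro ω k
    rw [norm_mul, norm_pow, Real.norm_of_nonneg hρ0.le]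
    exact mul_le_mul_of_nonneg_right (hcb _) (by positivity)
  have hsum : ∀ ω : ℕ → Fin 2, Summable fun k => c (ω k) * ρ ^ k := fun ω =>
    Summable.of_norm_bounded hgeo (hle ω)
  let x : (ℕ → Fin 2) → ℝ := fun ω => ∑' k, c (ω k) * ρ ^ k
  have hb : ∀ ω, |x ω| ≤ ∑' k, (‖c 0‖ + ‖c 1‖) * ρ ^ k := fun ω =>
    tsum_of_norm_bounded hgeo.hasSum (hle ω)
  have hrec : ∀ ω, x ω = c (ω 0) + ρ * x (fun i => ω (i + 1)) := by
    intro ω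
    simp only [x]
    rw [(hsum ω).tsum_eq_zero_add, ← tsum_mul_left]
    simp only [pow_zero, mul_one, pow_succ]
    congr 2
    ext k
    ring
  have hrec' : ∀ ω, x ω = c (ω 0) + x (fun i => ω (i + 1)) / β ^ n := by
    intro ω
    rw [hrec ω, hρdef]
    ring
  set B := ∑' k, (‖c 0‖ + ‖c 1‖) * ρ ^ k
  have hupper : ∀ ω, x ω ≤ h := by
    intro ω
    have := nonpos_of_forall_exists_le_mul (f := fun ω => x ω - h) hρ0.le (by linarith)
      ⟨B - h, ?_⟩ (fun ω => ⟨fun i => ω (i + 1), ?_⟩) ω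
    · simpa using this
    · rintro _ ⟨ω, rfl⟩
      have := (le_abs_self _).trans (hb ω)
      dsimp only
      linarith
    · have := ((hbr (ω 0)).mem h ⟨hlh, le_rfl⟩).2
      rw [hrec ω]
      rw [div_eq_inv_mul] at this
      linarith
  have hlower : ∀ ω, l ≤ x ω := by
    intro ω
    have := nonpos_of_forall_exists_le_mul (f := fun ω => l - x ω) hρ0.le (by linarith)
      ⟨B + l, ?_⟩ (fun ω => ⟨fun i => ω (i + 1), ?_⟩) ω
    · simpa using this
    · rintro _ ⟨ω, rfl⟩
      have := (neg_le_abs _).trans (hb ω)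
      dsimp only
      linarith
    · have := ((hbr (ω 0)).mem l ⟨le_rfl, hlh⟩).1
      rw [hrec ω]
      rw [div_eq_inv_mul] at this
      linarith
  have horbit : ∀ k ω, t ≤ (Tbeta β)^[k] (x ω) := by
    intro k
    induction k using Nat.strong_induction_on with
    | _ k ih =>
      intro ω
      have hmem : x (fun i => ω (i + 1)) ∈ Icc l h := ⟨hlower _, hupper _⟩
      rw [hrec' ω]
      obtain hk | hk := lt_or_ge k n
      · exact (hbr _).le_iterate _ hmem k hk
      · obtain ⟨m, rfl⟩ := Nat.exists_eq_add_of_le' hk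
        rw [Function.iterate_add_apply, (hbr _).iterate_eq _ hmem]
        exact ih m (by have := (hbr 0).pos; omega) _
  have hrange : range x ⊆ survivor β t := by
    rintro _ ⟨ω, rfl⟩
    exact ⟨hsub ⟨hlower ω, hupper ω⟩, fun k => horbit k ω⟩
  intro h0
  refine dimH_range_ne_zero_of_selfSimilar hρ0 hρ hc ⟨B, hb⟩ hrec ?_
  exact le_antisymm ((dimH_mono hrange).trans h0.le) zero_le

/-- Two non-commuting inverse branches force positive dimension of the survivor set. -/
lemma dimH_survivor_ne_zero {β t l h c₁ c₂ : ℝ} {n₁ n₂ : ℕ}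
    (h₁ : IsBranch β t l h n₁ c₁) (h₂ : IsBranch β t l h n₂ c₂) (hlh : l ≤ h)
    (hsub : Icc l h ⊆ Ico 0 1) (hne : c₁ + c₂ / β ^ n₁ ≠ c₂ + c₁ / β ^ n₂) (hβ : 1 < β)
    (h3 : 3 ≤ β ^ (n₁ + n₂)) : dimH (survivor β t) ≠ 0 := by
  refine dimH_survivor_ne_zero_of_isBranch
    (c := ![c₁ + c₂ / β ^ n₁, c₂ + c₁ / β ^ n₂]) (n := n₁ + n₂) ?_ hlh hsub (by simpa using hne)
    hβ h3
  intro i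
  fin_cases i
  · exact h₁.comp h₂
  · simpa [add_comm n₁] using h₂.comp h₁

/-- The value `(w s)_β` of a finite word followed by a tail of value `s`. -/
noncomputable def wordVal (β : ℝ) : List ℕ → ℝ → ℝ
  | [], s => s
  | d :: w, s => (d + wordVal β w s) / β

lemma wordVal_eq_add (β : ℝ) (w : List ℕ) (s r : ℝ) :
    wordVal β w s = wordVal β w r + (s - r) / β ^ w.length := by
  induction w with
  | nil => simp [wordVal]
  | cons d w ih =>
    rw [wordVal, wordVal, ih, List.length_cons, pow_succ, ← div_div]
    ring

lemma wordVal_mono {β : ℝ} (hβ : 1 < β) (w : List ℕ) {s r : ℝ} (h : s ≤ r) :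
    wordVal β w s ≤ wordVal β w r := by
  rw [wordVal_eq_add β w r s]
  have : 0 ≤ (r - s) / β ^ w.length := div_nonneg (by linarith) (by positivity)
  linarith

lemma continuousAt_wordVal {β : ℝ} (hβ : 1 < β) (w : List ℕ) (s : ℝ) :
    ContinuousAt (fun b => wordVal b w s) β := by
  induction w with
  | nil => exact continuousAt_const
  | cons d w ih =>
    simp only [wordVal]
    exact (continuousAt_const.add ih).div continuousAt_id (by simp; linarith)

lemma iterate_wordVal {β t s : ℝ} (hβ : 1 < β) (ht : 0 ≤ t) (hs : s ∈ Ico (0 : ℝ) 1)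
    (w : List ℕ) (hw : ∀ v, v <:+ w → v ≠ [] → t ≤ wordVal β v s ∧ wordVal β v s < 1) :
    (Tbeta β)^[w.length] (wordVal β w s) = s ∧
      ∀ k < w.length, t ≤ (Tbeta β)^[k] (wordVal β w s) := by
  induction w with
  | nil => simp [wordVal]
  | cons d w ih =>
    have hw' : ∀ v, v <:+ w → v ≠ [] → t ≤ wordVal β v s ∧ wordVal β v s < 1 :=
      fun v hv => hw v (hv.trans (List.suffix_cons d w))
    have hmem : wordVal β w s ∈ Ico (0 : ℝ) 1 := by
      by_cases hnil : w = []
      · subst hnil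
        exact hs
      · have := hw' w (List.suffix_refl w) hnil
        exact ⟨ht.trans this.1, this.2⟩
    have hT : Tbeta β (wordVal β (d :: w) s) = wordVal β w s := by
      rw [Tbeta, wordVal, mul_div_cancel₀ _ (by linarith), Int.fract_natCast_add]
      exact Int.fract_eq_self.2 hmem
    obtain ⟨h1, h2⟩ := ih hw'
    refine ⟨by rw [List.length_cons, Function.iterate_succ_apply, hT, h1], fun k hk => ?_⟩
    cases k with
    | zero => exact (hw _ (List.suffix_refl _) (by simp)).1
    | succ k =>
      rw [Function.iterate_succ_apply, hT]
      exact h2 k (by simpa using hk)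

lemma isBranch_wordVal {β t l h : ℝ} {w : List ℕ} (hβ : 1 < β) (ht : 0 ≤ t)
    (hsub : Icc l h ⊆ Ico 0 1) (hw0 : w ≠ [])
    (hw : ∀ v, v <:+ w → v ≠ [] → t ≤ wordVal β v l ∧ wordVal β v h < 1)
    (hl : l ≤ wordVal β w l) (hh : wordVal β w h ≤ h) :
    IsBranch β t l h w.length (wordVal β w 0) := by
  have e : ∀ s, wordVal β w 0 + s / β ^ w.length = wordVal β w s := by
    intro s
    rw [wordVal_eq_add β w s 0, sub_zero]
  have hit : ∀ s ∈ Icc l h, (Tbeta β)^[w.length] (wordVal β w s) = s ∧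
      ∀ k < w.length, t ≤ (Tbeta β)^[k] (wordVal β w s) := fun s hs =>
    iterate_wordVal hβ ht (hsub hs) w fun v hv hv0 =>
      ⟨(hw v hv hv0).1.trans (wordVal_mono hβ v hs.1),
        (wordVal_mono hβ v hs.2).trans_lt (hw v hv hv0).2⟩
  refine ⟨List.length_pos_iff.2 hw0, fun s hs => ?_, fun s hs => ?_, fun s hs => ?_⟩
  · rw [e]
    exact ⟨hl.trans (wordVal_mono hβ w hs.1), (wordVal_mono hβ w hs.2).trans hh⟩
  · rw [e]
    exact (hit s hs).1
  · rw [e]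
    exact (hit s hs).2

lemma Tbeta_mem_Ico (β x : ℝ) : Tbeta β x ∈ Ico (0 : ℝ) 1 :=
  ⟨Int.fract_nonneg _, Int.fract_lt_one _⟩

lemma iterate_Tbeta_mem_Ico (β : ℝ) {x : ℝ} (hx : x ∈ Ico (0 : ℝ) 1) (n : ℕ) :
    (Tbeta β)^[n] x ∈ Ico (0 : ℝ) 1 := by
  cases n with
  | zero => exact hx
  | succ n =>
    rw [Function.iterate_succ_apply']
    exact Tbeta_mem_Ico _ _

/-- The first digit of `x` in the greedy `β`-expansion. -/
noncomputable def betaDigit (β x : ℝ) : ℕ := ⌊β * x⌋₊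

lemma betaDigit_add_Tbeta {β x : ℝ} (hβ : 1 < β) (hx : 0 ≤ x) :
    betaDigit β x + Tbeta β x = β * x := by
  rw [betaDigit, Tbeta, natCast_floor_eq_intCast_floor (by positivity)]
  exact Int.floor_add_fract _

/-- The first `n` digits of `x` in the greedy `β`-expansion. -/
noncomputable def orbitWord (β : ℝ) : ℝ → ℕ → List ℕ
  | _, 0 => []
  | x, n + 1 => betaDigit β x :: orbitWord β (Tbeta β x) n

lemma length_orbitWord (β x : ℝ) (n : ℕ) : (orbitWord β x n).length = n := by
  induction n generalizing x with
  | zero => rfl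
  | succ n ih => rw [orbitWord, List.length_cons, ih]

lemma wordVal_orbitWord {β x : ℝ} (hβ : 1 < β) (hx : x ∈ Ico (0 : ℝ) 1) (n : ℕ) :
    wordVal β (orbitWord β x n) ((Tbeta β)^[n] x) = x := by
  induction n generalizing x with
  | zero => rfl
  | succ n ih =>
    rw [orbitWord, wordVal, Function.iterate_succ_apply, ih (Tbeta_mem_Ico _ _),
      betaDigit_add_Tbeta hβ hx.1, mul_div_cancel_left₀ _ (by linarith)]

lemma exists_of_suffix_orbitWord {β x : ℝ} {n : ℕ} {v : List ℕ} (hv : v <:+ orbitWord β x n)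
    (hv0 : v ≠ []) : ∃ k m, 0 < m ∧ k + m = n ∧ v = orbitWord β ((Tbeta β)^[k] x) m := by
  induction n generalizing x with
  | zero => exact absurd (List.suffix_nil.1 hv) hv0
  | succ n ih =>
    rw [orbitWord, List.suffix_cons_iff] at hv
    obtain rfl | hv := hv
    · exact ⟨0, n + 1, n.succ_pos, by omega, rfl⟩
    · obtain ⟨k, m, hm, hkm, rfl⟩ := ih hv
      exact ⟨k + 1, m, hm, by omega, by rw [Function.iterate_succ_apply]⟩

lemma sub_eq_of_digits_eq {β : ℝ} (hβ : 1 < β) (n : ℕ) {x y : ℝ} (hx : x ∈ Ico (0 : ℝ) 1)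
    (hy : y ∈ Ico (0 : ℝ) 1)
    (h : ∀ k < n, betaDigit β ((Tbeta β)^[k] x) = betaDigit β ((Tbeta β)^[k] y)) :
    x - y = ((Tbeta β)^[n] x - (Tbeta β)^[n] y) / β ^ n := by
  induction n generalizing x y with
  | zero => simp
  | succ n ih =>
    have h0 : betaDigit β x = betaDigit β y := h 0 n.succ_pos
    have h1 := ih (Tbeta_mem_Ico β x) (Tbeta_mem_Ico β y) fun k hk => h (k + 1) (by omega)
    have hβ0 : β ≠ 0 := by linarith
    rw [Function.iterate_succ_apply, Function.iterate_succ_apply, pow_succ, ← div_div, ← h1,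
      eq_div_iff hβ0]
    have hx' := betaDigit_add_Tbeta hβ hx.1
    have hy' := betaDigit_add_Tbeta hβ hy.1
    rw [h0] at hx'
    linarith

lemma eq_of_digits_eq {β : ℝ} (hβ : 1 < β) {x y : ℝ} (hx : x ∈ Ico (0 : ℝ) 1)
    (hy : y ∈ Ico (0 : ℝ) 1)
    (h : ∀ k, betaDigit β ((Tbeta β)^[k] x) = betaDigit β ((Tbeta β)^[k] y)) : x = y := by
  have hb : ∀ n : ℕ, |x - y| ≤ (β⁻¹) ^ n := by
    intro n
    rw [sub_eq_of_digits_eq hβ n hx hy fun k _ => h k, abs_div, abs_of_pos (by positivity : 0 < β ^ n),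
      inv_pow, div_eq_mul_inv]
    have h1 := iterate_Tbeta_mem_Ico β hx n
    have h2 := iterate_Tbeta_mem_Ico β hy n
    refine mul_le_of_le_one_left (by positivity) (abs_le.2 ⟨?_, ?_⟩) <;>
      linarith [h1.1, h1.2, h2.1, h2.2]
  have hlim := tendsto_pow_atTop_nhds_zero_of_lt_one (r := β⁻¹) (by positivity)
    (inv_lt_one_of_one_lt₀ hβ)
  have := ge_of_tendsto' hlim hb
  exact sub_eq_zero.1 (abs_nonpos_iff.1 this)

/-- The points with a non-injective orbit form a countable set. -/
lemma countable_not_injective_orbit {β : ℝ} (hβ : 1 < β) :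
    {x | x ∈ Ico (0 : ℝ) 1 ∧ ¬ Function.Injective fun k => (Tbeta β)^[k] x}.Countable := by
  have hcount : (range fun p : ℕ × ℕ × List ℕ × List ℕ =>
      (wordVal β p.2.2.1 0 - wordVal β p.2.2.2 0 * β ^ (p.2.1 - p.1)) /
        (1 - β ^ (p.2.1 - p.1))).Countable := countable_range _
  refine hcount.mono ?_
  rintro x ⟨hx, hinj⟩
  obtain ⟨m, n, hmn, heq⟩ : ∃ m n, m < n ∧ (Tbeta β)^[m] x = (Tbeta β)^[n] x := by
    rw [Function.Injective] at hinj
    push Not at hinj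
    obtain ⟨a, b, hab, hne⟩ := hinj
    obtain h | h := lt_or_gt_of_ne hne
    · exact ⟨a, b, h, hab⟩
    · exact ⟨b, a, h, hab.symm⟩
  refine ⟨(m, n, orbitWord β x m, orbitWord β x n), ?_⟩
  have hval : ∀ k, x = wordVal β (orbitWord β x k) 0 + (Tbeta β)^[k] x / β ^ k := by
    intro k
    conv_lhs => rw [← wordVal_orbitWord hβ hx k, wordVal_eq_add β _ _ 0, length_orbitWord, sub_zero]
  have hm := hval m
  have hn := hval n
  obtain ⟨p, rfl⟩ := Nat.exists_eq_add_of_lt hmn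
  rw [← heq] at hn
  have hpow : m + p + 1 - m = p + 1 := by omega
  have hone : (1 : ℝ) < β ^ (p + 1) := one_lt_pow₀ hβ (by omega)
  dsimp only
  rw [hpow, div_eq_iff (by linarith)]
  set A := wordVal β (orbitWord β x m) 0
  set B := wordVal β (orbitWord β x (m + p + 1)) 0
  have hβ0 : β ≠ 0 := by linarith
  have e : (Tbeta β)^[m] x / β ^ m = (Tbeta β)^[m] x / β ^ (m + p + 1) * β ^ (p + 1) := by
    rw [add_assoc m, pow_add]
    field_simp
  rw [e] at hm
  have : (Tbeta β)^[m] x / β ^ (m + p + 1) = x - B := by linarith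
  rw [this] at hm
  linarith

/-- Along an injective orbit some point is approximated from above, up to any error, by
infinitely many later points. -/
lemma exists_frequently_lt_iterate {β x ε : ℝ} (hβ : 1 < β) (hx : x ∈ Ico (0 : ℝ) 1)
    (hinj : Function.Injective fun k => (Tbeta β)^[k] x) (hε : 0 < ε) :
    ∃ i, ∃ᶠ j in atTop, (Tbeta β)^[i] x < (Tbeta β)^[j] x ∧
      (Tbeta β)^[j] x < (Tbeta β)^[i] x + ε := by
  by_contra hcon
  simp only [not_exists, not_frequently] at hcon
  set D : ℕ → ℕ := fun k => betaDigit β ((Tbeta β)^[k] x) with hD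
  have hmem : ∀ k, (Tbeta β)^[k] x ∈ Ico (0 : ℝ) 1 := iterate_Tbeta_mem_Ico β hx
  have hDb : ∀ k, D k < ⌊β⌋₊ + 1 := by
    intro k
    refine Nat.lt_succ_of_le (Nat.floor_le_floor ?_)
    nlinarith [(hmem k).2]
  have hit : ∀ n k, (Tbeta β)^[k] ((Tbeta β)^[n] x) = (Tbeta β)^[n + k] x := by
    intro n k
    rw [add_comm, Function.iterate_add_apply]
  obtain ⟨N, hN⟩ : ∃ N : ℕ, (β⁻¹) ^ N < ε :=
    exists_pow_lt_of_lt_one hε (inv_lt_one_of_one_lt₀ hβ)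
  let blk : ℕ → (Fin N → Fin (⌊β⌋₊ + 1)) := fun n i => ⟨D (n + i), hDb _⟩
  have hblk : ∀ {m n}, blk m = blk n ↔ ∀ i < N, D (m + i) = D (n + i) := by
    intro m n
    constructor
    · intro h i hi
      exact Fin.mk.inj_iff.1 (congrFun h ⟨i, hi⟩)
    · intro h
      ext i
      exact h i i.2
  have hstep : ∀ i, ∀ᶠ j in atTop, blk i = blk j → D (j + N) ≤ D (i + N) := by
    intro i
    filter_upwards [hcon i] with j hj hij
    by_contra! hlt
    rw [hblk] at hij
    have h1 := sub_eq_of_digits_eq hβ N (hmem j) (hmem i) fun k hk => by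
      rw [hit, hit]
      exact (hij k hk).symm
    rw [hit, hit] at h1
    have h2 : (Tbeta β)^[i + N] x < (Tbeta β)^[j + N] x := by
      by_contra! hle
      exact absurd (Nat.floor_le_floor (mul_le_mul_of_nonneg_left hle (by linarith : 0 ≤ β)))
        (not_le.2 hlt)
    have h3 : (0 : ℝ) < β ^ N := by positivity
    have h4 : 0 < (Tbeta β)^[j] x - (Tbeta β)^[i] x := by
      rw [h1]
      exact div_pos (by linarith) h3
    have h5 : (Tbeta β)^[j] x - (Tbeta β)^[i] x < ε := by
      refine lt_of_le_of_lt ?_ hN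
      rw [h1, inv_pow, div_eq_mul_inv]
      refine mul_le_of_le_one_left (by positivity) ?_
      linarith [(hmem (j + N)).2, (hmem (i + N)).1]
    exact hj ⟨by linarith, by linarith⟩
  have hdet : ∀ c, ∃ d, ∀ᶠ j in atTop, blk j = c → D (j + N) = d := by
    intro c
    by_cases hc : ∃ i, blk i = c
    · obtain ⟨i, hi, hmin⟩ : ∃ i, blk i = c ∧ ∀ j, blk j = c → D (i + N) ≤ D (j + N) := by
        obtain ⟨i, hi⟩ := hc
        have hne : {i | blk i = c}.Nonempty := ⟨i, hi⟩
        exact ⟨Function.argminOn (fun j => D (j + N)) _ hne,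
          Function.argminOn_mem (fun j => D (j + N)) _ hne,
          fun j hj => Function.argminOn_le (fun j => D (j + N)) _ hj⟩
      refine ⟨D (i + N), ?_⟩
      filter_upwards [hstep i] with j hj hjc
      exact le_antisymm (hj (hi.trans hjc.symm)) (hmin j hjc)
    · push Not at hc
      exact ⟨0, Eventually.of_forall fun j hj => absurd hj (hc j)⟩
  choose f hf using hdet
  obtain ⟨K, hK⟩ := eventually_atTop.1 (eventually_all.2 hf)
  obtain ⟨p, q, hpq, hblkpq⟩ := Finite.exists_ne_map_eq_of_infinite fun n => blk (K + n)
  have hdig : ∀ k, D (K + p + k) = D (K + q + k) := by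
    intro k
    induction k using Nat.strong_induction_on with
    | _ k ih =>
      obtain hk | hk := lt_or_ge k N
      · exact hblk.1 hblkpq k hk
      · obtain ⟨r, rfl⟩ := Nat.exists_eq_add_of_le' hk
        have hr : blk (K + p + r) = blk (K + q + r) := by
          rw [hblk]
          intro i hi
          rw [add_assoc, add_assoc (K + q)]
          exact ih _ (by omega)
        rw [← add_assoc, ← add_assoc, hK (K + p + r) (by omega) _ rfl,
          hK (K + q + r) (by omega) _ rfl, hr]
  have := hinj (eq_of_digits_eq hβ (hmem (K + p)) (hmem (K + q)) fun k => by
    rw [hit, hit]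
    exact hdig k)
  omega

lemma survivor_anti (β : ℝ) {s t : ℝ} (h : s ≤ t) : survivor β t ⊆ survivor β s :=
  fun _ hx => ⟨hx.1, fun n => h.trans (hx.2 n)⟩

lemma tau_le {β t : ℝ} (ht : 0 < t) (h : dimH (survivor β t) = 0) : tau β ≤ t :=
  csInf_le ⟨0, fun _ hs => hs.1.le⟩ ⟨ht, h⟩

lemma le_tau {β t : ℝ} (h : dimH (survivor β t) ≠ 0) : t ≤ tau β := by
  refine le_csInf ⟨1, one_pos, ?_⟩ fun s hs => ?_
  · have : survivor β 1 = ∅ := by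
      refine Set.eq_empty_iff_forall_notMem.2 fun x hx => ?_
      exact absurd hx.1.2 (not_lt.2 (hx.2 0))
    rw [this, dimH_empty]
  · by_contra! hlt
    exact h (le_antisymm ((dimH_mono (survivor_anti β hlt.le)).trans hs.2.le) zero_le)

lemma tau_nonneg (β : ℝ) : 0 ≤ tau β := Real.sInf_nonneg fun _ hs => hs.1.le

lemma tau_le_of_not_injective {β t : ℝ} (hβ : 1 < β) (ht : 0 < t)
    (h : ∀ x ∈ survivor β t, ¬ Function.Injective fun k => (Tbeta β)^[k] x) : tau β ≤ t := by
  have hc : (survivor β t).Countable := (countable_not_injective_orbit hβ).mono (by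
    intro x hx
    exact ⟨hx.1, h x hx⟩)
  exact tau_le ht (dimH_countable hc)

lemma exists_injective_of_lt_tau {β t : ℝ} (hβ : 1 < β) (ht : 0 < t) (h : t < tau β) :
    ∃ x ∈ survivor β t, Function.Injective fun k => (Tbeta β)^[k] x := by
  by_contra! hcon
  exact absurd (tau_le_of_not_injective hβ ht hcon) (not_le.2 h)

lemma eventually_isBranch {β t t' δ ξ : ℝ} {n : ℕ} (hβ : 1 < β) (ht' : 0 < t')
    (hδ : 0 < δ) (hδβ : δ * β ≤ t - t') (hξ : ξ ∈ survivor β t) (hn : 0 < n)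
    (h1 : ξ < (Tbeta β)^[n] ξ) (h2 : (Tbeta β)^[n] ξ < ξ + δ * (β - 1)) :
    ∀ᶠ b in 𝓝 β, IsBranch b t' (ξ - δ) ξ n (wordVal b (orbitWord β ξ n) 0) := by
  set w := orbitWord β ξ n with hw
  have hlen : w.length = n := length_orbitWord _ _ _
  have hw0 : w ≠ [] := by
    rw [← List.length_pos_iff, hlen]
    exact hn
  have hsub : Icc (ξ - δ) ξ ⊆ Ico 0 1 := by
    intro s hs
    have := hξ.2 0
    rw [Function.iterate_zero_apply] at this
    exact ⟨by nlinarith [hs.1], hs.2.trans_lt hξ.1.2⟩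
  have hval : ∀ k m s, k + m = n → wordVal β (orbitWord β ((Tbeta β)^[k] ξ) m) s =
      (Tbeta β)^[k] ξ + (s - (Tbeta β)^[n] ξ) / β ^ m := by
    rintro k m s rfl
    rw [wordVal_eq_add β _ s ((Tbeta β)^[k + m] ξ), length_orbitWord, add_comm k,
      Function.iterate_add_apply, wordVal_orbitWord hβ (iterate_Tbeta_mem_Ico β hξ.1 k)]
  have hlow : ∀ m, 0 < m → -δ < (ξ - δ - (Tbeta β)^[n] ξ) / β ^ m := by
    intro m hm
    have hb : β ≤ β ^ m := le_self_pow₀ hβ.le (by omega)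
    rw [lt_div_iff₀ (by positivity)]
    nlinarith
  have hhigh : ∀ m, (ξ - (Tbeta β)^[n] ξ) / β ^ m < 0 := fun m =>
    div_neg_of_neg_of_pos (by linarith) (by positivity)
  have hfin : {v | v <:+ w}.Finite := by
    refine (List.finite_toSet w.tails).subset fun v hv => ?_
    exact (List.mem_tails v w).2 hv
  have hsuff : ∀ᶠ b in 𝓝 β, ∀ v ∈ {v | v <:+ w}, v ≠ [] →
      t' < wordVal b v (ξ - δ) ∧ wordVal b v ξ < 1 := by
    refine (eventually_all_finite hfin).2 fun v hv => ?_
    by_cases hv0 : v = []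
    · exact Eventually.of_forall fun b h => absurd hv0 h
    obtain ⟨k, m, hm, hkm, rfl⟩ := exists_of_suffix_orbitWord hv hv0
    have c1 : t' < wordVal β (orbitWord β ((Tbeta β)^[k] ξ) m) (ξ - δ) := by
      rw [hval k m _ hkm]
      have := hlow m hm
      have := hξ.2 k
      nlinarith
    have c2 : wordVal β (orbitWord β ((Tbeta β)^[k] ξ) m) ξ < 1 := by
      rw [hval k m _ hkm]
      have := hhigh m
      have := (iterate_Tbeta_mem_Ico β hξ.1 k).2
      linarith
    filter_upwards [(continuousAt_wordVal hβ _ _).eventually_const_lt c1,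
      (continuousAt_wordVal hβ _ _).eventually_lt_const c2] with b hb1 hb2 _
    exact ⟨hb1, hb2⟩
  have e1 : ξ - δ < wordVal β w (ξ - δ) := by
    have h3 := hval 0 n (ξ - δ) (zero_add n)
    rw [Function.iterate_zero_apply] at h3
    rw [hw, h3]
    linarith [hlow n hn]
  have e2 : wordVal β w ξ < ξ := by
    have h3 := hval 0 n ξ (zero_add n)
    rw [Function.iterate_zero_apply] at h3
    rw [hw, h3]
    linarith [hhigh n]
  filter_upwards [hsuff, (continuousAt_wordVal hβ _ _).eventually_const_lt e1,
    (continuousAt_wordVal hβ _ _).eventually_lt_const e2, lt_mem_nhds hβ] with b hb1 hb2 hb3 hb4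
  rw [← hlen]
  exact isBranch_wordVal hb4 ht'.le hsub hw0
    (fun v hv hv0 => ⟨(hb1 v hv hv0).1.le, (hb1 v hv hv0).2⟩) hb2.le hb3.le

/-- A survivor with injective orbit produces, for every smaller threshold, a horseshoe that
persists under small perturbations of the base. -/
lemma eventually_le_tau {β t t' x : ℝ} (hβ : 1 < β) (ht' : 0 < t') (htt' : t' < t)
    (hx : x ∈ survivor β t) (hinj : Function.Injective fun k => (Tbeta β)^[k] x) :
    ∀ᶠ b in 𝓝 β, t' ≤ tau b := by
  set δ := (t - t') / β with hδdef
  have hβ0 : 0 < β := by linarith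
  have hδ : 0 < δ := div_pos (by linarith) hβ0
  have hδβ : δ * β ≤ t - t' := by rw [hδdef, div_mul_cancel₀ _ hβ0.ne']
  have hε : 0 < δ * (β - 1) := mul_pos hδ (by linarith)
  set ε := δ * (β - 1) with hεdef
  obtain ⟨i, hi⟩ := exists_frequently_lt_iterate hβ hx.1 hinj hε
  set ξ := (Tbeta β)^[i] x with hξdef
  have hξ : ξ ∈ survivor β t := by
    refine ⟨iterate_Tbeta_mem_Ico β hx.1 i, fun n => ?_⟩
    rw [hξdef, ← Function.iterate_add_apply]
    exact hx.2 _
  have hret : ∀ m, ∃ n ≥ m, ξ < (Tbeta β)^[n] ξ ∧ (Tbeta β)^[n] ξ < ξ + ε := by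
    intro m
    obtain ⟨j, hj, hj'⟩ := frequently_atTop.1 hi (i + m)
    refine ⟨j - i, by omega, ?_⟩
    rw [hξdef, ← Function.iterate_add_apply, Nat.sub_add_cancel (by omega)]
    exact hj'
  obtain ⟨n₁, hn₁, h₁, h₁'⟩ := hret 1
  set ξ₁ := (Tbeta β)^[n₁] ξ with hξ₁
  obtain ⟨m, hm⟩ := eventually_atTop.1 ((tendsto_pow_atTop_atTop_of_one_lt hβ).eventually_gt_atTop
    (max 3 (1 + ε * (β ^ n₁ - 1) / (ξ₁ - ξ))))
  obtain ⟨n₂, hn₂, h₂, h₂'⟩ := hret (m + 1)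
  set ξ₂ := (Tbeta β)^[n₂] ξ with hξ₂
  have hlarge := max_lt_iff.1 (hm n₂ (by omega))
  have hB₁ : 1 < β ^ n₁ := one_lt_pow₀ hβ (by omega)
  have hB₂ : 1 < β ^ n₂ := one_lt_pow₀ hβ (by omega)
  have hc : ∀ n, wordVal β (orbitWord β ξ n) 0 = ξ - (Tbeta β)^[n] ξ / β ^ n := by
    intro n
    rw [wordVal_eq_add β _ 0 ((Tbeta β)^[n] ξ), wordVal_orbitWord hβ hξ.1, length_orbitWord]
    ring
  have hne : wordVal β (orbitWord β ξ n₁) 0 + wordVal β (orbitWord β ξ n₂) 0 / β ^ n₁ ≠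
      wordVal β (orbitWord β ξ n₂) 0 + wordVal β (orbitWord β ξ n₁) 0 / β ^ n₂ := by
    rw [hc, hc, ← hξ₁, ← hξ₂]
    intro heq
    have h3 : ε * (β ^ n₁ - 1) < (β ^ n₂ - 1) * (ξ₁ - ξ) := by
      rw [← div_lt_iff₀ (by linarith)]
      linarith [hlarge.2]
    have h4 : (ξ₁ - ξ) * (β ^ n₂ - 1) = (ξ₂ - ξ) * (β ^ n₁ - 1) := by
      field_simp at heq
      linarith
    nlinarith
  have hcont : ∀ n, ContinuousAt (fun b => wordVal b (orbitWord β ξ n) 0) β := fun n =>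
    continuousAt_wordVal hβ _ _
  have hne' : ∀ᶠ b in 𝓝 β,
      wordVal b (orbitWord β ξ n₁) 0 + wordVal b (orbitWord β ξ n₂) 0 / b ^ n₁ ≠
      wordVal b (orbitWord β ξ n₂) 0 + wordVal b (orbitWord β ξ n₁) 0 / b ^ n₂ := by
    refine ContinuousAt.eventually_ne (g := fun b =>
      (wordVal b (orbitWord β ξ n₁) 0 + wordVal b (orbitWord β ξ n₂) 0 / b ^ n₁) -
      (wordVal b (orbitWord β ξ n₂) 0 + wordVal b (orbitWord β ξ n₁) 0 / b ^ n₂)) (y := 0)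
      ?_ (sub_ne_zero.2 hne) |>.mono fun b hb => sub_ne_zero.1 hb
    exact ((hcont _).add ((hcont _).div (continuousAt_id.pow _) (by simp [hβ0.ne']))).sub
      ((hcont _).add ((hcont _).div (continuousAt_id.pow _) (by simp [hβ0.ne'])))
  have h3 : ∀ᶠ b : ℝ in 𝓝 β, 3 < b ^ (n₁ + n₂) := by
    refine ((continuous_pow (n₁ + n₂)).continuousAt).eventually_const_lt ?_
    change 3 < β ^ (n₁ + n₂)
    rw [pow_add]
    nlinarith [hlarge.1]
  filter_upwards [hne', h3, lt_mem_nhds hβ,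
    eventually_isBranch hβ ht' hδ hδβ hξ (by omega) h₁ h₁',
    eventually_isBranch hβ ht' hδ hδβ hξ (by omega) h₂ h₂'] with b hb1 hb2 hb3 hb4 hb5
  refine le_tau (dimH_survivor_ne_zero hb4 hb5 (by linarith) ?_ hb1 hb3 hb2.le)
  intro s hs
  have := hξ.2 0
  rw [Function.iterate_zero_apply] at this
  exact ⟨by nlinarith [hs.1], hs.2.trans_lt hξ.1.2⟩

lemma exists_expansion {b M : ℝ} (hb : 1 < b) {d : ℕ → ℕ} (hd : ∀ k, (d k : ℝ) ≤ M) :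
    ∃ y : ℕ → ℝ, (∀ k, 0 ≤ y k) ∧ BddAbove (range y) ∧ ∀ k, b * y k = d k + y (k + 1) := by
  have hb0 : 0 < b := by linarith
  have hgeom : Summable fun i : ℕ => M * (b⁻¹) ^ (i + 1) :=
    ((summable_nat_add_iff 1).2
      (summable_geometric_of_lt_one (by positivity) (inv_lt_one_of_one_lt₀ hb))).mul_left M
  have hle : ∀ k i, (d (k + i) : ℝ) / b ^ (i + 1) ≤ M * (b⁻¹) ^ (i + 1) := by
    intro k i
    rw [inv_pow, ← div_eq_mul_inv]
    gcongr
    exact hd _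
  have hs : ∀ k, Summable fun i : ℕ => (d (k + i) : ℝ) / b ^ (i + 1) := fun k =>
    Summable.of_nonneg_of_le (fun i => by positivity) (hle k) hgeom
  refine ⟨fun k => ∑' i : ℕ, (d (k + i) : ℝ) / b ^ (i + 1),
    fun k => tsum_nonneg fun i => by positivity, ⟨∑' i : ℕ, M * (b⁻¹) ^ (i + 1), ?_⟩, fun k => ?_⟩
  · rintro _ ⟨k, rfl⟩
    exact (hs k).tsum_le_tsum (hle k) hgeom
  · change b * (∑' i : ℕ, (d (k + i) : ℝ) / b ^ (i + 1)) = d k + _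
    rw [(hs k).tsum_eq_zero_add, mul_add, ← tsum_mul_left]
    congr 1
    · simp only [add_zero, zero_add, pow_one]
      exact mul_div_cancel₀ _ hb0.ne'
    · refine tsum_congr fun i => ?_
      rw [show k + (i + 1) = k + 1 + i by ring, pow_succ b (i + 1)]
      field_simp

/-- Reading the digits of an `a`-expansion in a larger base `b` moves the orbit down by at most
`(b - a) / (b - 1)`. -/
lemma exists_survivor_of_lt {a b t x : ℝ} (ha : 1 < a) (hab : a < b) (hx : x ∈ survivor a t)
    (hinj : Function.Injective fun k => (Tbeta a)^[k] x) :
    ∃ y ∈ survivor b (t - (b - a) / (b - 1)),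
      Function.Injective fun k => (Tbeta b)^[k] y := by
  have hb : 1 < b := ha.trans hab
  have hb0 : 0 < b := by linarith
  set δ := (b - a) / (b - 1) with hδ
  have hδb : δ * (b - 1) = b - a := div_mul_cancel₀ _ (by linarith)
  set X : ℕ → ℝ := fun k => (Tbeta a)^[k] x with hX
  have hXI : ∀ k, X k ∈ Ico (0 : ℝ) 1 := fun k => iterate_Tbeta_mem_Ico a hx.1 k
  have hXs : ∀ k, (betaDigit a (X k) : ℝ) + X (k + 1) = a * X k := by
    intro k
    have := betaDigit_add_Tbeta ha (hXI k).1
    simpa only [hX, Function.iterate_succ_apply'] using this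
  obtain ⟨y, hy0, ⟨M, hM⟩, hy⟩ := exists_expansion (d := fun k => betaDigit a (X k)) (M := a) hb
    fun k => by nlinarith [hXs k, (hXI k).2, (hXI (k + 1)).1]
  have hyM : ∀ k, y k ≤ M := fun k => hM ⟨k, rfl⟩
  have hρ : b⁻¹ < 1 := inv_lt_one_of_one_lt₀ hb
  have hup : ∀ k, y k ≤ X k := by
    intro k
    refine sub_nonpos.1 (nonpos_of_forall_exists_le_mul (f := fun k => y k - X k)
      (inv_nonneg.2 hb0.le) hρ ⟨M, ?_⟩ (fun i => ⟨i + 1, ?_⟩) k)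
    · rintro _ ⟨i, rfl⟩
      change y i - X i ≤ M
      linarith [hyM i, (hXI i).1]
    · rw [inv_mul_eq_div, le_div_iff₀ hb0]
      nlinarith [hy i, hXs i, (hXI i).1]
  have hlow : ∀ k, X k - δ ≤ y k := by
    intro k
    refine sub_nonpos.1 (nonpos_of_forall_exists_le_mul (f := fun k => X k - δ - y k)
      (inv_nonneg.2 hb0.le) hρ ⟨1 - δ, ?_⟩ (fun i => ⟨i + 1, ?_⟩) k)
    · rintro _ ⟨i, rfl⟩
      change X i - δ - y i ≤ 1 - δ
      linarith [hy0 i, (hXI i).2]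
    · rw [inv_mul_eq_div, le_div_iff₀ hb0]
      nlinarith [hy i, hXs i, (hXI i).2]
  have hyI : ∀ k, y k ∈ Ico (0 : ℝ) 1 := fun k => ⟨hy0 k, (hup k).trans_lt (hXI k).2⟩
  have hdig : ∀ k, betaDigit b (y k) = betaDigit a (X k) := by
    intro k
    rw [betaDigit, hy k, Nat.floor_eq_iff (by have := hy0 (k + 1); positivity)]
    exact ⟨by linarith [hy0 (k + 1)], by linarith [(hyI (k + 1)).2]⟩
  have hT : ∀ k, Tbeta b (y k) = y (k + 1) := by
    intro k
    have := betaDigit_add_Tbeta hb (hy0 k)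
    rw [hdig] at this
    linarith [hy k]
  have hit : ∀ k i, (Tbeta b)^[k] (y i) = y (i + k) := by
    intro k i
    induction k with
    | zero => rfl
    | succ k ih => rw [Function.iterate_succ_apply', ih, hT, add_assoc]
  have hXit : ∀ k i, (Tbeta a)^[k] (X i) = X (i + k) := by
    intro k i
    rw [hX, add_comm i]
    exact (Function.iterate_add_apply _ _ _ _).symm
  refine ⟨y 0, ⟨hyI 0, fun n => ?_⟩, fun m n hmn => ?_⟩
  · rw [hit, zero_add]
    have : t ≤ X n := hx.2 n
    linarith [hlow n]
  · have hmn' : y m = y n := by simpa only [hit, zero_add] using hmn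
    refine hinj (eq_of_digits_eq ha (hXI m) (hXI n) fun k => ?_)
    rw [hXit, hXit, ← hdig, ← hdig, ← hit, ← hit, hmn']

lemma tau_le_tau_add {a b : ℝ} (ha : 1 < a) (hab : a < b) :
    tau a ≤ tau b + (b - a) / (b - 1) := by
  have hδ : 0 < (b - a) / (b - 1) := div_pos (by linarith) (by linarith)
  by_contra! hcon
  obtain ⟨t, ht, hta⟩ := exists_between hcon
  obtain ⟨t', ht', htt'⟩ := exists_between (lt_sub_iff_add_lt.2 ht)
  have h0 := tau_nonneg b
  obtain ⟨x, hx, hinj⟩ := exists_injective_of_lt_tau ha (by linarith) hta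
  obtain ⟨y, hy, hyinj⟩ := exists_survivor_of_lt ha hab hx hinj
  have := (eventually_le_tau (ha.trans hab) (by linarith) htt' hy hyinj).self_of_nhds
  linarith

lemma monotoneOn_tau_add_log : MonotoneOn (fun b => tau b + Real.log (b - 1)) (Ioi 1) := by
  intro a ha b _ hab
  rcases hab.eq_or_lt with rfl | hab
  · exact le_rfl
  have ha' : 0 < a - 1 := sub_pos.2 ha
  have hb' : 0 < b - 1 := by linarith
  have h1 := tau_le_tau_add ha hab
  have h2 := Real.one_sub_inv_le_log_of_pos (div_pos hb' ha')
  rw [Real.log_div hb'.ne' ha'.ne', inv_div] at h2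
  have h3 : (b - a) / (b - 1) = 1 - (a - 1) / (b - 1) := by
    field_simp
    ring
  dsimp only
  linarith

lemma eventually_lt_tau {β s : ℝ} (hβ : 1 < β) (hs : s < tau β) : ∀ᶠ b in 𝓝 β, s < tau b := by
  by_cases h0 : s < 0
  · exact Eventually.of_forall fun b => h0.trans_le (tau_nonneg b)
  obtain ⟨t, hst, ht⟩ := exists_between hs
  obtain ⟨t', hst', htt'⟩ := exists_between hst
  obtain ⟨x, hx, hinj⟩ := exists_injective_of_lt_tau hβ (by linarith) ht
  exact (eventually_le_tau hβ (by linarith) htt' hx hinj).mono fun b hb => hst'.trans_le hb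

lemma continuousAt_log_sub_one {β : ℝ} (hβ : 1 < β) :
    ContinuousAt (fun b => Real.log (b - 1)) β :=
  (continuousAt_id.sub continuousAt_const).log (sub_pos.2 hβ).ne'

lemma tendsto_tau_left {β : ℝ} (hβ : 1 < β) : Tendsto tau (𝓝[<] β) (𝓝 (tau β)) := by
  refine tendsto_order.2 ⟨fun s hs => nhdsWithin_le_nhds (eventually_lt_tau hβ hs), fun s hs => ?_⟩
  have h1 : ∀ᶠ b in 𝓝 β, Real.log (β - 1) - (s - tau β) < Real.log (b - 1) :=
    (continuousAt_log_sub_one hβ).eventually_const_lt (by linarith)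
  filter_upwards [nhdsWithin_le_nhds h1, nhdsWithin_le_nhds (lt_mem_nhds hβ),
    self_mem_nhdsWithin] with b hb1 hb2 hb3
  have h2 := monotoneOn_tau_add_log hb2 hβ (le_of_lt hb3)
  dsimp only at h2
  linarith

lemma exists_tendsto_tau_right {β : ℝ} (hβ : 1 < β) :
    ∃ l, Tendsto tau (𝓝[>] β) (𝓝 l) := by
  have hm : MonotoneOn (fun b => tau b + Real.log (b - 1)) (Ioo β (β + 1)) :=
    monotoneOn_tau_add_log.mono fun b hb => hβ.trans hb.1
  have hbdd : BddBelow ((fun b => tau b + Real.log (b - 1)) '' Ioo β (β + 1)) := by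
    refine ⟨tau β + Real.log (β - 1), ?_⟩
    rintro _ ⟨b, hb, rfl⟩
    exact monotoneOn_tau_add_log hβ (hβ.trans hb.1) hb.1.le
  have h1 := hm.tendsto_nhdsWithin_Ioo_right (nonempty_Ioo.2 (lt_add_one β)) hbdd
  refine ⟨_, (h1.sub ((continuousAt_log_sub_one hβ).tendsto.mono_left nhdsWithin_le_nhds)).congr
    fun b => ?_⟩
  ring

lemma countable_not_continuousWithinAt_tau :
    {β : ℝ | 1 < β ∧ ¬ ContinuousWithinAt tau (Ioi 1) β}.Countable := by
  refine monotoneOn_tau_add_log.countable_not_continuousWithinAt.mono ?_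
  rintro β ⟨hβ, hc⟩
  refine ⟨hβ, fun h => hc ?_⟩
  exact (h.sub (continuousAt_log_sub_one hβ).continuousWithinAt).congr
    (fun b _ => (add_sub_cancel_right _ _).symm) (add_sub_cancel_right _ _).symm

lemma tau_le_of_quadratic_eq {k : ℕ} {β : ℝ} (hk : 1 ≤ k) (hβ : 1 < β)
    (h : β ^ 2 - (k + 2) * β + 1 = 0) : tau β ≤ k / β := by
  have hβ0 : 0 < β := by linarith
  have hk0 : (0 : ℝ) < k := by exact_mod_cast hk
  refine tau_le_of_not_injective hβ (by positivity) fun x hx hinj => ?_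
  set X : ℕ → ℝ := fun n => (Tbeta β)^[n] x with hX
  have hXI : ∀ n, X n ∈ Ico (0 : ℝ) 1 := fun n => iterate_Tbeta_mem_Ico β hx.1 n
  have hXs : ∀ n, (betaDigit β (X n) : ℝ) + X (n + 1) = β * X n := by
    intro n
    have := betaDigit_add_Tbeta hβ (hXI n).1
    simpa only [hX, Function.iterate_succ_apply'] using this
  have hge : ∀ n, k ≤ betaDigit β (X n) := by
    intro n
    have h1 : k / β ≤ X n := hx.2 n
    rw [div_le_iff₀ hβ0] at h1
    exact Nat.le_floor (by linarith)
  set q := (k : ℝ) / (β - 1) with hq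
  have hqβ : q * (β - 1) = k := div_mul_cancel₀ _ (by linarith)
  have hlow : ∀ n, q ≤ X n := by
    intro n
    refine sub_nonpos.1 (nonpos_of_forall_exists_le_mul (f := fun n => q - X n)
      (inv_nonneg.2 hβ0.le) (inv_lt_one_of_one_lt₀ hβ) ⟨q, ?_⟩ (fun i => ⟨i + 1, ?_⟩) n)
    · rintro _ ⟨i, rfl⟩
      change q - X i ≤ q
      linarith [(hXI i).1]
    · rw [inv_mul_eq_div, le_div_iff₀ hβ0]
      have : (k : ℝ) ≤ betaDigit β (X i) := by exact_mod_cast hge i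
      nlinarith [hXs i]
  have hdig : ∀ n, betaDigit β (X n) = k := by
    intro n
    refine le_antisymm (not_lt.1 fun hlt => ?_) (hge n)
    have h1 : (k : ℝ) + 1 ≤ betaDigit β (X n) := by exact_mod_cast hlt
    have h2 : (k + 1 + q - β) * (β - 1) = 0 := by linear_combination hqβ - h
    have h3 : k + 1 + q - β = 0 := (mul_eq_zero.1 h2).resolve_right (by linarith)
    nlinarith [hXs n, hlow (n + 1), (hXI n).2]
  have h01 : X 0 = X 1 := eq_of_digits_eq hβ (hXI 0) (hXI 1) fun n => by
    have h0 : (Tbeta β)^[n] (X 0) = X n := rfl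
    have h1 : (Tbeta β)^[n] (X 1) = X (n + 1) := (Function.iterate_add_apply _ _ _ _).symm
    rw [h0, h1, hdig, hdig]
  exact zero_ne_one (hinj h01)

lemma wordVal_replicate {β : ℝ} (hβ : 1 < β) (k n : ℕ) (s : ℝ) :
    wordVal β (List.replicate n k) s = k / (β - 1) + (s - k / (β - 1)) / β ^ n := by
  have hβ1 : β - 1 ≠ 0 := by linarith
  induction n with
  | zero => simp [wordVal]
  | succ n ih =>
    rw [List.replicate_succ, wordVal, ih, pow_succ]
    field_simp
    ring

lemma wordVal_succ_cons_replicate {β : ℝ} (hβ : 1 < β) (k n : ℕ) (s : ℝ) :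
    wordVal β ((k + 1) :: List.replicate n k) s =
      k / (β - 1) + 1 / β + (s - k / (β - 1)) / β ^ (n + 1) := by
  have hβ1 : β - 1 ≠ 0 := by linarith
  rw [wordVal, wordVal_replicate hβ, pow_succ]
  push_cast
  field_simp
  ring

lemma isBranch_succ_cons_replicate {β h : ℝ} {k n : ℕ} (hβ : 1 < β)
    (hh : k / (β - 1) + 1 / β + 1 / β ^ (n + 1) ≤ h) (hh1 : h < 1) :
    IsBranch β (k / (β - 1)) (k / (β - 1)) h (n + 1)
      (wordVal β ((k + 1) :: List.replicate n k) 0) := by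
  have hβ0 : 0 < β := by linarith
  have hβ1 : 0 < β - 1 := by linarith
  have hq : 0 ≤ (k : ℝ) / (β - 1) := by positivity
  have hqh : (k : ℝ) / (β - 1) ≤ h := by
    have : 0 ≤ 1 / β + 1 / β ^ (n + 1) := by positivity
    linarith
  have hlow : (k : ℝ) / (β - 1) ≤
      wordVal β ((k + 1) :: List.replicate n k) (k / (β - 1)) := by
    rw [wordVal_succ_cons_replicate hβ, sub_self, zero_div, add_zero]
    linarith [one_div_pos.2 hβ0]
  have hhigh : wordVal β ((k + 1) :: List.replicate n k) h ≤ h := by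
    rw [wordVal_succ_cons_replicate hβ]
    have : (h - k / (β - 1)) / β ^ (n + 1) ≤ 1 / β ^ (n + 1) := by
      gcongr
      linarith
    linarith
  have hlen : ((k + 1) :: List.replicate n k).length = n + 1 := by simp
  rw [← hlen]
  refine isBranch_wordVal hβ hq (fun s hs => ⟨hq.trans hs.1, hs.2.trans_lt hh1⟩)
    (List.cons_ne_nil _ _) (fun v hv _ => ?_) hlow hhigh
  rcases List.suffix_cons_iff.1 hv with rfl | hv
  · exact ⟨hlow, hhigh.trans_lt hh1⟩
  · obtain ⟨-, hv⟩ := List.suffix_replicate_iff.1 hv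
    rw [hv, wordVal_replicate hβ, wordVal_replicate hβ, sub_self, zero_div, add_zero]
    refine ⟨le_rfl, ?_⟩
    have := div_le_self (sub_nonneg.2 hqh) (one_le_pow₀ hβ.le (n := v.length))
    linarith

lemma le_tau_of_quadratic_pos {k : ℕ} {β : ℝ} (hk : 1 ≤ k) (hβ : 1 < β)
    (h : 0 < β ^ 2 - (k + 2) * β + 1) : k / (β - 1) ≤ tau β := by
  have hβ0 : 0 < β := by linarith
  have hk0 : (1 : ℝ) ≤ k := by exact_mod_cast hk
  set q := (k : ℝ) / (β - 1) with hq
  have hqβ : q * (β - 1) = k := div_mul_cancel₀ _ (by linarith)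
  have hq0 : 0 ≤ q := div_nonneg (by linarith) (by linarith)
  have hsum : q + 1 / β < 1 := by
    rw [hq, div_add_div _ _ (by linarith) hβ0.ne', div_lt_one (mul_pos (by linarith) hβ0)]
    nlinarith
  have hβ2 : 2 < β := by
    have : q < 1 := by linarith [one_div_pos.2 hβ0]
    nlinarith
  obtain ⟨n, hn⟩ := exists_pow_lt_of_lt_one (sub_pos.2 hsum) (inv_lt_one_of_one_lt₀ hβ)
  have hn' : 1 / β ^ (n + 1) < 1 - (q + 1 / β) := by
    refine lt_of_le_of_lt ?_ hn
    rw [inv_pow, ← one_div]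
    gcongr
    · exact hβ.le
    · omega
  have hstep : 1 / β ^ (n + 2) ≤ 1 / β ^ (n + 1) := by
    gcongr
    · exact hβ.le
    · omega
  have b₁ := isBranch_succ_cons_replicate (k := k) (n := n) hβ le_rfl (by linarith)
  have b₂ := isBranch_succ_cons_replicate (k := k) (n := n + 1)
    (h := q + 1 / β + 1 / β ^ (n + 1)) hβ (by linarith) (by linarith)
  have hpos : 0 < 1 / β + 1 / β ^ (n + 1) := by positivity
  refine le_tau (dimH_survivor_ne_zero b₁ b₂ (by linarith)
    (fun s hs => ⟨hq0.trans hs.1, hs.2.trans_lt (by linarith)⟩) ?_ hβ ?_)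
  · rw [wordVal_succ_cons_replicate hβ, wordVal_succ_cons_replicate hβ, ← hq]
    intro heq
    have h1 : (1 / β ^ (n + 1)) * (1 / β) * (1 - 1 / β) = 0 := by
      rw [pow_succ β (n + 1)] at heq
      simp only [div_eq_mul_inv, mul_inv] at heq ⊢
      linear_combination heq
    have h2 : 1 / β < 1 := (div_lt_one hβ0).2 hβ
    have h3 : 0 < 1 - 1 / β := by linarith
    exact absurd h1 (by positivity)
  · calc (3 : ℝ) ≤ 2 ^ 2 := by norm_num
      _ ≤ β ^ 2 := by gcongr
      _ ≤ β ^ (n + 1 + (n + 1 + 1)) := pow_le_pow_right₀ hβ.le (by omega)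

/-- At the larger root of `β ^ 2 - (k + 2) * β + 1` the critical value jumps. -/
lemma not_continuousWithinAt_tau {k : ℕ} {β : ℝ} (hk : 1 ≤ k) (hβ : k + 1 < β)
    (h : β ^ 2 - (k + 2) * β + 1 = 0) : ¬ ContinuousWithinAt tau (Ioi 1) β := by
  have hk0 : (1 : ℝ) ≤ k := by exact_mod_cast hk
  have hβ1 : 1 < β := by linarith
  intro hc
  have h1 : Tendsto tau (𝓝[>] β) (𝓝 (tau β)) :=
    (hc.mono (Ioi_subset_Ioi hβ1.le)).tendsto
  have h2 : Tendsto (fun b : ℝ => (k : ℝ) / (b - 1)) (𝓝[>] β) (𝓝 (k / (β - 1))) := by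
    have : ContinuousAt (fun b : ℝ => (k : ℝ) / (b - 1)) β :=
      continuousAt_const.div (continuousAt_id.sub continuousAt_const) (sub_pos.2 hβ1).ne'
    exact this.tendsto.mono_left nhdsWithin_le_nhds
  have h3 : (k : ℝ) / (β - 1) ≤ tau β := by
    refine le_of_tendsto_of_tendsto h2 h1 ?_
    filter_upwards [self_mem_nhdsWithin] with b hb
    have hb' : β < b := hb
    exact le_tau_of_quadratic_pos hk (hβ1.trans hb) (by nlinarith)
  have h4 := tau_le_of_quadratic_eq hk hβ1 h
  have h5 : (k : ℝ) / β < k / (β - 1) := div_lt_div_of_pos_left (by linarith) (by linarith)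
    (by linarith)
  linarith

lemma infinite_not_continuousWithinAt_tau :
    {β : ℝ | 1 < β ∧ ¬ ContinuousWithinAt tau (Ioi 1) β}.Infinite := by
  have hroot : ∀ k : ℕ, ∃ β : ℝ, (k : ℝ) + 1 + 1 < β ∧ β ^ 2 - (k + 1 + 2) * β + 1 = 0 := by
    intro k
    have hk : (0 : ℝ) ≤ k := k.cast_nonneg
    set r := √(((k : ℝ) + 3) ^ 2 - 4) with hr
    have hr2 : r ^ 2 = ((k : ℝ) + 3) ^ 2 - 4 := Real.sq_sqrt (by nlinarith)
    refine ⟨(k + 3 + r) / 2, ?_, by linear_combination hr2 / 4⟩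
    have : (k : ℝ) + 1 < r := Real.lt_sqrt_of_sq_lt (by nlinarith)
    linarith
  choose f hf hf' using hroot
  refine Set.infinite_of_injective_forall_mem (f := f) (fun m n hmn => ?_) fun k => ⟨?_, ?_⟩
  · have h1 := hf' m
    have h2 := hf m
    rw [hmn] at h1 h2
    have h3 : ((m : ℝ) - n) * f n = 0 := by linear_combination hf' n - h1
    have hm : (0 : ℝ) ≤ m := m.cast_nonneg
    have h4 := (mul_eq_zero.1 h3).resolve_right (by linarith)
    exact_mod_cast sub_eq_zero.1 h4
  · linarith [hf k, (k.cast_nonneg : (0 : ℝ) ≤ k)]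
  · exact not_continuousWithinAt_tau (k := k + 1) (by omega) (by exact_mod_cast hf k)
      (by exact_mod_cast hf' k)

/-- The critical value function `τ` is left continuous at every point of
`(1,∞)`, has right-hand limits at every point of `(1,∞)`, and its set of discontinuity
points is countably infinite. -/
theorem tau_left_cont_right_limits_countable_discontinuities :
    (∀ β₀ : ℝ, 1 < β₀ → Filter.Tendsto tau (𝓝[<] β₀) (𝓝 (tau β₀))) ∧
    (∀ β₀ : ℝ, 1 < β₀ → ∃ l : ℝ, Filter.Tendsto tau (𝓝[>] β₀) (𝓝 l)) ∧
    Set.Countable {β : ℝ | 1 < β ∧ ¬ ContinuousWithinAt tau (Set.Ioi 1) β} ∧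
    Set.Infinite {β : ℝ | 1 < β ∧ ¬ ContinuousWithinAt tau (Set.Ioi 1) β} := by
  exact ⟨fun _ => tendsto_tau_left, fun _ => exists_tendsto_tau_right,
    countable_not_continuousWithinAt_tau, infinite_not_continuousWithinAt_tau⟩
end
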